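/- Let δ > 0 and ε > 0 be fixed. There is a constant C(δ, ε) such that, with the notation of the context, if it is not the case that B^{1/5 − 3δ/2} ≤ X_k ≤ B^{1/5 + 3δ/2} and B^{1/5 − δ} ≤ Y_k ≤ B^{1/5 + δ} for all k = 1, 2, 3, then N₀(B) ≤ C(δ, ε) · (B^{6/11 + ε} + B^{3/5 − δ + ε}). -/

import Mathlib

/-- The set `S₀(B)` of sextuples `(x₁, x₂, x₃, y₁, y₂, y₃)` of positive integers (encoded as a
pair of functions `Fin 3 → ℤ`) such that `Xᵢ/2 < xᵢ ≤ Xᵢ` and `Yᵢ/2 < yᵢ ≤ Yᵢ`, the equation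
`a₁x₁²y₁³ + a₂x₂²y₂³ + a₃x₃²y₃³ = 0` holds, `gcd(x₁y₁, x₂y₂, x₃y₃) = 1`,
`gcd(a₁a₂a₃, x₁x₂x₃y₁y₂y₃) = 1`, and `a₁y₁, a₂y₂, a₃y₃` are all squarefree. -/
def S0 (a : Fin 3 → ℤ) (X Y : Fin 3 → ℝ) : Set ((Fin 3 → ℤ) × (Fin 3 → ℤ)) :=
  {p | (∀ i, 0 < p.1 i) ∧ (∀ i, 0 < p.2 i) ∧
    (∀ i, X i / 2 < (p.1 i : ℝ) ∧ (p.1 i : ℝ) ≤ X i) ∧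
    (∀ i, Y i / 2 < (p.2 i : ℝ) ∧ (p.2 i : ℝ) ≤ Y i) ∧
    a 0 * p.1 0 ^ 2 * p.2 0 ^ 3 + a 1 * p.1 1 ^ 2 * p.2 1 ^ 3 +
      a 2 * p.1 2 ^ 2 * p.2 2 ^ 3 = 0 ∧
    Int.gcd (p.1 0 * p.2 0) (Int.gcd (p.1 1 * p.2 1) (p.1 2 * p.2 2)) = 1 ∧
    Int.gcd (a 0 * a 1 * a 2) (p.1 0 * p.1 1 * p.1 2 * p.2 0 * p.2 1 * p.2 2) = 1 ∧
    (∀ i, Squarefree (a i * p.2 i))}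

/-- real version of fiber counting -/
theorem card_le_fib {α β : Type*} [DecidableEq β] (T : Finset α) (f : α → β) (M N : ℝ) (hM : 0 ≤ M)
    (hN : ((T.image f).card : ℝ) ≤ N)
    (h : ∀ b ∈ T.image f, ((T.filter (fun a => f a = b)).card : ℝ) ≤ M) :
    (T.card : ℝ) ≤ N * M := by
  rw [Finset.card_eq_sum_card_image f T]
  push_cast
  calc _ ≤ ∑ b ∈ T.image f, M := Finset.sum_le_sum h
    _ = (T.image f).card * M := by simp
    _ ≤ _ := by gcongr

/-- positive integers in a box -/
theorem card_pos_le (T : Finset ℤ) (X : ℝ) (hX : 0 ≤ X) (h : ∀ x ∈ T, 0 < x ∧ (x : ℝ) ≤ X) :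
    (T.card : ℝ) ≤ X := by
  have h1 : T ⊆ Finset.Ioc 0 ⌊X⌋ := by
    intro x hx
    have := h x hx
    rw [Finset.mem_Ioc]
    exact ⟨this.1, Int.le_floor.2 this.2⟩
  have h2 := Finset.card_le_card h1
  rw [Int.card_Ioc] at h2
  have h3 : (0:ℤ) ≤ ⌊X⌋ := Int.floor_nonneg.2 hX
  calc (T.card : ℝ) ≤ ((⌊X⌋ - 0).toNat : ℝ) := by exact_mod_cast h2
    _ = ((⌊X⌋ : ℤ) : ℝ) := by
      rw [sub_zero]
      have := Int.toNat_of_nonneg h3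
      exact_mod_cast this
    _ ≤ X := Int.floor_le X

/-- integers in a real interval -/
theorem card_Icc_le (T : Finset ℤ) (a b : ℝ) (hab : a ≤ b) (h : ∀ x ∈ T, a ≤ (x : ℝ) ∧ (x : ℝ) ≤ b) :
    (T.card : ℝ) ≤ b - a + 1 := by
  have h1 : T ⊆ Finset.Icc ⌈a⌉ ⌊b⌋ := by
    intro x hx
    have := h x hx
    rw [Finset.mem_Icc]
    exact ⟨Int.ceil_le.2 this.1, Int.le_floor.2 this.2⟩
  have h2 := Finset.card_le_card h1
  rw [Int.card_Icc] at h2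
  have h4 := Int.floor_le b
  have h5 := Int.le_ceil a
  have h2' : (T.card : ℝ) ≤ ((⌊b⌋ + 1 - ⌈a⌉).toNat : ℝ) := by exact_mod_cast h2
  rcases le_or_gt 0 (⌊b⌋ + 1 - ⌈a⌉) with h3 | h3
  · have : ((⌊b⌋ + 1 - ⌈a⌉).toNat : ℝ) = ((⌊b⌋ + 1 - ⌈a⌉ : ℤ) : ℝ) := by
      exact_mod_cast Int.toNat_of_nonneg h3
    rw [this] at h2'
    push_cast at h2'
    linarith
  · rw [Int.toNat_of_nonpos h3.le] at h2'
    push_cast at h2'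
    linarith

/-- integers in a box in a residue class -/
theorem card_class_le (T : Finset ℤ) (X : ℝ) (hX : 0 ≤ X) (q : ℤ) (hq : 0 < q)
    (h : ∀ x ∈ T, 0 < x ∧ (x : ℝ) ≤ X) (h2 : ∀ x ∈ T, ∀ y ∈ T, q ∣ x - y) :
    (T.card : ℝ) ≤ X / q + 1 := by
  have hq' : (0:ℝ) < q := by exact_mod_cast hq
  have hinj : Set.InjOn (fun x : ℤ => x / q) T := by
    intro x hx y hy hxy
    obtain ⟨k, hk⟩ := h2 x hx y hy
    have : x = y + q * k := by linarith
    simp only [this] at hxy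
    rw [Int.add_mul_ediv_left _ _ hq.ne'] at hxy
    have : k = 0 := by linarith
    subst this; linarith
  rw [← Finset.card_image_of_injOn hinj]
  have := card_Icc_le (T.image (fun x : ℤ => x / q)) 0 (X / q) (by positivity) (by
    intro z hz
    rw [Finset.mem_image] at hz
    obtain ⟨x, hx, rfl⟩ := hz
    obtain ⟨hx1, hx2⟩ := h x hx
    constructor
    · exact_mod_cast Int.ediv_nonneg hx1.le hq.le
    · rw [le_div_iff₀ hq']
      have := Int.ediv_mul_le x hq.ne'
      have : (((x / q) * q : ℤ) : ℝ) ≤ x := by exact_mod_cast this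
      push_cast at this
      linarith)
  linarith

theorem divisor_bound (ε : ℝ) (hε : 0 < ε) : ∃ C : ℝ, 1 ≤ C ∧ ∀ n : ℕ, n ≠ 0 →
    (n.divisors.card : ℝ) ≤ C * (n : ℝ) ^ ε := by
  obtain ⟨P, hP⟩ := exists_nat_gt ((2:ℝ) ^ (1 / ε))
  set K : ℝ := 1 + 1 / (ε * Real.log 2) with hK
  have hl2 : 0 < Real.log 2 := Real.log_pos (by norm_num)
  have hK1 : 1 ≤ K := by rw [hK]; have : 0 < 1 / (ε * Real.log 2) := by positivity
                         linarith
  refine ⟨K ^ P, one_le_pow₀ hK1, ?_⟩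
  intro n hn
  rw [Nat.card_divisors hn]
  have key : ∀ p : ℕ, p.Prime → ∀ a : ℕ, ((a : ℝ) + 1) ≤ (if p < P then K else 1) * ((p : ℝ) ^ a) ^ ε := by
    intro p hp a
    have hp2 : (2:ℝ) ≤ p := by exact_mod_cast hp.two_le
    have hp0 : (0:ℝ) < p := by linarith
    have e1 : ((p : ℝ) ^ a) ^ ε = Real.exp (a * (ε * Real.log p)) := by
      rw [← Real.rpow_natCast, ← Real.rpow_mul hp0.le, Real.rpow_def_of_pos hp0]
      ring_nf
    have hlp : Real.log 2 ≤ Real.log p := Real.log_le_log (by norm_num) hp2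
    rw [e1]
    split_ifs with h
    · have h1 : 1 + a * (ε * Real.log 2) ≤ Real.exp (a * (ε * Real.log p)) := by
        have := Real.add_one_le_exp (a * (ε * Real.log p))
        have h3 : (a:ℝ) * (ε * Real.log 2) ≤ a * (ε * Real.log p) := by gcongr
        linarith
      calc (a:ℝ) + 1 ≤ K * (1 + a * (ε * Real.log 2)) := by
            rw [hK]
            have h0 : 0 < ε * Real.log 2 := by positivity
            have : (1 + 1 / (ε * Real.log 2)) * (1 + a * (ε * Real.log 2))
              = 1 + 1 / (ε * Real.log 2) + a * (ε * Real.log 2) + a := by field_simp; ring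
            rw [this]
            have : 0 ≤ 1 / (ε * Real.log 2) := by positivity
            have : 0 ≤ a * (ε * Real.log 2) := by positivity
            linarith
        _ ≤ _ := by gcongr
    · push Not at h
      rw [one_mul]
      have h3 : Real.log 2 ≤ ε * Real.log p := by
        have : (2:ℝ) ^ (1/ε) ≤ p := by
          have : (P:ℝ) ≤ p := by exact_mod_cast h
          linarith
        have := Real.log_le_log (by positivity) this
        rw [Real.log_rpow (by norm_num)] at this
        rw [one_div, inv_mul_le_iff₀ hε] at this
        exact this
      have h4 : Real.exp (a * Real.log 2) ≤ Real.exp (a * (ε * Real.log p)) := by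
        gcongr
      refine le_trans ?_ h4
      rw [mul_comm, ← Real.rpow_def_of_pos (by norm_num), Real.rpow_natCast]
      exact_mod_cast Nat.lt_two_pow_self
  have hn' : (n:ℝ) ^ ε = ∏ p ∈ n.primeFactors, ((p:ℝ) ^ (n.factorization p)) ^ ε := by
    rw [Real.finsetProd_rpow]
    · congr 1
      conv_lhs => rw [← Nat.prod_factorization_pow_eq_self hn]
      rw [Finsupp.prod]; push_cast; rfl
    · intro i _; positivity
  rw [hn']
  push_cast
  calc ∏ p ∈ n.primeFactors, ((n.factorization p : ℝ) + 1)
      ≤ ∏ p ∈ n.primeFactors, ((if p < P then K else 1) * ((p : ℝ) ^ (n.factorization p)) ^ ε) := by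
        apply Finset.prod_le_prod
        · intro i _; positivity
        · intro p hp
          exact key p (Nat.prime_of_mem_primeFactors hp) _
    _ = (∏ p ∈ n.primeFactors, (if p < P then K else 1)) * _ := Finset.prod_mul_distrib
    _ ≤ K ^ P * _ := by
        gcongr
        rw [Finset.prod_ite]
        simp only [Finset.prod_const, one_pow, mul_one]
        apply pow_le_pow_right₀ hK1
        calc _ ≤ (Finset.range P).card := by
              apply Finset.card_le_card
              intro x hx
              simp at hx ⊢
              exact hx.2
          _ = P := by simp

/-- number of `k`-th roots of unity mod `m` -/
noncomputable def rootN (k m : ℕ) : ℕ := Nat.card {t : (ZMod m)ˣ // t ^ k = 1}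

theorem rootN_mul (k m n : ℕ) (h : m.Coprime n) : rootN k (m * n) = rootN k m * rootN k n := by
  unfold rootN
  rw [← Nat.card_prod]
  let e : (ZMod (m * n))ˣ ≃* (ZMod m)ˣ × (ZMod n)ˣ :=
    (Units.mapEquiv (ZMod.chineseRemainder h).toMulEquiv).trans MulEquiv.prodUnits
  apply Nat.card_congr
  refine (Equiv.subtypeEquiv e.toEquiv (q := fun z => z.1 ^ k = 1 ∧ z.2 ^ k = 1) ?_).trans ?_
  · intro a
    have : e.toEquiv a = e a := rfl
    rw [this]
    constructor
    · intro ha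
      have h1 : (e a) ^ k = 1 := by rw [← map_pow, ha, map_one]
      constructor
      · rw [← Prod.pow_fst, h1]; rfl
      · rw [← Prod.pow_snd, h1]; rfl
    · rintro ⟨h1, h2⟩
      apply e.injective
      rw [map_pow, map_one]
      exact Prod.ext h1 h2
  · exact Equiv.subtypeProdEquivProd (p := fun t : (ZMod m)ˣ => t ^ k = 1) (q := fun t : (ZMod n)ˣ => t ^ k = 1)

theorem rootN_prime (k p : ℕ) (hp : p.Prime) (hk : k = 2 ∨ k = 3) : rootN k (p ^ 3) ≤ 4 := by
  unfold rootN
  have : NeZero (p ^ 3) := ⟨by have := hp.pos; positivity⟩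
  classical
  by_cases h2 : p = 2
  · subst h2
    calc _ ≤ Nat.card (ZMod (2 ^ 3))ˣ := Nat.card_le_card_of_injective _ Subtype.val_injective
      _ = 4 := by
        rw [Nat.card_eq_fintype_card, ZMod.card_units_eq_totient]; rw [Nat.totient_prime_pow Nat.prime_two (by norm_num)]; norm_num
  · have := ZMod.isCyclic_units_of_prime_pow p hp h2 3
    have := IsCyclic.card_pow_eq_one_le (α := (ZMod (p ^ 3))ˣ) (n := k) (by omega)
    rw [Nat.card_eq_fintype_card, Fintype.card_subtype]
    omega

theorem rootN_bound (ε : ℝ) (hε : 0 < ε) : ∃ C : ℝ, 1 ≤ C ∧ ∀ k y : ℕ, (k = 2 ∨ k = 3) →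
    Squarefree y → (rootN k (y ^ 3) : ℝ) ≤ C * (y : ℝ) ^ ε := by
  obtain ⟨C, hC, h⟩ := divisor_bound (ε / 2) (by positivity)
  refine ⟨C ^ 2, one_le_pow₀ hC, ?_⟩
  intro k y hk hy
  have h1 : rootN k (y ^ 3) ≤ (y.divisors.card) ^ 2 := by
    induction y using Nat.recOnPosPrimePosCoprime with
    | prime_pow p n hp hn =>
      have : n = 1 := by
        rcases (Nat.squarefree_pow_iff hp.ne_one hn.ne').1 hy with ⟨_, h⟩
        exact h
      subst this
      rw [pow_one, hp.divisors, Finset.card_pair hp.ne_one.symm]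
      exact rootN_prime k p hp hk
    | zero => exact absurd hy not_squarefree_zero
    | one =>
      simp only [one_pow, Nat.divisors_one, Finset.card_singleton]
      unfold rootN
      have : Subsingleton (ZMod 1) := inferInstanceAs (Subsingleton (Fin 1))
      exact Finite.card_le_one_iff_subsingleton.2 inferInstance
    | coprime a b ha hb hab iha ihb =>
      rw [mul_pow, rootN_mul _ _ _ (Nat.Coprime.pow 3 3 hab), hab.card_divisors_mul, mul_pow]
      exact Nat.mul_le_mul (iha (hy.of_mul_left)) (ihb hy.of_mul_right)
  have h2 := h y hy.ne_zero
  have hy0 : (0:ℝ) ≤ y := by positivity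
  calc (rootN k (y ^ 3) : ℝ) ≤ (y.divisors.card : ℝ) ^ 2 := by exact_mod_cast h1
    _ ≤ (C * (y:ℝ) ^ (ε / 2)) ^ 2 := by gcongr
    _ = _ := by
      rw [mul_pow, ← Real.rpow_natCast ((y:ℝ) ^ (ε/2)), ← Real.rpow_mul hy0]
      norm_num

/-- Counting with root classes: if a function into units has constant `k`-th power on `T`. -/
theorem card_image_root {α : Type*} [DecidableEq α] (k m : ℕ) (hm : m ≠ 0) [DecidableEq (ZMod m)ˣ]
    (T : Finset α) (r : α → (ZMod m)ˣ)
    (h : ∀ a ∈ T, ∀ b ∈ T, r a ^ k = r b ^ k) : ((T.image r).card : ℝ) ≤ rootN k m := by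
  have : NeZero m := ⟨hm⟩
  rcases T.eq_empty_or_nonempty with rfl | ⟨a0, ha0⟩
  · simp
  unfold rootN
  rw [Nat.card_eq_fintype_card]
  have : (T.image r).card ≤ Fintype.card {t : (ZMod m)ˣ // t ^ k = 1} := by
    rw [Fintype.card_subtype]
    apply Finset.card_le_card_of_injOn (fun t => t * (r a0)⁻¹)
    · intro t ht
      simp only [Finset.coe_image, Set.mem_image] at ht
      obtain ⟨a, ha, rfl⟩ := ht
      simp only [Finset.coe_filter, Finset.mem_univ, true_and, Set.mem_ofPred_eq]
      rw [mul_pow, h a ha a0 ha0, inv_pow, mul_inv_cancel]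
    · intro s _ t _ hst
      exact mul_right_cancel hst
  exact_mod_cast this

section

open Polynomial

theorem newton_exp (s : ℕ) : ∀ (f : ℤ[X]) (n : ℕ → ℤ), ∃ w : ℕ → ℤ, ∀ i < s,
    f.eval (n i) = ∑ k ∈ Finset.range s, w k * ∏ l ∈ Finset.range k, (n i - n l) := by
  induction s with
  | zero => intro f n; exact ⟨0, by simp⟩
  | succ s ih =>
    intro f n
    obtain ⟨g, hg⟩ : ∃ g : ℤ[X], f = C (f.eval (n 0)) + (X - C (n 0)) * g := by
      have : (X - C (n 0)) ∣ f - C (f.eval (n 0)) := by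
        rw [Polynomial.dvd_iff_isRoot]; simp
      obtain ⟨g, hg⟩ := this
      exact ⟨g, by rw [← hg]; ring⟩
    obtain ⟨w, hw⟩ := ih g (fun i => n (i + 1))
    refine ⟨fun k => if k = 0 then f.eval (n 0) else w (k - 1), ?_⟩
    intro i hi
    rw [Finset.sum_range_succ']
    simp only [Finset.prod_range_succ', Nat.add_sub_cancel, Finset.range_zero, Finset.prod_empty]
    rcases i with _ | i
    · simp
    · have h1 := hw i (by omega)
      conv_lhs => rw [hg]
      simp only [eval_add, eval_C, eval_mul, eval_sub, eval_X]
      rw [h1, Finset.mul_sum]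
      simp only [Nat.add_eq_zero_iff, one_ne_zero, and_false, if_false, if_true, mul_one]
      rw [add_comm]
      congr 1
      apply Finset.sum_congr rfl
      intro k _
      ring

theorem det_poly_dvd (s : ℕ) (f : Fin s → ℤ[X]) (n : Fin s → ℤ) (p : ℤ)
    (hn : ∀ i j, p ∣ n i - n j) :
    p ^ (s * (s - 1) / 2) ∣ (Matrix.of (fun i j => (f j).eval (n i))).det := by
  let n' : ℕ → ℤ := fun i => if h : i < s then n ⟨i, h⟩ else 0
  choose w hw using fun j => newton_exp s (f j) n'
  have hM : (Matrix.of (fun i j => (f j).eval (n i))) =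
      (Matrix.of (fun (i k : Fin s) => ∏ l ∈ Finset.range k, (n' i - n' l))) *
      (Matrix.of (fun (k j : Fin s) => w j k)) := by
    ext i j
    rw [Matrix.mul_apply]
    simp only [Matrix.of_apply]
    have h1 := hw j i i.2
    have h2 : n' i = n i := by simp [n']
    rw [h2] at h1
    rw [h1, Finset.sum_range]
    apply Finset.sum_congr rfl
    intro k _
    rw [h2]; ring
  rw [hM, Matrix.det_mul]
  apply Dvd.dvd.mul_right
  rw [Matrix.det_of_isLowerTriangular]
  · simp only [Matrix.of_apply]
    have h1 : p ^ (s * (s - 1) / 2) = ∏ k : Fin s, p ^ (k : ℕ) := by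
      rw [Finset.prod_pow_eq_pow_sum, Fin.sum_univ_eq_sum_range (fun i => i), Finset.sum_range_id]
    rw [h1]
    apply Finset.prod_dvd_prod_of_dvd
    intro k _
    have : p ^ (k : ℕ) = ∏ l ∈ Finset.range (k : ℕ), p := by simp
    rw [this]
    apply Finset.prod_dvd_prod_of_dvd
    intro l hl
    rw [Finset.mem_range] at hl
    have hl' : l < s := by omega
    have e1 : n' k = n k := by simp [n']
    have e2 : n' l = n ⟨l, hl'⟩ := by simp [n', hl']
    rw [e1, e2]
    exact hn _ _
  · intro i k hik
    simp only [Matrix.of_apply]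
    apply Finset.prod_eq_zero (i := (i : ℕ))
    · rw [Finset.mem_range]
      exact hik
    · ring

theorem det_dvd (s : ℕ) (f : Fin s → ℤ[X]) (n : Fin s → ℤ) (p : ℤ)
    (hn : ∀ i j, p ∣ n i - n j) (M : Matrix (Fin s) (Fin s) ℤ)
    (hM : ∀ i j, p ^ (s * (s - 1) / 2) ∣ M i j - (f j).eval (n i)) :
    p ^ (s * (s - 1) / 2) ∣ M.det := by
  have h1 := det_poly_dvd s f n p hn
  set Q := p ^ (s * (s - 1) / 2)
  rw [← Ideal.mem_span_singleton, ← Ideal.Quotient.eq_zero_iff_mem] at h1 ⊢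
  rw [RingHom.map_det] at h1 ⊢
  rw [← h1]
  congr 1
  ext i j
  simp only [RingHom.mapMatrix_apply, Matrix.map_apply, Matrix.of_apply]
  rw [Ideal.Quotient.eq, Ideal.mem_span_singleton]
  exact hM i j

theorem sqrt_poly (p : ℤ) (c x0 v : ℤ) (f : ℤ[X]) (hv : p ∣ 1 - 2 * c * x0 * v) (k : ℕ) :
    ∃ g : ℤ[X], ∀ n x : ℤ, p ∣ x - x0 → c * x ^ 2 = f.eval n →
      p ^ (k + 1) ∣ x - g.eval n := by
  induction k with
  | zero => exact ⟨C x0, by intro n x h _; simpa using h⟩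
  | succ k ih =>
    obtain ⟨g, hg⟩ := ih
    refine ⟨g + C v * (f - C c * g ^ 2), ?_⟩
    intro n x hx hf
    have h1 := hg n x hx hf
    simp only [eval_add, eval_mul, eval_C, eval_sub, eval_pow]
    have e : x - (g.eval n + v * (f.eval n - c * (g.eval n) ^ 2)) =
        (x - g.eval n) * (1 - c * v * (x + g.eval n)) := by rw [← hf]; ring
    rw [e, pow_succ]
    apply mul_dvd_mul h1
    have h2 : p ∣ x - g.eval n := dvd_trans (dvd_pow_self p (Nat.succ_ne_zero k)) h1
    have e2 : 1 - c * v * (x + g.eval n) =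
        (1 - 2 * c * x0 * v) - (c * v * 2) * (x - x0) + c * v * (x - g.eval n) := by ring
    rw [e2]
    exact dvd_add (dvd_sub hv (hx.mul_left _)) (h2.mul_left _)

theorem rank_lemma {α : Type*} (s : ℕ) (T : Set α) (φ : α → Fin s → ℤ)
    (h : ∀ t : Fin s → α, (∀ i, t i ∈ T) → (Matrix.of (fun i j => φ (t i) j)).det = 0) :
    ∃ v : Fin s → ℚ, v ≠ 0 ∧ ∀ t ∈ T, ∑ j, v j * (φ t j : ℚ) = 0 := by
  let ψ : α → (Fin s → ℚ) := fun t j => (φ t j : ℚ)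
  by_cases hs : Submodule.span ℚ (ψ '' T) = ⊤
  · exfalso
    obtain ⟨b, hb1, hb2, hb3⟩ := exists_linearIndependent ℚ (ψ '' T)
    rw [hs] at hb2
    have bas : Module.Basis b ℚ (Fin s → ℚ) := Module.Basis.mk hb3 (by rw [Subtype.range_coe, hb2])
    have : Fintype b := FiniteDimensional.fintypeBasisIndex bas
    have hc : Fintype.card b = s := by
      have := Module.finrank_eq_card_basis bas
      rw [Module.finrank_fin_fun] at this
      exact this.symm
    let e : Fin s ≃ b := (Fintype.equivFinOfCardEq hc).symm
    have hli : LinearIndependent ℚ (fun i : Fin s => ((e i : b) : Fin s → ℚ)) :=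
      hb3.comp e e.injective
    have : ∀ i : Fin s, ∃ t ∈ T, ψ t = (e i : Fin s → ℚ) := fun i => hb1 (e i).2
    choose t ht1 ht2 using this
    have h0 := h t ht1
    have hli2 : LinearIndependent ℚ (Matrix.of (fun i j => (φ (t i) j : ℚ))).row := by
      convert hli using 1
      ext i j
      rw [← ht2 i]
      rfl
    have hu := Matrix.linearIndependent_rows_iff_isUnit.1 hli2
    rw [Matrix.isUnit_iff_isUnit_det] at hu
    apply hu.ne_zero
    have := congrArg (Int.castRingHom ℚ) h0
    rw [RingHom.map_det, map_zero] at this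
    rw [← this]
    congr 1
  · obtain ⟨F, hF0, hF⟩ := Submodule.exists_le_ker_of_lt_top _ (lt_top_iff_ne_top.2 hs)
    refine ⟨fun j => F (Pi.single j 1), ?_, ?_⟩
    · intro h0
      apply hF0
      apply LinearMap.pi_ext'
      intro j
      ext
      simpa using congrFun h0 j
    · intro t ht
      have h1 : F (ψ t) = 0 := hF (Submodule.subset_span ⟨t, ht, rfl⟩)
      rw [LinearMap.pi_apply_eq_sum_univ] at h1
      rw [← h1]
      apply Finset.sum_congr rfl
      intro j _
      simp only [smul_eq_mul, ψ]
      rw [mul_comm]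
      congr 2
      ext k
      by_cases hk : j = k
      · subst hk; simp
      · simp [hk, Ne.symm hk]

theorem det_le_prod (s : ℕ) (M : Matrix (Fin s) (Fin s) ℤ) (b : Fin s → ℝ) (hb : ∀ i j, |(M i j : ℝ)| ≤ b j) :
    |(M.det : ℝ)| ≤ (s.factorial : ℝ) * ∏ j, b j := by
  rw [Matrix.det_apply]
  push_cast
  calc _ ≤ ∑ σ : Equiv.Perm (Fin s), |(((Equiv.Perm.sign σ : ℤ) • ∏ i, M (σ i) i : ℤ) : ℝ)| := by
        have := Finset.abs_sum_le_sum_abs (fun σ : Equiv.Perm (Fin s) => (((Equiv.Perm.sign σ : ℤ) • ∏ i, M (σ i) i : ℤ) : ℝ)) Finset.univ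
        exact this
    _ ≤ ∑ σ : Equiv.Perm (Fin s), ∏ j, b j := by
        apply Finset.sum_le_sum
        intro σ _
        rw [smul_eq_mul]
        push_cast
        rw [abs_mul, Finset.abs_prod]
        have : |(((Equiv.Perm.sign σ : ℤˣ) : ℤ) : ℝ)| = 1 := by
          rcases Int.units_eq_one_or (Equiv.Perm.sign σ) with h | h <;> rw [h] <;> simp
        rw [this, one_mul]
        apply Finset.prod_le_prod
        · intro i _; positivity
        · intro i _; exact hb _ _
    _ = _ := by
        rw [Finset.sum_const, Finset.card_univ, Fintype.card_perm, Fintype.card_fin, nsmul_eq_mul]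

end

section

open Polynomial

theorem class_bound (r : ℕ) (hr : 1 ≤ r) (p c x0 n0 v : ℤ) (hp0 : 0 < p) (f : ℤ[X]) (hdeg : f.natDegree ≤ 3)
    (Hf : ∀ A B : ℚ[X], C (c : ℚ) * A ^ 2 = f.map (Int.castRingHom ℚ) * B ^ 2 → A = 0 ∧ B = 0)
    (N X' : ℝ) (hN : 1 ≤ N) (hX : 1 ≤ X') (hv : p ∣ 1 - 2 * c * x0 * v)
    (T : Finset (ℤ × ℤ)) (hT : ∀ t ∈ T, |(t.1 : ℝ)| ≤ N ∧ 0 < t.2 ∧ (t.2 : ℝ) ≤ X' ∧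
      c * t.2 ^ 2 = f.eval t.1 ∧ p ∣ t.2 - x0 ∧ p ∣ t.1 - n0)
    (hc : c ≠ 0)
    (hp : ((r + r).factorial : ℝ) * (N ^ (r * (r - 1)) * X' ^ r) < (p : ℝ) ^ (r * (2 * r - 1))) :
    T.card ≤ 2 * r + 1 := by
  have hs : (r + r) * (r + r - 1) / 2 = r * (2 * r - 1) := by
    have : (r + r) * (r + r - 1) = 2 * (r * (2 * r - 1)) := by
      rw [show r + r - 1 = 2 * r - 1 by omega]; ring
    rw [this, Nat.mul_div_cancel_left _ (by norm_num)]
  obtain ⟨g, hg⟩ := sqrt_poly p c x0 v f hv (r * (2 * r - 1))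
  let φ : ℤ × ℤ → Fin (r + r) → ℤ := fun t => Fin.append (fun i : Fin r => t.1 ^ (i : ℕ)) (fun i : Fin r => t.2 * t.1 ^ (i : ℕ))
  let F : Fin (r + r) → ℤ[X] := Fin.append (fun i : Fin r => X ^ (i : ℕ)) (fun i : Fin r => g * X ^ (i : ℕ))
  let b : Fin (r + r) → ℝ := Fin.append (fun i : Fin r => N ^ (i : ℕ)) (fun i : Fin r => X' * N ^ (i : ℕ))
  have hbprod : ∏ j, b j = N ^ (r * (r - 1)) * X' ^ r := by
    rw [Fin.prod_univ_add]
    simp only [b, Fin.append_left, Fin.append_right]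
    rw [Finset.prod_mul_distrib]
    simp only [Finset.prod_const, Finset.card_univ, Fintype.card_fin]
    rw [Finset.prod_pow_eq_pow_sum, Fin.sum_univ_eq_sum_range (fun i => i)]
    rw [← Finset.sum_range_id_mul_two]
    ring
  obtain ⟨w, hw0, hw⟩ := rank_lemma (r + r) (T : Set (ℤ × ℤ)) φ (by
    intro t ht
    have h1 : p ^ ((r + r) * (r + r - 1) / 2) ∣ (Matrix.of (fun i j => φ (t i) j)).det := by
      apply det_dvd (r + r) F (fun i => (t i).1) p
      · intro i j
        have h1 := (hT _ (ht i)).2.2.2.2.2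
        have h2 := (hT _ (ht j)).2.2.2.2.2
        have := dvd_sub h1 h2
        simpa using this
      · intro i j
        rw [hs]
        obtain ⟨_, _, _, h4, h5, _⟩ := hT _ (ht i)
        have h6 := hg (t i).1 (t i).2 h5 h4
        have h6 : p ^ (r * (2 * r - 1)) ∣ (t i).2 - g.eval (t i).1 := dvd_trans (pow_dvd_pow p (Nat.le_succ _)) h6
        refine Fin.addCases ?_ ?_ j
        · intro k
          simp [φ, F]
        · intro k
          simp only [φ, F, Matrix.of_apply, Fin.append_right, eval_mul, eval_pow, eval_X]
          rw [← sub_mul]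
          exact h6.mul_right _
    rw [hs] at h1
    by_contra h0
    have h2 := Int.le_of_dvd (abs_pos.2 h0) ((dvd_abs _ _).2 h1)
    have h3 : ((p : ℝ)) ^ (r * (2 * r - 1)) ≤ |((Matrix.of (fun i j => φ (t i) j)).det : ℝ)| := by
      exact_mod_cast h2
    have h4 := det_le_prod (r + r) (Matrix.of (fun i j => φ (t i) j)) b (by
      intro i j
      obtain ⟨h1, h2, h3, _, _, _⟩ := hT _ (ht i)
      have h2' : (0:ℝ) < (t i).2 := by exact_mod_cast h2
      refine Fin.addCases ?_ ?_ j
      · intro k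
        simp only [φ, b, Matrix.of_apply, Fin.append_left]
        push_cast
        rw [abs_pow]
        gcongr
      · intro k
        simp only [φ, b, Matrix.of_apply, Fin.append_right]
        push_cast
        rw [abs_mul, abs_pow, abs_of_pos h2']
        gcongr)
    rw [hbprod] at h4
    linarith)
  let A : ℚ[X] := ∑ i : Fin r, C (w (Fin.castAdd r i)) * X ^ (i : ℕ)
  let B : ℚ[X] := ∑ i : Fin r, C (w (Fin.natAdd r i)) * X ^ (i : ℕ)
  have hAd : A.natDegree ≤ r - 1 := by
    apply natDegree_sum_le_of_forall_le
    intro i _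
    exact (natDegree_C_mul_X_pow_le _ _).trans (by have := i.2; omega)
  have hBd : B.natDegree ≤ r - 1 := by
    apply natDegree_sum_le_of_forall_le
    intro i _
    exact (natDegree_C_mul_X_pow_le _ _).trans (by have := i.2; omega)
  have hAc : ∀ i : Fin r, A.coeff i = w (Fin.castAdd r i) := by
    intro i
    simp only [A, finsetSum_coeff, coeff_C_mul_X_pow]
    simp [Fin.val_inj]
  have hBc : ∀ i : Fin r, B.coeff i = w (Fin.natAdd r i) := by
    intro i
    simp only [B, finsetSum_coeff, coeff_C_mul_X_pow]
    simp [Fin.val_inj]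
  have hAB : ¬ (A = 0 ∧ B = 0) := by
    rintro ⟨h1, h2⟩
    apply hw0
    ext j
    refine Fin.addCases ?_ ?_ j
    · intro i; rw [← hAc i, h1]; simp
    · intro i; rw [← hBc i, h2]; simp
  set G : ℚ[X] := C (c : ℚ) * A ^ 2 - f.map (Int.castRingHom ℚ) * B ^ 2 with hG
  have hG0 : G ≠ 0 := by
    intro h
    exact hAB (Hf A B (sub_eq_zero.1 h))
  have hGd : G.natDegree ≤ 2 * r + 1 := by
    apply (natDegree_sub_le _ _).trans
    apply max_le
    · apply (natDegree_C_mul_le _ _).trans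
      apply (natDegree_pow_le).trans
      omega
    · apply natDegree_mul_le.trans
      have h1 : (f.map (Int.castRingHom ℚ)).natDegree ≤ 3 := natDegree_map_le.trans hdeg
      have h2 : (B ^ 2).natDegree ≤ 2 * B.natDegree := natDegree_pow_le
      omega
  have hroot : ∀ t ∈ T, G.eval (t.1 : ℚ) = 0 := by
    intro t ht
    have h1 := hw t ht
    obtain ⟨_, _, _, h4, _, _⟩ := hT t ht
    rw [Fin.sum_univ_add] at h1
    simp only [φ, Fin.append_left, Fin.append_right] at h1
    have hA : A.eval (t.1 : ℚ) = ∑ i : Fin r, w (Fin.castAdd r i) * (t.1 : ℚ) ^ (i : ℕ) := by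
      simp only [A, eval_finsetSum, eval_mul, eval_C, eval_pow, eval_X]
    have hB : B.eval (t.1 : ℚ) = ∑ i : Fin r, w (Fin.natAdd r i) * (t.1 : ℚ) ^ (i : ℕ) := by
      simp only [B, eval_finsetSum, eval_mul, eval_C, eval_pow, eval_X]
    have h5 : A.eval (t.1 : ℚ) + t.2 * B.eval (t.1 : ℚ) = 0 := by
      rw [hA, hB, Finset.mul_sum, ← h1]
      push_cast
      congr 1
      apply Finset.sum_congr rfl
      intro i _; ring
    have h6 : (f.map (Int.castRingHom ℚ)).eval (t.1 : ℚ) = c * (t.2 : ℚ) ^ 2 := by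
      have : (f.map (Int.castRingHom ℚ)).eval ((Int.castRingHom ℚ) t.1) = (Int.castRingHom ℚ) (f.eval t.1) := by
        rw [eval_map, eval₂_at_apply]
      rw [← h4] at this
      simpa using this
    simp only [hG, eval_sub, eval_mul, eval_C, eval_pow]
    rw [h6]
    have h7 : A.eval (t.1 : ℚ) = - (t.2 * B.eval (t.1 : ℚ)) := by linarith
    rw [h7]; ring
  have hinj : Set.InjOn (fun t : ℤ × ℤ => (t.1 : ℚ)) T := by
    intro t ht u hu htu
    have htu2 : (t.1 : ℚ) = (u.1 : ℚ) := htu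
    have e1 : t.1 = u.1 := by exact_mod_cast htu2
    obtain ⟨_, h2, _, h4, _, _⟩ := hT t ht
    obtain ⟨_, h2', _, h4', _, _⟩ := hT u hu
    rw [e1, ← h4'] at h4
    have := mul_left_cancel₀ hc h4
    have := (pow_left_inj₀ h2.le h2'.le (by norm_num : (2:ℕ) ≠ 0)).1 this
    exact Prod.ext e1 this
  rw [← Finset.card_image_of_injOn hinj]
  calc _ ≤ G.roots.toFinset.card := by
        apply Finset.card_le_card
        intro z hz
        rw [Finset.mem_image] at hz
        obtain ⟨t, ht, rfl⟩ := hz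
        rw [Multiset.mem_toFinset, mem_roots hG0]
        exact hroot t ht
    _ ≤ Multiset.card G.roots := Multiset.toFinset_card_le _
    _ ≤ G.natDegree := card_roots' G
    _ ≤ _ := hGd

theorem many_primes (m : ℕ) : ∀ n : ℕ, n ≠ 0 → ∃ S : Finset ℕ, S.card = m ∧ ∀ p ∈ S, p.Prime ∧ n < p ∧ p ≤ 2 ^ m * n := by
  induction m with
  | zero => intro n _; exact ⟨∅, by simp⟩
  | succ m ih =>
    intro n hn
    obtain ⟨p, hp, h1, h2⟩ := Nat.exists_prime_lt_and_le_two_mul n hn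
    obtain ⟨S, hS, h⟩ := ih p hp.ne_zero
    have hpS : p ∉ S := fun h' => (lt_irrefl _ (h p h').2.1)
    refine ⟨insert p S, by rw [Finset.card_insert_of_notMem hpS, hS], ?_⟩
    intro q hq
    rw [Finset.mem_insert] at hq
    rcases hq with rfl | hq
    · refine ⟨hp, h1, h2.trans ?_⟩
      rw [pow_succ]
      have : 1 ≤ 2 ^ m := Nat.one_le_two_pow
      nlinarith
    · obtain ⟨a1, a2, a3⟩ := h q hq
      refine ⟨a1, by omega, a3.trans ?_⟩
      rw [pow_succ, mul_assoc]
      gcongr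

end

section

open Polynomial

theorem prime_count (r : ℕ) (hr : 1 ≤ r) (p : ℕ) (hp' : p.Prime) (c : ℤ) (f : ℤ[X]) (hdeg : f.natDegree ≤ 3)
    (Hf : ∀ A B : ℚ[X], C (c : ℚ) * A ^ 2 = f.map (Int.castRingHom ℚ) * B ^ 2 → A = 0 ∧ B = 0)
    (N X' : ℝ) (hN : 1 ≤ N) (hX : 1 ≤ X')
    (T : Finset (ℤ × ℤ)) (hT : ∀ t ∈ T, |(t.1 : ℝ)| ≤ N ∧ 0 < t.2 ∧ (t.2 : ℝ) ≤ X' ∧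
      c * t.2 ^ 2 = f.eval t.1 ∧ ¬ (p : ℤ) ∣ 2 * c * t.2)
    (hc : c ≠ 0)
    (hp : ((r + r).factorial : ℝ) * (N ^ (r * (r - 1)) * X' ^ r) < (p : ℝ) ^ (r * (2 * r - 1))) :
    (T.card : ℝ) ≤ p * (2 * (2 * r + 1)) := by
  classical
  have hpz : Prime (p : ℤ) := Nat.prime_iff_prime_int.1 hp'
  have hppos : (0:ℤ) < p := by exact_mod_cast hp'.pos
  have hpR : ((p : ℤ) : ℝ) = (p : ℝ) := by norm_cast
  apply card_le_fib T (fun t => t.1 % (p : ℤ))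
  · positivity
  · have : T.image (fun t => t.1 % (p : ℤ)) ⊆ Finset.Ico 0 (p : ℤ) := by
      intro z hz
      rw [Finset.mem_image] at hz
      obtain ⟨t, _, rfl⟩ := hz
      rw [Finset.mem_Ico]
      exact ⟨Int.emod_nonneg _ hppos.ne', Int.emod_lt_of_pos _ hppos⟩
    have := Finset.card_le_card this
    rw [Int.card_Ico] at this
    simp at this
    exact_mod_cast this
  · intro n0 _
    set T1 := T.filter (fun a => a.1 % (p : ℤ) = n0) with hT1
    rcases T1.eq_empty_or_nonempty with h | ⟨t0, ht0⟩
    · rw [h]; simp; positivity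
    have hmem : ∀ t ∈ T1, t ∈ T ∧ t.1 % (p:ℤ) = n0 := by
      intro t ht; rw [hT1, Finset.mem_filter] at ht; exact ht
    have hcop : ∀ z : ℤ, ¬ (p : ℤ) ∣ z → ∃ v : ℤ, (p : ℤ) ∣ 1 - z * v := by
      intro z hz
      have := (Prime.coprime_iff_not_dvd hpz).2 hz
      obtain ⟨u, v, huv⟩ := this
      exact ⟨v, ⟨u, by linarith⟩⟩
    have h0 := hT t0 (hmem t0 ht0).1
    obtain ⟨v, hv⟩ := hcop _ h0.2.2.2.2
    have hsub : ∀ x0 v, (p : ℤ) ∣ 1 - 2 * c * x0 * v → (T1.filter (fun t => (p : ℤ) ∣ t.2 - x0)).card ≤ 2 * r + 1 := by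
      intro x0 v hv
      apply class_bound r hr p c x0 t0.1 v hppos f hdeg Hf N X' hN hX hv _ _ hc (by rw [hpR]; exact hp)
      intro t ht
      rw [Finset.mem_filter] at ht
      obtain ⟨a1, a2, a3, a4, a5⟩ := hT t (hmem t ht.1).1
      refine ⟨a1, a2, a3, a4, ht.2, ?_⟩
      apply Int.ModEq.dvd
      show t0.1 % p = t.1 % p
      rw [(hmem t ht.1).2, (hmem t0 ht0).2]
    have hcard : T1 ⊆ (T1.filter (fun t => (p : ℤ) ∣ t.2 - t0.2)) ∪ (T1.filter (fun t => (p : ℤ) ∣ t.2 - (-t0.2))) := by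
      intro t ht
      obtain ⟨a1, a2, a3, a4, a5⟩ := hT t (hmem t ht).1
      have e1 : (p : ℤ) ∣ f.eval t.1 - f.eval t0.1 := by
        have : (p : ℤ) ∣ t.1 - t0.1 := by
          apply Int.ModEq.dvd
          show t0.1 % p = t.1 % p
          rw [(hmem t ht).2, (hmem t0 ht0).2]
        exact this.trans (sub_dvd_eval_sub _ _ _)
      rw [← a4, ← h0.2.2.2.1] at e1
      have e2 : c * t.2 ^ 2 - c * t0.2 ^ 2 = c * ((t.2 - t0.2) * (t.2 - (-t0.2))) := by ring
      rw [e2] at e1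
      rcases hpz.dvd_or_dvd e1 with e3 | e3
      · exact absurd ((e3.mul_left 2).mul_right _) a5
      · rcases hpz.dvd_or_dvd e3 with e4 | e4
        · exact Finset.mem_union_left _ (Finset.mem_filter.2 ⟨ht, e4⟩)
        · exact Finset.mem_union_right _ (Finset.mem_filter.2 ⟨ht, e4⟩)
    have h1 := hsub t0.2 v hv
    have h2 := hsub (-t0.2) (-v) (by
      have : 1 - 2 * c * -t0.2 * -v = 1 - 2 * c * t0.2 * v := by ring
      rw [this]; exact hv)
    have h3 := (Finset.card_le_card hcard).trans (Finset.card_union_le _ _)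
    have h4 : T1.card ≤ 2 * (2 * r + 1) := by omega
    exact_mod_cast h4

theorem one_dim (η : ℝ) (hη : 0 < η) : ∃ K : ℝ, 1 ≤ K ∧ ∀ (W N : ℝ) (c : ℤ) (f : ℤ[X]) (T : Finset (ℤ × ℤ)),
    2 ≤ W → 1 ≤ N → c ≠ 0 → |(c : ℝ)| ≤ W → f.natDegree ≤ 3 →
    (∀ A B : ℚ[X], C (c : ℚ) * A ^ 2 = f.map (Int.castRingHom ℚ) * B ^ 2 → A = 0 ∧ B = 0) →
    (∀ t ∈ T, |(t.1 : ℝ)| ≤ N ∧ 0 < t.2 ∧ (t.2 : ℝ) ≤ W ∧ c * t.2 ^ 2 = f.eval t.1) →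
    (T.card : ℝ) ≤ K * W ^ η * N ^ ((1 : ℝ) / 2) := by
  classical
  obtain ⟨r0, hr0⟩ := exists_nat_gt (1 / η)
  set r := r0 + 1 with hrdef
  have hr : 1 ≤ r := by omega
  set d : ℕ := 2 * r - 1 with hd
  have hd1 : 1 ≤ d := by omega
  have hdη : 1 / (d : ℝ) ≤ η := by
    rw [div_le_iff₀ (by positivity)]
    have : (r0 : ℝ) ≤ d := by exact_mod_cast (by omega : r0 ≤ d)
    rw [div_lt_iff₀ hη] at hr0
    nlinarith
  set m : ℕ := 3 * d with hm
  set F : ℝ := ((r + r).factorial : ℝ) with hF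
  have hF1 : 1 ≤ F := by rw [hF]; exact_mod_cast Nat.one_le_iff_ne_zero.2 (Nat.factorial_ne_zero _)
  refine ⟨m * (2 ^ m * (2 * F) * (2 * (2 * r + 1))), ?_, ?_⟩
  · have h1 : (1:ℝ) ≤ m := by exact_mod_cast (by omega : 1 ≤ m)
    have h2 : (1:ℝ) ≤ 2 ^ m := one_le_pow₀ (by norm_num)
    have h3 : (1:ℝ) ≤ 2 * F := by linarith
    have h4 : (1:ℝ) ≤ 2 * (2 * r + 1) := by have : (0:ℝ) ≤ r := by positivity
                                            linarith
    exact one_le_mul_of_one_le_of_one_le h1 (one_le_mul_of_one_le_of_one_le (one_le_mul_of_one_le_of_one_le h2 h3) h4)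
  intro W N c f T hW hN hc hcW hdeg Hf hT
  have hW0 : (0:ℝ) < W := by linarith
  set w : ℝ := W ^ (1 / (d : ℝ)) with hw
  have hwd : w ^ d = W := by
    rw [hw, ← Real.rpow_natCast, ← Real.rpow_mul hW0.le, one_div, inv_mul_cancel₀ (by positivity), Real.rpow_one]
  have hw1 : 1 ≤ w := Real.one_le_rpow (by linarith) (by positivity)
  have hwη : w ≤ W ^ η := Real.rpow_le_rpow_of_exponent_le (by linarith) hdη
  set n2 : ℝ := N ^ ((1 : ℝ) / 2) with hn2
  have hn21 : 1 ≤ n2 := Real.one_le_rpow hN (by norm_num)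
  have hn2sq : n2 ^ 2 = N := by
    rw [hn2, ← Real.rpow_natCast, ← Real.rpow_mul (by linarith)]; norm_num
  set Q : ℝ := F * n2 * w with hQ
  have hQ1 : 1 ≤ Q := one_le_mul_of_one_le_of_one_le (one_le_mul_of_one_le_of_one_le hF1 hn21) hw1
  have hQw : w ≤ Q := by
    have : 1 ≤ F * n2 := one_le_mul_of_one_le_of_one_le hF1 hn21
    rw [hQ]; nlinarith
  have hceil : (⌈Q⌉₊ : ℝ) ≤ 2 * Q := by
    have := Nat.ceil_lt_add_one (by linarith : 0 ≤ Q)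
    linarith
  obtain ⟨S, hS, hSp⟩ := many_primes m ⌈Q⌉₊ (by have := Nat.ceil_pos.2 (by linarith : 0 < Q); omega)
  have hpQ : ∀ p ∈ S, Q < p := by
    intro p hp
    have h1 := Nat.le_ceil Q
    have h2 : (⌈Q⌉₊ : ℝ) < p := by exact_mod_cast (hSp p hp).2.1
    linarith
  have hbig : ∀ p ∈ S, F * (N ^ (r * (r - 1)) * W ^ r) < (p : ℝ) ^ (r * (2 * r - 1)) := by
    intro p hp
    have he : r * (2 * r - 1) ≠ 0 := by
      apply Nat.mul_ne_zero <;> omega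
    calc F * (N ^ (r * (r - 1)) * W ^ r) ≤ F ^ (r * d) * (n2 ^ (r * d) * w ^ (r * d)) := by
          gcongr
          · exact le_self_pow₀ hF1 he
          · rw [← hn2sq, ← pow_mul]
            apply pow_le_pow_right₀ hn21
            rw [← mul_assoc, mul_comm 2 r, mul_assoc]
            apply Nat.mul_le_mul_left
            omega
          · rw [mul_comm r d, pow_mul, hwd]
      _ = Q ^ (r * (2 * r - 1)) := by rw [hQ, mul_pow, mul_pow, mul_assoc]
      _ < _ := by
          apply pow_lt_pow_left₀ (hpQ p hp) (by linarith) he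
  have hcover : T ⊆ S.biUnion (fun p => T.filter (fun t => ¬ (p : ℤ) ∣ 2 * c * t.2)) := by
    intro t ht
    by_contra hcon
    simp only [Finset.mem_biUnion, Finset.mem_filter, not_exists, not_and, not_not] at hcon
    have hdv : ∀ p ∈ S, p ∣ (2 * c * t.2).natAbs := by
      intro p hp
      exact Int.natCast_dvd.1 (hcon p hp ht)
    obtain ⟨_, a2, a3, _⟩ := hT t ht
    have hprod : ∏ p ∈ S, p ∣ (2 * c * t.2).natAbs :=
      Finset.prod_primes_dvd _ (fun p hp => (hSp p hp).1.prime) hdv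
    have hle := Nat.le_of_dvd (Int.natAbs_pos.2 (mul_ne_zero (mul_ne_zero two_ne_zero hc) a2.ne')) hprod
    have hle2 : ((∏ p ∈ S, p : ℕ) : ℝ) ≤ W ^ 3 := by
      calc ((∏ p ∈ S, p : ℕ) : ℝ) ≤ ((2 * c * t.2).natAbs : ℝ) := by exact_mod_cast hle
        _ = 2 * |(c : ℝ)| * t.2 := by
          rw [Nat.cast_natAbs]
          push_cast
          rw [abs_mul, abs_mul, abs_of_pos (by exact_mod_cast a2 : (0:ℝ) < t.2)]
          norm_num
        _ ≤ W * W * W := by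
          have : (0:ℝ) < t.2 := by exact_mod_cast a2
          gcongr
        _ = W ^ 3 := by ring
    have hge : W ^ 3 < ((∏ p ∈ S, p : ℕ) : ℝ) := by
      push_cast
      have h1 : W ^ 3 = ∏ p ∈ S, w := by
        rw [Finset.prod_const, hS, hm, mul_comm, pow_mul, hwd]
      rw [h1]
      apply Finset.prod_lt_prod_of_nonempty
      · intro i _; linarith
      · intro p hp; linarith [hpQ p hp]
      · rw [← Finset.card_pos, hS]; omega
    linarith
  have h1 := (Finset.card_le_card hcover).trans Finset.card_biUnion_le
  have h2 : (T.card : ℝ) ≤ ∑ p ∈ S, ((T.filter (fun t => ¬ (p : ℤ) ∣ 2 * c * t.2)).card : ℝ) := by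
    exact_mod_cast h1
  have h3 : ∑ p ∈ S, ((T.filter (fun t => ¬ (p : ℤ) ∣ 2 * c * t.2)).card : ℝ) ≤
      ∑ p ∈ S, (2 ^ m * (2 * F) * (2 * (2 * r + 1))) * (w * n2) := by
    apply Finset.sum_le_sum
    intro p hp
    have hb := prime_count r hr p (hSp p hp).1 c f hdeg Hf N W hN (by linarith)
      (T.filter (fun t => ¬ (p : ℤ) ∣ 2 * c * t.2)) (by
        intro t ht
        rw [Finset.mem_filter] at ht
        obtain ⟨a1, a2, a3, a4⟩ := hT t ht.1
        exact ⟨a1, a2, a3, a4, ht.2⟩) hc (hbig p hp)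
    refine hb.trans ?_
    have hpu : (p : ℝ) ≤ 2 ^ m * (2 * Q) := by
      have : (p : ℝ) ≤ 2 ^ m * (⌈Q⌉₊ : ℝ) := by exact_mod_cast (hSp p hp).2.2
      refine this.trans ?_
      gcongr
    calc (p : ℝ) * (2 * (2 * r + 1)) ≤ (2 ^ m * (2 * Q)) * (2 * (2 * r + 1)) := by gcongr
      _ = _ := by rw [hQ]; ring
  rw [Finset.sum_const, hS, nsmul_eq_mul] at h3
  calc (T.card : ℝ) ≤ _ := h2.trans h3
    _ = m * (2 ^ m * (2 * F) * (2 * (2 * r + 1))) * w * n2 := by ring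
    _ ≤ _ := by gcongr

end

section

open Polynomial

theorem cubic_deg (α β u1 w1 u2 w2 : ℤ) :
    (C α * (C u1 * X + C w1) ^ 3 + C β * (C u2 * X + C w2) ^ 3 : ℤ[X]).natDegree ≤ 3 := by
  compute_degree

theorem cubic_nonsq (c α β u1 w1 u2 w2 : ℤ) (hc : c ≠ 0) (hα : α ≠ 0) (hβ : β ≠ 0)
    (hdet : u1 * w2 - u2 * w1 ≠ 0) (A B : ℚ[X])
    (h : C (c : ℚ) * A ^ 2 = (C α * (C u1 * X + C w1) ^ 3 + C β * (C u2 * X + C w2) ^ 3 : ℤ[X]).map (Int.castRingHom ℚ) * B ^ 2) :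
    A = 0 ∧ B = 0 := by
  have hcq : (c : ℚ) ≠ 0 := by exact_mod_cast hc
  by_cases hB : B = 0
  · subst hB
    simp at h
    exact ⟨h.resolve_left hc, rfl⟩
  exfalso
  let F : ℂ[X] := C (α : ℂ) * (C (u1 : ℂ) * X + C (w1 : ℂ)) ^ 3 + C (β : ℂ) * (C (u2 : ℂ) * X + C (w2 : ℂ)) ^ 3
  have hFd : derivative F = C 3 * (C ((α : ℂ) * u1) * (C (u1 : ℂ) * X + C (w1 : ℂ)) ^ 2 + C ((β : ℂ) * u2) * (C (u2 : ℂ) * X + C (w2 : ℂ)) ^ 2) := by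
    simp only [F, derivative_add, derivative_mul, derivative_pow, derivative_C, derivative_X]
    simp only [map_mul]
    simp
    ring
  have hα' : (α : ℂ) ≠ 0 := by exact_mod_cast hα
  have hβ' : (β : ℂ) ≠ 0 := by exact_mod_cast hβ
  have hdet' : (u1 : ℂ) * w2 - u2 * w1 ≠ 0 := by exact_mod_cast hdet
  have hFd0 : derivative F ≠ 0 := by
    intro h0
    have hz : ∀ z : ℂ, (α : ℂ) * u1 * (u1 * z + w1) ^ 2 + (β : ℂ) * u2 * (u2 * z + w2) ^ 2 = 0 := by
      intro z
      have := congrArg (eval z) h0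
      rw [hFd] at this
      simpa using this
    by_cases hu2 : (u2 : ℂ) = 0
    · have hu1 : (u1 : ℂ) ≠ 0 := by
        intro h1; apply hdet'; rw [hu2, h1]; ring
      have := hz ((1 - w1) / u1)
      rw [hu2] at this
      have e : (u1 : ℂ) * ((1 - w1) / u1) + w1 = 1 := by field_simp; ring
      rw [e] at this
      simp at this
      rcases this with h' | h'
      · exact hα h'
      · exact hu1 (by exact_mod_cast h')
    · have h1 := hz (- w2 / u2)
      have e : (u2 : ℂ) * (- w2 / u2) + w2 = 0 := by field_simp; ring
      rw [e] at h1
      have e2 : (u1 : ℂ) * (- w2 / u2) + w1 = - (u1 * w2 - u2 * w1) / u2 := by field_simp; ring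
      rw [e2] at h1
      have hne : (- ((u1 : ℂ) * w2 - u2 * w1) / u2) ^ 2 ≠ 0 := pow_ne_zero _ (div_ne_zero (neg_ne_zero.2 hdet') hu2)
      have hu1 : (u1 : ℂ) = 0 := by
        by_contra hne1
        have := mul_ne_zero (mul_ne_zero hα' hne1) hne
        apply this
        simpa using h1
      have := hz ((1 - w2) / u2)
      rw [hu1] at this
      have e : (u2 : ℂ) * ((1 - w2) / u2) + w2 = 1 := by field_simp; ring
      rw [e] at this
      simp at this
      rcases this with h' | h'
      · exact hβ h'
      · exact hu2 (by exact_mod_cast h')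
  have hdeg : F.degree ≠ 0 := by
    intro h0
    rw [eq_C_of_degree_eq_zero h0] at hFd0
    simp at hFd0
  have hF0 : F ≠ 0 := by
    intro h0; rw [h0] at hFd0; simp at hFd0
  obtain ⟨z, hz⟩ := IsAlgClosed.exists_root F hdeg
  have hmult : F.rootMultiplicity z = 1 := by
    have h1 : 0 < F.rootMultiplicity z := (rootMultiplicity_pos hF0).2 hz
    by_contra hne
    have h2 : 1 < F.rootMultiplicity z := by omega
    rw [one_lt_rootMultiplicity_iff_isRoot hF0] at h2
    have h3 := h2.2
    rw [IsRoot.def, hFd] at h3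
    have h4 : (α : ℂ) * u1 * (u1 * z + w1) ^ 2 + (β : ℂ) * u2 * (u2 * z + w2) ^ 2 = 0 := by simpa using h3
    have h5 : (α : ℂ) * (u1 * z + w1) ^ 3 + (β : ℂ) * (u2 * z + w2) ^ 3 = 0 := by
      rw [IsRoot.def] at hz; simpa [F] using hz
    have h6 : (β : ℂ) * (u2 * z + w2) ^ 2 * (u1 * w2 - u2 * w1) = 0 := by
      linear_combination (u1 : ℂ) * h5 - (u1 * z + w1) * h4
    have h7 : (u2 * z + w2 : ℂ) = 0 := by
      rcases mul_eq_zero.1 h6 with h | h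
      · rcases mul_eq_zero.1 h with h | h
        · exact absurd h hβ'
        · exact pow_eq_zero_iff (by norm_num) |>.1 h
      · exact absurd h hdet'
    rw [h7] at h5
    have h8 : (u1 * z + w1 : ℂ) = 0 := by
      have : (α : ℂ) * (u1 * z + w1) ^ 3 = 0 := by simpa using h5
      rcases mul_eq_zero.1 this with h | h
      · exact absurd h hα'
      · exact pow_eq_zero_iff (by norm_num) |>.1 h
    apply hdet'
    linear_combination (u1 : ℂ) * h7 - u2 * h8
  let ι : ℚ →+* ℂ := algebraMap ℚ ℂ
  have hmap := congrArg (Polynomial.map ι) h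
  have e1 : ((C α * (C u1 * X + C w1) ^ 3 + C β * (C u2 * X + C w2) ^ 3 : ℤ[X]).map (Int.castRingHom ℚ)).map ι = F := by
    rw [Polynomial.map_map]
    simp [F, Polynomial.map_pow]
  rw [Polynomial.map_mul, Polynomial.map_mul, e1, Polynomial.map_pow, Polynomial.map_pow, map_C] at hmap
  have hB' : B.map ι ≠ 0 := (Polynomial.map_ne_zero_iff ι.injective).2 hB
  have hc' : ι (c : ℚ) ≠ 0 := by simpa using hc
  have hr : F * (B.map ι) ^ 2 ≠ 0 := mul_ne_zero hF0 (pow_ne_zero _ hB')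
  have hl : C (ι c) * (A.map ι) ^ 2 ≠ 0 := by rw [hmap]; exact hr
  have hA' : A.map ι ≠ 0 := by
    intro h0; rw [h0] at hl; simp at hl
  have := congrArg (rootMultiplicity z) hmap
  rw [rootMultiplicity_mul hl, rootMultiplicity_mul hr, rootMultiplicity_C, hmult, pow_two, pow_two,
    rootMultiplicity_mul (mul_ne_zero hA' hA'), rootMultiplicity_mul (mul_ne_zero hB' hB')] at this
  omega

theorem short_vec (q : ℤ) (hq : 0 < q) (ρ : ℤ) (Y Z l : ℝ) (hY : 0 < Y) (hZ : 0 < Z) (hl : 0 < l)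
    (h : l ^ 2 * (Y * Z) = q) :
    ∃ e : ℤ × ℤ, e ≠ 0 ∧ q ∣ e.1 - ρ * e.2 ∧ |(e.1 : ℝ)| ≤ l * Y ∧ |(e.2 : ℝ)| ≤ l * Z := by
  have hq' : (0:ℝ) < q := by exact_mod_cast hq
  rcases lt_or_ge (l * Z) 1 with h1 | h1
  · refine ⟨(q, 0), ?_, ?_, ?_, ?_⟩
    · intro h0; rw [Prod.ext_iff] at h0; exact hq.ne' h0.1
    · simp
    · simp only
      rw [abs_of_pos hq', ← h]
      have : 0 < l * Y := by positivity
      nlinarith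
    · simp; positivity
  · have hM : 0 < ⌊l * Z⌋₊ := Nat.floor_pos.2 h1
    obtain ⟨j, k, hk0, hk, hjk⟩ := Real.exists_int_int_abs_mul_sub_le ((ρ : ℝ) / q) hM
    refine ⟨(k * ρ - j * q, k), ?_, ?_, ?_, ?_⟩
    · intro h0; rw [Prod.ext_iff] at h0; exact hk0.ne' h0.2
    · exact ⟨-j, by ring⟩
    · have e : (((k * ρ - j * q : ℤ)) : ℝ) = q * (k * (ρ / q) - j) := by
        push_cast; field_simp
      simp only
      rw [e, abs_mul, abs_of_pos hq']
      have h2 : l * Z ≤ (⌊l * Z⌋₊ : ℝ) + 1 := (Nat.lt_floor_add_one _).le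
      have h3 : |(k:ℝ) * (ρ / q) - j| ≤ 1 / (l * Z) := by
        refine hjk.trans ?_
        apply one_div_le_one_div_of_le (by positivity) h2
      calc (q:ℝ) * |(k:ℝ) * (ρ / q) - j| ≤ q * (1 / (l * Z)) := by gcongr
        _ = l * Y := by rw [← h]; field_simp
    · simp only
      have h2 : (⌊l * Z⌋₊ : ℝ) ≤ l * Z := Nat.floor_le (by positivity)
      have h3 : (k : ℝ) ≤ (⌊l * Z⌋₊ : ℝ) := by exact_mod_cast hk
      rw [abs_of_pos (by exact_mod_cast hk0)]
      linarith

theorem min_vec (q : ℤ) (hq : 0 < q) (ρ : ℤ) (Y Z l : ℝ) (hY : 0 < Y) (hZ : 0 < Z) (hl : 0 < l)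
    (h : l ^ 2 * (Y * Z) = q) :
    ∃ e : ℤ × ℤ, e ≠ 0 ∧ q ∣ e.1 - ρ * e.2 ∧ |(e.1 : ℝ)| ≤ l * Y ∧ |(e.2 : ℝ)| ≤ l * Z ∧
      ∀ v1 v2 : ℤ, q ∣ v1 - ρ * v2 → v1 * e.2 = v2 * e.1 → ∃ n : ℤ, v1 = n * e.1 ∧ v2 = n * e.2 := by
  classical
  let P : ℕ → Prop := fun m => ∃ e : ℤ × ℤ, e ≠ 0 ∧ q ∣ e.1 - ρ * e.2 ∧ |(e.1 : ℝ)| ≤ l * Y ∧ |(e.2 : ℝ)| ≤ l * Z ∧ m = e.1.natAbs + e.2.natAbs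
  have hex : ∃ m, P m := by
    obtain ⟨e, h1, h2, h3, h4⟩ := short_vec q hq ρ Y Z l hY hZ hl h
    exact ⟨_, e, h1, h2, h3, h4, rfl⟩
  obtain ⟨e, h1, h2, h3, h4, h5⟩ := Nat.find_spec hex
  refine ⟨e, h1, h2, h3, h4, ?_⟩
  have key : ∀ w1 w2 : ℤ, q ∣ w1 - ρ * w2 → w1.natAbs ≤ e.1.natAbs → w2.natAbs ≤ e.2.natAbs →
      w1.natAbs + w2.natAbs < e.1.natAbs + e.2.natAbs → w1 = 0 ∧ w2 = 0 := by
    intro w1 w2 hw a1 a2 a3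
    by_contra hne
    rw [← h5] at a3
    apply Nat.find_min hex a3
    refine ⟨(w1, w2), ?_, hw, ?_, ?_, rfl⟩
    · intro h0; rw [Prod.ext_iff] at h0; exact hne h0
    · refine le_trans ?_ h3
      have : (w1.natAbs : ℝ) ≤ e.1.natAbs := by exact_mod_cast a1
      simpa [Nat.cast_natAbs] using this
    · refine le_trans ?_ h4
      have : (w2.natAbs : ℝ) ≤ e.2.natAbs := by exact_mod_cast a2
      simpa [Nat.cast_natAbs] using this
  intro v1 v2 hv hpar
  by_cases he1 : e.1 = 0
  · have he2 : e.2 ≠ 0 := by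
      intro h0; exact h1 (Prod.ext he1 h0)
    have hv1 : v1 = 0 := by
      rw [he1, mul_zero] at hpar
      exact (mul_eq_zero.1 hpar).resolve_right he2
    have hlt : (v2 % e.2).natAbs < e.2.natAbs := by
      have := Int.emod_nonneg v2 he2
      have := Int.emod_lt_abs v2 he2
      rw [Int.abs_eq_natAbs] at this
      omega
    have := key 0 (v2 % e.2) (by
      have e' : (0:ℤ) - ρ * (v2 % e.2) = (v1 - ρ * v2) - (v2 / e.2) * (e.1 - ρ * e.2) := by
        have := Int.emod_add_mul_ediv v2 e.2
        rw [hv1, he1]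
        linear_combination (-ρ) * this
      rw [e']
      exact dvd_sub hv (h2.mul_left _)) (by simp) hlt.le (by rw [he1]; simpa using hlt)
    refine ⟨v2 / e.2, by rw [hv1, he1]; ring, ?_⟩
    have h8 := Int.emod_add_mul_ediv v2 e.2
    rw [this.2] at h8
    linarith
  · have hlt : (v1 % e.1).natAbs < e.1.natAbs := by
      have := Int.emod_nonneg v1 he1
      have := Int.emod_lt_abs v1 he1
      rw [Int.abs_eq_natAbs] at this
      omega
    set n := v1 / e.1 with hn
    have h8 := Int.emod_add_mul_ediv v1 e.1
    rw [← hn] at h8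
    have hw1 : v1 % e.1 = v1 - n * e.1 := by linarith
    have hpar2 : (v1 - n * e.1) * e.2 = (v2 - n * e.2) * e.1 := by linear_combination hpar
    rw [hw1] at hlt
    have hle : (v2 - n * e.2).natAbs ≤ e.2.natAbs := by
      have h9 := congrArg Int.natAbs hpar2
      rw [Int.natAbs_mul, Int.natAbs_mul] at h9
      have hpos : 0 < e.1.natAbs := Int.natAbs_pos.2 he1
      by_contra hcon
      push Not at hcon
      have c1 := Nat.mul_lt_mul_of_pos_right hcon hpos
      have c2 := Nat.mul_le_mul_right e.2.natAbs hlt.le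
      rw [h9, mul_comm e.1.natAbs] at c2
      omega
    have := key _ _ (by
      have e' : (v1 - n * e.1) - ρ * (v2 - n * e.2) = (v1 - ρ * v2) - n * (e.1 - ρ * e.2) := by ring
      rw [e']
      exact dvd_sub hv (h2.mul_left _)) hlt.le hle (by omega)
    exact ⟨n, by linarith [this.1], by linarith [this.2]⟩

end

section

open Polynomial

theorem card_nonzero_le (T : Finset ℤ) (M : ℝ) (hM : 0 ≤ M) (h : ∀ x ∈ T, x ≠ 0 ∧ |(x : ℝ)| ≤ M) :
    (T.card : ℝ) ≤ 2 * M := by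
  have h1 := card_pos_le (T.filter (fun x => 0 < x)) M hM (by
    intro x hx
    rw [Finset.mem_filter] at hx
    exact ⟨hx.2, (le_abs_self _).trans (h x hx.1).2⟩)
  have h2 := card_pos_le ((T.filter (fun x => ¬ 0 < x)).image (fun x => -x)) M hM (by
    intro x hx
    rw [Finset.mem_image] at hx
    obtain ⟨y, hy, rfl⟩ := hx
    rw [Finset.mem_filter] at hy
    have := (h y hy.1)
    refine ⟨by have := this.1; omega, ?_⟩
    push_cast
    exact (neg_le_abs _).trans this.2)
  rw [Finset.card_image_of_injective _ neg_injective] at h2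
  have h3 := Finset.card_filter_add_card_filter_not (s := T) (fun x => 0 < x)
  have h4 : (T.card : ℝ) = ((T.filter (fun x => 0 < x)).card : ℝ) + ((T.filter (fun x => ¬ 0 < x)).card : ℝ) := by
    exact_mod_cast h3.symm
  linarith

theorem coprime_prop {y z y' z' : ℤ} (hy : 0 < y) (hy' : 0 < y') (hz : 0 < z)
    (h1 : IsCoprime y z) (h2 : IsCoprime y' z') (h : y * z' = y' * z) : y = y' ∧ z = z' := by
  have d1 : y ∣ y' := h1.dvd_of_dvd_mul_right (Dvd.intro _ h)
  have d2 : y' ∣ y := h2.dvd_of_dvd_mul_right (Dvd.intro _ h.symm)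
  have e : y = y' := Int.dvd_antisymm hy.le hy'.le d1 d2
  subst e
  exact ⟨rfl, (mul_left_cancel₀ hy.ne' h).symm⟩

theorem lattice_cubic (η : ℝ) (hη : 0 < η) : ∃ K : ℝ, 1 ≤ K ∧ ∀ (W Y Z : ℝ) (c α β q ρ : ℤ) (T : Finset (ℤ × ℤ × ℤ)),
    2 ≤ W → 0 < Y → 0 < Z → c ≠ 0 → α ≠ 0 → β ≠ 0 → 0 < q → |(c : ℝ)| ≤ W →
    (∀ t ∈ T, 0 < t.1 ∧ (t.1 : ℝ) ≤ Y ∧ 0 < t.2.1 ∧ (t.2.1 : ℝ) ≤ Z ∧ 0 < t.2.2 ∧ (t.2.2 : ℝ) ≤ W ∧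
      IsCoprime t.1 t.2.1 ∧ c * t.2.2 ^ 2 = α * t.1 ^ 3 + β * t.2.1 ^ 3 ∧ q ∣ t.1 - ρ * t.2.1) →
    (T.card : ℝ) ≤ K * W ^ η * (1 + (Y * Z / q) ^ ((3 : ℝ) / 4)) := by
  classical
  obtain ⟨K, hK, hone⟩ := one_dim η hη
  refine ⟨8 * K, by linarith, ?_⟩
  intro W Y Z c α β q ρ T hW hY hZ hc hα hβ hq hcW hT
  have hq' : (0:ℝ) < q := by exact_mod_cast hq
  set R := Y * Z / q with hR
  have hR0 : 0 < R := by positivity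
  set l0 : ℝ := R ^ (-(1:ℝ) / 2) with hl0
  have hl00 : 0 < l0 := Real.rpow_pos_of_pos hR0 _
  have hl0R : l0 ^ 2 * R = 1 := by
    rw [hl0, ← Real.rpow_natCast, ← Real.rpow_mul hR0.le]
    norm_num
    rw [Real.rpow_neg_one, inv_mul_cancel₀ hR0.ne']
  obtain ⟨e, he0, hel, he1, he2, hpar⟩ := min_vec q hq ρ Y Z l0 hY hZ hl00 (by
    have : Y * Z = R * q := by rw [hR]; field_simp
    rw [this, ← mul_assoc, hl0R, one_mul])
  set l : ℝ := max (|(e.1 : ℝ)| / Y) (|(e.2 : ℝ)| / Z) with hl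
  have hll0 : l ≤ l0 := max_le ((div_le_iff₀ hY).2 he1) ((div_le_iff₀ hZ).2 he2)
  have hl1 : |(e.1 : ℝ)| ≤ l * Y := (div_le_iff₀ hY).1 (le_max_left _ _)
  have hl2 : |(e.2 : ℝ)| ≤ l * Z := (div_le_iff₀ hZ).1 (le_max_right _ _)
  have hlpos : 0 < l := by
    by_contra hcon
    push Not at hcon
    apply he0
    have h1 : |(e.1 : ℝ)| ≤ 0 := hl1.trans (mul_nonpos_of_nonpos_of_nonneg hcon hY.le)
    have h2 : |(e.2 : ℝ)| ≤ 0 := hl2.trans (mul_nonpos_of_nonpos_of_nonneg hcon hZ.le)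
    have h1 := abs_eq_zero.1 (le_antisymm h1 (abs_nonneg _))
    have h2 := abs_eq_zero.1 (le_antisymm h2 (abs_nonneg _))
    exact Prod.ext (by exact_mod_cast h1) (by exact_mod_cast h2)
  have xdet : ∀ t ∈ T, ∀ u ∈ T, t.1 = u.1 → t.2.1 = u.2.1 → t = u := by
    intro t ht u hu a b
    obtain ⟨_, _, _, _, a5, _, _, a8, _⟩ := hT t ht
    obtain ⟨_, _, _, _, b5, _, _, b8, _⟩ := hT u hu
    rw [a, b, ← b8] at a8
    have := mul_left_cancel₀ hc a8
    have := (pow_left_inj₀ a5.le b5.le (by norm_num : (2:ℕ) ≠ 0)).1 this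
    exact Prod.ext a (Prod.ext b this)
  let D : ℤ × ℤ × ℤ → ℤ := fun t => t.1 * e.2 - t.2.1 * e.1
  have hqD : ∀ t ∈ T, q ∣ D t := by
    intro t ht
    obtain ⟨_, _, _, _, _, _, _, _, a9⟩ := hT t ht
    have : D t = (t.1 - ρ * t.2.1) * e.2 - (e.1 - ρ * e.2) * t.2.1 := by simp only [D]; ring
    rw [this]
    exact dvd_sub (a9.mul_right _) (hel.mul_right _)
  have hDb : ∀ t ∈ T, |((D t : ℤ) : ℝ)| ≤ 2 * R * l * q := by
    intro t ht
    obtain ⟨a1, a2, a3, a4, _⟩ := hT t ht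
    have a1' : (0:ℝ) < t.1 := by exact_mod_cast a1
    have a3' : (0:ℝ) < t.2.1 := by exact_mod_cast a3
    have : ((D t : ℤ) : ℝ) = t.1 * e.2 - t.2.1 * e.1 := by simp [D]
    rw [this]
    calc _ ≤ |(t.1 : ℝ) * e.2| + |(t.2.1 : ℝ) * e.1| := abs_sub _ _
      _ = t.1 * |(e.2 : ℝ)| + t.2.1 * |(e.1 : ℝ)| := by rw [abs_mul, abs_mul, abs_of_pos a1', abs_of_pos a3']
      _ ≤ Y * (l * Z) + Z * (l * Y) := by gcongr
      _ = _ := by rw [hR]; field_simp; ring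
  -- zero part
  set T0 := T.filter (fun t => D t = 0) with hT0
  set T1 := T.filter (fun t => ¬ D t = 0) with hT1
  have hcard : (T.card : ℝ) = T0.card + T1.card := by
    exact_mod_cast (Finset.card_filter_add_card_filter_not (s := T) (fun t => D t = 0)).symm
  have h0 : (T0.card : ℝ) ≤ 1 := by
    have : T0.card ≤ 1 := by
      rw [Finset.card_le_one]
      intro t ht u hu
      rw [hT0, Finset.mem_filter] at ht hu
      obtain ⟨a1, _, a3, _, _, _, a7, _⟩ := hT t ht.1
      obtain ⟨b1, _, b3, _, _, _, b7, _⟩ := hT u hu.1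
      have hpp : t.1 * u.2.1 = u.1 * t.2.1 := by
        have e1 : t.1 * e.2 = t.2.1 * e.1 := by have := ht.2; simp only [D] at this; linarith
        have e2 : u.1 * e.2 = u.2.1 * e.1 := by have := hu.2; simp only [D] at this; linarith
        by_cases hz : e.2 = 0
        · exfalso
          rw [hz, mul_zero] at e1
          have := (mul_eq_zero.1 e1.symm).resolve_left a3.ne'
          exact he0 (Prod.ext this hz)
        · apply mul_left_cancel₀ hz
          linear_combination u.2.1 * e1 - t.2.1 * e2
      obtain ⟨c1, c2⟩ := coprime_prop a1 b1 a3 a7 b7 hpp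
      exact xdet t ht.1 u hu.1 c1 c2
    exact_mod_cast this
  set N : ℝ := max 1 (1 / l) with hN
  have hN1 : 1 ≤ N := le_max_left _ _
  have h1 : (T1.card : ℝ) ≤ (2 * (2 * R * l)) * (K * W ^ η * N ^ ((1:ℝ)/2)) := by
    apply card_le_fib T1 (fun t => D t / q)
    · positivity
    · apply card_nonzero_le
      · positivity
      · intro k hk
        rw [Finset.mem_image] at hk
        obtain ⟨t, ht, rfl⟩ := hk
        rw [hT1, Finset.mem_filter] at ht
        obtain ⟨k, hk⟩ := hqD t ht.1
        rw [hk, Int.mul_ediv_cancel_left _ hq.ne']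
        constructor
        · intro h0; rw [h0, mul_zero] at hk; exact ht.2 hk
        · have := hDb t ht.1
          rw [hk] at this
          push_cast at this
          rw [abs_mul, abs_of_pos hq', mul_comm] at this
          exact le_of_mul_le_mul_right this hq'
    · intro k _
      set T2 := T1.filter (fun t => D t / q = k) with hT2
      rcases T2.eq_empty_or_nonempty with hemp | ⟨t0, ht0⟩
      · rw [hemp]; simp; positivity
      have hmem : ∀ t ∈ T2, t ∈ T ∧ D t ≠ 0 ∧ D t = q * k := by
        intro t ht
        rw [hT2, Finset.mem_filter, hT1, Finset.mem_filter] at ht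
        refine ⟨ht.1.1, ht.1.2, ?_⟩
        rw [← ht.2, Int.mul_ediv_cancel' (hqD t ht.1.1)]
      obtain ⟨m0, m1, m2⟩ := hmem t0 ht0
      have hn : ∀ t ∈ T2, ∃ n : ℤ, t.1 - t0.1 = n * e.1 ∧ t.2.1 - t0.2.1 = n * e.2 := by
        intro t ht
        obtain ⟨n0, n1, n2⟩ := hmem t ht
        apply hpar
        · have := dvd_sub (hT t n0).2.2.2.2.2.2.2.2 (hT t0 m0).2.2.2.2.2.2.2.2
          have e' : t.1 - t0.1 - ρ * (t.2.1 - t0.2.1) = t.1 - ρ * t.2.1 - (t0.1 - ρ * t0.2.1) := by ring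
          rw [e']; exact this
        · have : D t = D t0 := by rw [n2, m2]
          simp only [D] at this
          linarith
      choose! nn hnn using hn
      have hinj : Set.InjOn (fun t : ℤ × ℤ × ℤ => (nn t, t.2.2)) T2 := by
        intro t ht u hu htu
        have e1 : nn t = nn u := (Prod.ext_iff.1 htu).1
        have a := hnn t ht
        have b := hnn u hu
        apply xdet t (hmem t ht).1 u (hmem u hu).1
        · have := a.1; rw [e1, ← b.1] at this; linarith
        · have := a.2; rw [e1, ← b.2] at this; linarith
      rw [← Finset.card_image_of_injOn hinj]
      apply hone W N c (C α * (C e.1 * X + C t0.1) ^ 3 + C β * (C e.2 * X + C t0.2.1) ^ 3) _ hW hN1 hc hcW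
        (cubic_deg _ _ _ _ _ _)
      · intro A B hAB
        apply cubic_nonsq c α β e.1 t0.1 e.2 t0.2.1 hc hα hβ _ A B hAB
        intro h0
        apply m1
        simp only [D]
        linarith
      · intro p hp
        rw [Finset.mem_image] at hp
        obtain ⟨t, ht, rfl⟩ := hp
        obtain ⟨a1, a2, a3, a4, a5, a6, a7, a8, a9⟩ := hT t (hmem t ht).1
        obtain ⟨b1, b2, b3, b4, _⟩ := hT t0 m0
        obtain ⟨c1, c2⟩ := hnn t ht
        refine ⟨?_, a5, a6, ?_⟩
        · have a1' : (0:ℝ) < t.1 := by exact_mod_cast a1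
          have a3' : (0:ℝ) < t.2.1 := by exact_mod_cast a3
          have b1' : (0:ℝ) < t0.1 := by exact_mod_cast b1
          have b3' : (0:ℝ) < t0.2.1 := by exact_mod_cast b3
          refine le_trans ?_ (le_max_right _ _)
          rw [le_div_iff₀ hlpos]
          have d1 : |((nn t : ℤ) : ℝ)| * |(e.1 : ℝ)| ≤ Y := by
            rw [← abs_mul]
            have : ((nn t : ℤ) : ℝ) * e.1 = t.1 - t0.1 := by exact_mod_cast c1.symm
            rw [this, abs_le]
            constructor <;> linarith
          have d2 : |((nn t : ℤ) : ℝ)| * |(e.2 : ℝ)| ≤ Z := by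
            rw [← abs_mul]
            have : ((nn t : ℤ) : ℝ) * e.2 = t.2.1 - t0.2.1 := by exact_mod_cast c2.symm
            rw [this, abs_le]
            constructor <;> linarith
          rcases max_cases (|(e.1 : ℝ)| / Y) (|(e.2 : ℝ)| / Z) with hm | hm
          · rw [hl, hm.1, ← mul_div_assoc, div_le_one hY]; exact d1
          · rw [hl, hm.1, ← mul_div_assoc, div_le_one hZ]; exact d2
        · simp only [eval_add, eval_mul, eval_C, eval_pow, eval_X]
          rw [a8]
          have e1 : e.1 * nn t + t0.1 = t.1 := by linarith
          have e2 : e.2 * nn t + t0.2.1 = t.2.1 := by linarith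
          rw [e1, e2]
  -- final numerics
  set S : ℝ := R ^ ((1:ℝ)/4) with hS
  have hS0 : 0 < S := Real.rpow_pos_of_pos hR0 _
  have hS4 : S ^ 4 = R := by rw [hS, ← Real.rpow_natCast, ← Real.rpow_mul hR0.le]; norm_num
  have hS3 : S ^ 3 = R ^ ((3:ℝ)/4) := by rw [hS, ← Real.rpow_natCast, ← Real.rpow_mul hR0.le]; norm_num
  have hl0S : l0 * S ^ 2 = 1 := by
    have : (l0 * S ^ 2) ^ 2 = 1 := by rw [mul_pow, ← pow_mul, hS4]; exact hl0R
    have h2 : 0 < l0 * S ^ 2 := by positivity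
    nlinarith
  have hRl : R * l ≤ S ^ 2 := by
    calc R * l ≤ R * l0 := by gcongr
      _ = S ^ 2 * (l0 * S ^ 2) := by rw [← hS4]; ring
      _ = S ^ 2 := by rw [hl0S, mul_one]
  have hNl : R * l * N ^ ((1:ℝ)/2) ≤ S ^ 2 + S ^ 3 := by
    rw [← Real.sqrt_eq_rpow]
    have hsq : Real.sqrt N ≤ 1 + Real.sqrt (1 / l) := by
      rcases max_cases 1 (1 / l) with hm | hm
      · rw [hN, hm.1, Real.sqrt_one]; linarith [Real.sqrt_nonneg (1 / l)]
      · rw [hN, hm.1]; linarith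
    have h5 : R * l * Real.sqrt (1 / l) ≤ S ^ 3 := by
      rw [show (S ^ 3) = Real.sqrt (S ^ 6) by rw [show S ^ 6 = (S ^ 3) ^ 2 by ring, Real.sqrt_sq (by positivity)]]
      apply Real.le_sqrt_of_sq_le
      rw [mul_pow, Real.sq_sqrt (by positivity)]
      have : (R * l) ^ 2 * (1 / l) = R * (R * l) := by field_simp
      rw [this, show S ^ 6 = S ^ 4 * S ^ 2 by ring, hS4]
      gcongr
    calc R * l * Real.sqrt N ≤ R * l * (1 + Real.sqrt (1 / l)) := by gcongr
      _ = R * l + R * l * Real.sqrt (1 / l) := by ring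
      _ ≤ _ := by linarith
  have hWη : 1 ≤ W ^ η := Real.one_le_rpow (by linarith) hη.le
  have hKW : 1 ≤ K * W ^ η := one_le_mul_of_one_le_of_one_le hK hWη
  have hS23 : S ^ 2 ≤ 1 + S ^ 3 := by
    rcases le_total S 1 with h | h
    · have : S ^ 2 ≤ 1 := pow_le_one₀ hS0.le h
      have : 0 < S ^ 3 := by positivity
      linarith
    · have : S ^ 2 ≤ S ^ 3 := pow_le_pow_right₀ h (by norm_num)
      linarith
  rw [← hS3]
  calc (T.card : ℝ) ≤ 1 + (2 * (2 * R * l)) * (K * W ^ η * N ^ ((1:ℝ)/2)) := by linarith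
    _ = 1 + 4 * (K * W ^ η) * (R * l * N ^ ((1:ℝ)/2)) := by ring
    _ ≤ K * W ^ η + 4 * (K * W ^ η) * (S ^ 2 + S ^ 3) := by gcongr
    _ ≤ K * W ^ η + 4 * (K * W ^ η) * ((1 + S ^ 3) + S ^ 3) := by gcongr
    _ = K * W ^ η * (5 + 8 * S ^ 3) := by ring
    _ ≤ K * W ^ η * (8 + 8 * S ^ 3) := by gcongr; norm_num
    _ = _ := by ring

end

/-- root classes -/
theorem root_classes {α : Type*} (k q : ℕ) (hq : q ≠ 0) (T : Finset α) (u v : α → ℤ)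
    (hu : ∀ a ∈ T, IsCoprime (u a) (q : ℤ)) (hv : ∀ a ∈ T, IsCoprime (v a) (q : ℤ))
    (hk : ∀ a ∈ T, ∀ b ∈ T, (q : ℤ) ∣ u a ^ k * v b ^ k - u b ^ k * v a ^ k)
    (M : ℝ) (hM0 : 0 ≤ M)
    (hM : ∀ T' ⊆ T, ∀ ρ : ℤ, (∀ a ∈ T', (q : ℤ) ∣ u a - ρ * v a) → (T'.card : ℝ) ≤ M) :
    (T.card : ℝ) ≤ rootN k q * M := by
  classical
  have : NeZero q := ⟨hq⟩
  have hun : ∀ z : ℤ, IsCoprime z (q : ℤ) → IsUnit ((z : ℤ) : ZMod q) := by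
    intro z hz
    obtain ⟨s, t, hst⟩ := hz
    apply IsUnit.of_mul_eq_one (s : ZMod q)
    have := congrArg (fun w : ℤ => (w : ZMod q)) hst
    push_cast at this
    rw [ZMod.natCast_self, mul_zero, add_zero, mul_comm] at this
    exact this
  let r : α → (ZMod q)ˣ := fun a => if h : a ∈ T then (hun _ (hu a h)).unit / (hun _ (hv a h)).unit else 1
  have hr : ∀ a (h : a ∈ T), r a = (hun _ (hu a h)).unit / (hun _ (hv a h)).unit := by
    intro a h
    simp only [r, dif_pos h]
  apply card_le_fib T r M _ hM0
  · apply card_image_root k q hq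
    intro a ha b hb
    rw [hr a ha, hr b hb, div_pow, div_pow, div_eq_div_iff_mul_eq_mul]
    apply Units.ext
    push_cast
    simp only [IsUnit.unit_spec]
    have := (ZMod.intCast_zmod_eq_zero_iff_dvd _ q).2 (hk a ha b hb)
    push_cast at this
    exact sub_eq_zero.1 this
  · intro b hb
    apply hM _ (Finset.filter_subset _ _) ((b : ZMod q).cast : ℤ)
    intro a ha
    rw [Finset.mem_filter] at ha
    rw [← ZMod.intCast_zmod_eq_zero_iff_dvd]
    push_cast
    rw [← ha.2, hr a ha.1]
    rw [sub_eq_zero]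
    have h3 := congrArg Units.val (div_mul_cancel (hun _ (hu a ha.1)).unit (hun _ (hv a ha.1)).unit)
    rw [Units.val_mul, IsUnit.unit_spec, IsUnit.unit_spec] at h3
    exact h3.symm

structure Good (a : Fin 3 → ℤ) (X Y : Fin 3 → ℝ) (B : ℝ) (T : Finset ((Fin 3 → ℤ) × (Fin 3 → ℤ))) : Prop where
  hB : 2 ≤ B
  a0 : ∀ i, a i ≠ 0
  X1 : ∀ i, 1 ≤ X i
  Y1 : ∀ i, 1 ≤ Y i
  hXY : ∀ i, |(a i : ℝ)| * (X i ^ 2 * Y i ^ 3) ≤ 32 * B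
  xpos : ∀ p ∈ T, ∀ i, 0 < p.1 i
  ypos : ∀ p ∈ T, ∀ i, 0 < p.2 i
  xle : ∀ p ∈ T, ∀ i, (p.1 i : ℝ) ≤ X i
  yle : ∀ p ∈ T, ∀ i, (p.2 i : ℝ) ≤ Y i
  xgt : ∀ p ∈ T, ∀ i, X i / 2 < (p.1 i : ℝ)
  ygt : ∀ p ∈ T, ∀ i, Y i / 2 < (p.2 i : ℝ)
  eq : ∀ p ∈ T, ∀ i j k, i ≠ j → i ≠ k → j ≠ k →
    a i * p.1 i ^ 2 * p.2 i ^ 3 + a j * p.1 j ^ 2 * p.2 j ^ 3 + a k * p.1 k ^ 2 * p.2 k ^ 3 = 0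
  cop : ∀ p ∈ T, ∀ i j, i ≠ j → IsCoprime (p.1 i * p.2 i) (p.1 j * p.2 j)
  copa : ∀ p ∈ T, ∀ i j, IsCoprime (a i) (p.1 j * p.2 j)
  sqf : ∀ p ∈ T, ∀ i, Squarefree (p.2 i)

theorem fin3_ext {β : Type*} {f g : Fin 3 → β} (i j k : Fin 3) (hij : i ≠ j) (hik : i ≠ k) (hjk : j ≠ k)
    (h1 : f i = g i) (h2 : f j = g j) (h3 : f k = g k) : f = g := by
  funext l
  have : l = i ∨ l = j ∨ l = k := by
    clear h1 h2 h3; revert hij hik hjk; revert i j k l; decide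
  rcases this with rfl | rfl | rfl <;> assumption

section
variable {a : Fin 3 → ℤ} {X Y : Fin 3 → ℝ} {B : ℝ} {T : Finset ((Fin 3 → ℤ) × (Fin 3 → ℤ))}

theorem Good.mono (h : Good a X Y B T) {T' : Finset ((Fin 3 → ℤ) × (Fin 3 → ℤ))} (hs : T' ⊆ T) :
    Good a X Y B T' where
  hB := h.hB
  a0 := h.a0
  X1 := h.X1
  Y1 := h.Y1
  hXY := h.hXY
  xpos p hp := h.xpos p (hs hp)
  ypos p hp := h.ypos p (hs hp)
  xle p hp := h.xle p (hs hp)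
  yle p hp := h.yle p (hs hp)
  xgt p hp := h.xgt p (hs hp)
  ygt p hp := h.ygt p (hs hp)
  eq p hp := h.eq p (hs hp)
  cop p hp := h.cop p (hs hp)
  copa p hp := h.copa p (hs hp)
  sqf p hp := h.sqf p (hs hp)

theorem Good.a1 (h : Good a X Y B T) (i) : 1 ≤ |(a i : ℝ)| := by
  have := Int.one_le_abs (h.a0 i)
  exact_mod_cast this

theorem Good.aY (h : Good a X Y B T) (i) : |(a i : ℝ)| * Y i ^ 3 ≤ 32 * B := by
  refine le_trans ?_ (h.hXY i)
  have h1 := h.X1 i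
  have h2 := h.Y1 i
  have : 1 ≤ X i ^ 2 := one_le_pow₀ h1
  have h3 : Y i ^ 3 ≤ X i ^ 2 * Y i ^ 3 := le_mul_of_one_le_left (by positivity) this
  gcongr

theorem Good.XY (h : Good a X Y B T) (i) : X i ^ 2 * Y i ^ 3 ≤ 32 * B := by
  refine le_trans ?_ (h.hXY i)
  have h1 := h.X1 i
  have h2 := h.Y1 i
  exact le_mul_of_one_le_left (by positivity) (h.a1 i)

theorem Good.Yb (h : Good a X Y B T) (i) : Y i ≤ 32 * B := by
  refine le_trans ?_ (h.XY i)
  have h1 := h.X1 i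
  have h2 := h.Y1 i
  calc Y i = 1 * Y i ^ 1 := by ring
    _ ≤ X i ^ 2 * Y i ^ 3 := by
      gcongr
      · exact one_le_pow₀ h1
      · norm_num

theorem Good.Xb (h : Good a X Y B T) (i) : X i ≤ 32 * B := by
  refine le_trans ?_ (h.XY i)
  have h1 := h.X1 i
  have h2 := h.Y1 i
  calc X i = X i ^ 1 * 1 := by ring
    _ ≤ X i ^ 2 * Y i ^ 3 := by
      gcongr
      · norm_num
      · exact one_le_pow₀ h2

/-- coprimality of components -/
theorem Good.cxx (h : Good a X Y B T) {p} (hp : p ∈ T) {i j} (hij : i ≠ j) : IsCoprime (p.1 i) (p.1 j) :=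
  (h.cop p hp i j hij).of_mul_left_left.of_mul_right_left
theorem Good.cxy (h : Good a X Y B T) {p} (hp : p ∈ T) {i j} (hij : i ≠ j) : IsCoprime (p.1 i) (p.2 j) :=
  (h.cop p hp i j hij).of_mul_left_left.of_mul_right_right
theorem Good.cyy (h : Good a X Y B T) {p} (hp : p ∈ T) {i j} (hij : i ≠ j) : IsCoprime (p.2 i) (p.2 j) :=
  (h.cop p hp i j hij).of_mul_left_right.of_mul_right_right
theorem Good.cay (h : Good a X Y B T) {p} (hp : p ∈ T) (i j) : IsCoprime (a i) (p.2 j) :=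
  (h.copa p hp i j).of_mul_right_right
end

theorem A_bound (ε : ℝ) (hε : 0 < ε) : ∃ C : ℝ, 1 ≤ C ∧ ∀ (a : Fin 3 → ℤ) (X Y : Fin 3 → ℝ) (B : ℝ)
    (T : Finset ((Fin 3 → ℤ) × (Fin 3 → ℤ))), Good a X Y B T → ∀ i j k, i ≠ j → i ≠ k → j ≠ k →
    (T.card : ℝ) ≤ C * B ^ ε * (X j * X k * Y i * (1 + (Y j * Y k / Y i ^ 3) ^ ((3:ℝ)/4))) := by
  obtain ⟨C0, hC0, hroot⟩ := rootN_bound (ε / 2) (by positivity)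
  obtain ⟨K, hK, hlat⟩ := lattice_cubic (ε / 2) (by positivity)
  refine ⟨C0 * K * 8 * 32 ^ ε, ?_, ?_⟩
  · have : (1:ℝ) ≤ 32 ^ ε := Real.one_le_rpow (by norm_num) hε.le
    have h1 : 1 ≤ C0 * K := one_le_mul_of_one_le_of_one_le hC0 hK
    have h2 : 1 ≤ C0 * K * 8 := by linarith
    exact one_le_mul_of_one_le_of_one_le h2 this
  intro a X Y B T hT i j k hij hik hjk
  classical
  have hB := hT.hB
  have X1j := hT.X1 j
  have X1k := hT.X1 k
  have Y1i := hT.Y1 i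
  have Y1j := hT.Y1 j
  have Y1k := hT.Y1 k
  set W := 32 * B with hW
  have hW2 : 2 ≤ W := by linarith
  set R := Y j * Y k / Y i ^ 3 with hR
  have hR0 : 0 < R := by positivity
  have hfib : (T.card : ℝ) ≤ (X j * (X k * Y i)) * ((C0 * W ^ (ε/2)) * (K * W ^ (ε/2) * (8 * (1 + R ^ ((3:ℝ)/4))))) := by
    apply card_le_fib T (fun p => (p.1 j, p.1 k, p.2 i))
    · positivity
    · have hsub : T.image (fun p => (p.1 j, p.1 k, p.2 i)) ⊆
          (T.image (fun p => p.1 j)) ×ˢ (T.image (fun p => p.1 k)) ×ˢ (T.image (fun p => p.2 i)) := by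
        intro b hb
        rw [Finset.mem_image] at hb
        obtain ⟨p, hp, rfl⟩ := hb
        simp only [Finset.mem_product, Finset.mem_image]
        exact ⟨⟨p, hp, rfl⟩, ⟨p, hp, rfl⟩, ⟨p, hp, rfl⟩⟩
      have h1 := Finset.card_le_card hsub
      rw [Finset.card_product, Finset.card_product] at h1
      have h2 : ((T.image (fun p => p.1 j)).card : ℝ) ≤ X j := by
        apply card_pos_le _ _ (by linarith)
        intro x hx
        obtain ⟨p, hp, rfl⟩ := Finset.mem_image.1 hx
        exact ⟨hT.xpos p hp j, hT.xle p hp j⟩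
      have h3 : ((T.image (fun p => p.1 k)).card : ℝ) ≤ X k := by
        apply card_pos_le _ _ (by linarith)
        intro x hx
        obtain ⟨p, hp, rfl⟩ := Finset.mem_image.1 hx
        exact ⟨hT.xpos p hp k, hT.xle p hp k⟩
      have h4 : ((T.image (fun p => p.2 i)).card : ℝ) ≤ Y i := by
        apply card_pos_le _ _ (by linarith)
        intro x hx
        obtain ⟨p, hp, rfl⟩ := Finset.mem_image.1 hx
        exact ⟨hT.ypos p hp i, hT.yle p hp i⟩
      calc _ ≤ ((T.image (fun p => p.1 j)).card : ℝ) * ((T.image (fun p => p.1 k)).card * (T.image (fun p => p.2 i)).card) := by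
            exact_mod_cast h1
        _ ≤ _ := by gcongr
    · intro b hb
      obtain ⟨p0, hp0, rfl⟩ := Finset.mem_image.1 hb
      set F := T.filter (fun p => (p.1 j, p.1 k, p.2 i) = (p0.1 j, p0.1 k, p0.2 i)) with hF
      have hmem : ∀ p ∈ F, p ∈ T ∧ p.1 j = p0.1 j ∧ p.1 k = p0.1 k ∧ p.2 i = p0.2 i := by
        intro p hp
        rw [hF, Finset.mem_filter] at hp
        simpa using hp
      obtain ⟨y, hy⟩ := Int.eq_ofNat_of_zero_le (hT.ypos p0 hp0 i).le
      have hy0 : 0 < y := by have := hT.ypos p0 hp0 i; omega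
      have hyle : (y : ℝ) ≤ W := by
        have h1 := hT.yle p0 hp0 i
        have h2 := hT.Yb i
        rw [hy] at h1
        push_cast at h1
        linarith
      have hygt : Y i / 2 < (y : ℝ) := by
        have h1 := hT.ygt p0 hp0 i
        rw [hy] at h1
        exact_mod_cast h1
      have hysq : Squarefree y := by
        have := hT.sqf p0 hp0 i
        rw [hy] at this
        exact Int.squarefree_natCast.1 this
      have hyY : (y:ℝ) ≤ Y i := by
        have h1 := hT.yle p0 hp0 i
        rw [hy] at h1
        exact_mod_cast h1
      have hq : ((y ^ 3 : ℕ) : ℤ) = (y:ℤ) ^ 3 := by push_cast; rfl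
      refine le_trans (root_classes 3 (y ^ 3) (by positivity) F (fun p => p.2 j) (fun p => p.2 k) ?_ ?_ ?_
        (K * W ^ (ε/2) * (8 * (1 + R ^ ((3:ℝ)/4)))) (by positivity) ?_) ?_
      · intro p hp
        obtain ⟨h1, _, _, h4⟩ := hmem p hp
        rw [hq, ← hy, ← h4]
        exact (hT.cyy h1 hij.symm).pow_right
      · intro p hp
        obtain ⟨h1, _, _, h4⟩ := hmem p hp
        rw [hq, ← hy, ← h4]
        exact (hT.cyy h1 hik.symm).pow_right
      · intro p hp p' hp'
        obtain ⟨h1, h2, h3, h4⟩ := hmem p hp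
        obtain ⟨h1', h2', h3', h4'⟩ := hmem p' hp'
        have e1 := hT.eq p h1 i j k hij hik hjk
        have e2 := hT.eq p' h1' i j k hij hik hjk
        rw [h2, h3, h4, hy] at e1
        rw [h2', h3', h4', hy] at e2
        have hc : IsCoprime ((y:ℤ) ^ 3) (a j * p0.1 j ^ 2) := by
          rw [← hy]
          apply IsCoprime.pow_left
          apply IsCoprime.mul_right
          · exact (hT.cay hp0 j i).symm
          · exact (hT.cxy hp0 hij.symm).symm.pow_right
        rw [hq]
        apply hc.dvd_of_dvd_mul_left
        refine ⟨-(a i * p.1 i ^ 2) * p'.2 k ^ 3 + (a i * p'.1 i ^ 2) * p.2 k ^ 3, ?_⟩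
        linear_combination p'.2 k ^ 3 * e1 - p.2 k ^ 3 * e2
      · intro T' hT' ρ hρ
        have hinj : Set.InjOn (fun p : (Fin 3 → ℤ) × (Fin 3 → ℤ) => (p.2 j, p.2 k, p.1 i)) T' := by
          intro p hp p' hp' he
          obtain ⟨h1, h2, h3, h4⟩ := hmem p (hT' hp)
          obtain ⟨h1', h2', h3', h4'⟩ := hmem p' (hT' hp')
          simp only [Prod.mk.injEq] at he
          apply Prod.ext
          · exact fin3_ext i j k hij hik hjk he.2.2 (h2.trans h2'.symm) (h3.trans h3'.symm)
          · exact fin3_ext i j k hij hik hjk (h4.trans h4'.symm) he.1 he.2.1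
        rw [← Finset.card_image_of_injOn hinj]
        refine le_trans (hlat W (Y j) (Y k) (a i * y ^ 3) (-(a j * p0.1 j ^ 2)) (-(a k * p0.1 k ^ 2)) (y ^ 3) ρ _
          hW2 (by linarith) (by linarith) ?_ ?_ ?_ (by positivity) ?_ ?_) ?_
        · exact mul_ne_zero (hT.a0 i) (by positivity)
        · exact neg_ne_zero.2 (mul_ne_zero (hT.a0 j) (pow_ne_zero _ (hT.xpos p0 hp0 j).ne'))
        · exact neg_ne_zero.2 (mul_ne_zero (hT.a0 k) (pow_ne_zero _ (hT.xpos p0 hp0 k).ne'))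
        · push_cast
          rw [abs_mul, abs_of_pos (show (0:ℝ) < (y:ℝ)^3 by positivity)]
          refine le_trans ?_ (hT.aY i)
          gcongr
        · intro t ht
          obtain ⟨p, hp, rfl⟩ := Finset.mem_image.1 ht
          obtain ⟨h1, h2, h3, h4⟩ := hmem p (hT' hp)
          refine ⟨hT.ypos p h1 j, hT.yle p h1 j, hT.ypos p h1 k, hT.yle p h1 k, hT.xpos p h1 i,
            (hT.xle p h1 i).trans (hT.Xb i), hT.cyy h1 hjk, ?_, ?_⟩
          · have e1 := hT.eq p h1 i j k hij hik hjk
            rw [h2, h3, h4, hy] at e1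
            linear_combination e1
          · have := hρ p hp
            rwa [hq] at this
        · gcongr
          push_cast
          have h8 : Y j * Y k / (y:ℝ) ^ 3 ≤ 8 * R := by
            have : (Y i / 2) ^ 3 ≤ (y:ℝ) ^ 3 := by gcongr
            rw [hR, div_le_iff₀ (by positivity)]
            have e : 8 * (Y j * Y k / Y i ^ 3) * (Y i / 2) ^ 3 = Y j * Y k := by field_simp; norm_num
            calc Y j * Y k = 8 * (Y j * Y k / Y i ^ 3) * (Y i / 2) ^ 3 := e.symm
              _ ≤ _ := by gcongr
          have h9 : (Y j * Y k / (y:ℝ) ^ 3) ^ ((3:ℝ)/4) ≤ 8 * R ^ ((3:ℝ)/4) := by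
            calc _ ≤ (8 * R) ^ ((3:ℝ)/4) := by gcongr
              _ = 8 ^ ((3:ℝ)/4) * R ^ ((3:ℝ)/4) := Real.mul_rpow (by norm_num) hR0.le
              _ ≤ 8 ^ (1:ℝ) * R ^ ((3:ℝ)/4) := by
                gcongr
                · norm_num
                · norm_num
              _ = _ := by norm_num
          linarith
      · gcongr
        refine (hroot 3 y (Or.inr rfl) hysq).trans ?_
        gcongr
  refine hfib.trans (le_of_eq ?_)
  have e : W ^ (ε/2) * W ^ (ε/2) = 32 ^ ε * B ^ ε := by
    rw [← Real.rpow_add (by linarith), hW, Real.mul_rpow (by norm_num) (by linarith)]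
    norm_num
  calc _ = (W ^ (ε/2) * W ^ (ε/2)) * (X j * X k * Y i * (C0 * K * 8) * (1 + R ^ ((3:ℝ)/4))) := by ring
    _ = _ := by rw [e]; ring

theorem cell_det (A c t0 t1 t2 s0 s1 s2 h : ℝ) (hA : |A| ≤ 1)
    (a0 : 1/2 ≤ t0) (a1 : 1/2 ≤ t1) (a2 : 1/2 ≤ t2) (b0 : t0 ≤ 2) (b1 : t1 ≤ 2) (b2 : t2 ≤ 2)
    (d0 : 1/2 ≤ s0) (d1 : 1/2 ≤ s1) (d2 : 1/2 ≤ s2) (f0 : s0 ≤ 2) (f1 : s1 ≤ 2)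
    (e0 : A * t0 ^ 2 + s0 ^ 2 = c) (e1 : A * t1 ^ 2 + s1 ^ 2 = c) (e2 : A * t2 ^ 2 + s2 ^ 2 = c)
    (h10 : |t1 - t0| ≤ h) (h20 : |t2 - t0| ≤ h) (h21 : |t2 - t1| ≤ h) :
    |(t1 - t0) * (s2 - s0) - (t2 - t0) * (s1 - s0)| ≤ 20 * h ^ 3 := by
  have hh : 0 ≤ h := (abs_nonneg _).trans h10
  have hs : |s1 - s2| ≤ 4 * h := by
    have e : (s1 - s2) * (s1 + s2) = A * ((t2 - t1) * (t2 + t1)) := by linear_combination e1 - e2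
    have e' := congrArg abs e
    rw [abs_mul, abs_mul, abs_mul, abs_of_pos (show 0 < s1 + s2 by linarith),
      abs_of_pos (show 0 < t2 + t1 by linarith)] at e'
    calc |s1 - s2| ≤ |s1 - s2| * (s1 + s2) := le_mul_of_one_le_right (abs_nonneg _) (by linarith)
      _ = |A| * (|t2 - t1| * (t2 + t1)) := e'
      _ ≤ 1 * (h * 4) := by gcongr; linarith
      _ = _ := by ring
  have key : ((t1 - t0) * (s2 - s0) - (t2 - t0) * (s1 - s0)) * ((s2 + s0) * (s1 + s0)) =
      -A * ((t1 - t0) * (t2 - t0) * ((t2 - t1) * (s1 + s0) + (t1 + t0) * (s1 - s2))) := by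
    linear_combination (t1 - t0) * (s1 + s0) * (e2 - e0) - (t2 - t0) * (s2 + s0) * (e1 - e0)
  have hn : |(t2 - t1) * (s1 + s0) + (t1 + t0) * (s1 - s2)| ≤ 20 * h := by
    calc _ ≤ |(t2 - t1) * (s1 + s0)| + |(t1 + t0) * (s1 - s2)| := abs_add_le _ _
      _ = |t2 - t1| * (s1 + s0) + (t1 + t0) * |s1 - s2| := by
        rw [abs_mul, abs_mul, abs_of_pos (show 0 < s1 + s0 by linarith),
          abs_of_pos (show 0 < t1 + t0 by linarith)]
      _ ≤ h * 4 + 4 * (4 * h) := by gcongr <;> linarith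
      _ = _ := by ring
  have hS : 1 ≤ (s2 + s0) * (s1 + s0) := one_le_mul_of_one_le_of_one_le (by linarith) (by linarith)
  have key' := congrArg abs key
  rw [abs_mul, abs_of_pos (show 0 < (s2 + s0) * (s1 + s0) by linarith), abs_mul, abs_mul, abs_mul (t1 - t0), abs_neg] at key'
  calc _ ≤ _ := le_mul_of_one_le_right (abs_nonneg _) hS
    _ = _ := key'
    _ ≤ 1 * (h * h * (20 * h)) := by gcongr
    _ = _ := by ring

theorem cell_line (A c t0 t1 t2 s0 s1 s2 : ℝ) (hA : A ≠ 0) (hc : c ≠ 0)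
    (e0 : A * t0 ^ 2 + s0 ^ 2 = c) (e1 : A * t1 ^ 2 + s1 ^ 2 = c) (e2 : A * t2 ^ 2 + s2 ^ 2 = c)
    (h10 : t1 ≠ t0) (h20 : t2 ≠ t0) (h21 : t2 ≠ t1)
    (hd : (t1 - t0) * (s2 - s0) - (t2 - t0) * (s1 - s0) = 0) : False := by
  have u0 : t1 - t0 ≠ 0 := sub_ne_zero.2 h10
  have u0' : t2 - t0 ≠ 0 := sub_ne_zero.2 h20
  obtain ⟨m, hm⟩ : ∃ m, s1 - s0 = m * (t1 - t0) := ⟨(s1 - s0) / (t1 - t0), by field_simp⟩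
  have hm' : s2 - s0 = m * (t2 - t0) := by
    apply mul_left_cancel₀ u0
    linear_combination hd + (t2 - t0) * hm
  have g1 : A * (t1 + t0) + m * (s1 + s0) = 0 := by
    apply mul_left_cancel₀ u0
    linear_combination e1 - e0 - (s1 + s0) * hm
  have g2 : A * (t2 + t0) + m * (s2 + s0) = 0 := by
    apply mul_left_cancel₀ u0'
    linear_combination e2 - e0 - (s2 + s0) * hm'
  have g3 : A + m ^ 2 = 0 := by
    apply mul_left_cancel₀ (sub_ne_zero.2 h21)
    linear_combination g2 - g1 - m * hm' + m * hm
  have m0 : m ≠ 0 := by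
    rintro rfl
    apply hA; linarith
  have g4 : s0 - m * t0 = 0 := by
    apply mul_left_cancel₀ m0
    linear_combination (1/2) * g1 - (t1 + t0)/2 * g3 - m / 2 * hm
  apply hc
  rw [← e0]
  linear_combination t0 ^ 2 * g3 + (s0 + m * t0) * g4

theorem conic_cells (X1 X2 X3 : ℝ) (hX1 : 0 < X1) (hX2 : 0 < X2) (hX3 : 0 < X3) (c1 c2 c3 : ℤ)
    (h1 : c1 ≠ 0) (h2 : c2 ≠ 0) (h3 : c3 ≠ 0) (h12 : |(c1:ℝ)| * X1 ^ 2 ≤ |(c2:ℝ)| * X2 ^ 2)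
    (Q : ℤ) (hQ : 0 < Q) (T : Finset (ℤ × ℤ × ℤ))
    (box : ∀ x ∈ T, (0 < x.1 ∧ X1 / 2 < (x.1:ℝ) ∧ (x.1:ℝ) ≤ X1) ∧ (0 < x.2.1 ∧ X2 / 2 < (x.2.1:ℝ) ∧ (x.2.1:ℝ) ≤ X2)
      ∧ (0 < x.2.2 ∧ X3 / 2 < (x.2.2:ℝ) ∧ (x.2.2:ℝ) ≤ X3))
    (cop : ∀ x ∈ T, IsCoprime x.1 x.2.2)
    (eqn : ∀ x ∈ T, c1 * x.1 ^ 2 + c2 * x.2.1 ^ 2 + c3 * x.2.2 ^ 2 = 0)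
    (hdet : ∀ x ∈ T, ∀ y ∈ T, ∀ z ∈ T, Q ∣ x.1 * (y.2.1 * z.2.2 - y.2.2 * z.2.1)
      - x.2.1 * (y.1 * z.2.2 - y.2.2 * z.1) + x.2.2 * (y.1 * z.2.1 - y.2.1 * z.1)) :
    (T.card : ℝ) ≤ 16 * (1 + (X1 * X2 * X3 / Q) ^ ((1:ℝ)/3)) := by
  have hQ' : (0:ℝ) < Q := by exact_mod_cast hQ
  have hc1 : (c1:ℝ) ≠ 0 := by exact_mod_cast h1
  have hc2 : (c2:ℝ) ≠ 0 := by exact_mod_cast h2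
  have hc3 : (c3:ℝ) ≠ 0 := by exact_mod_cast h3
  set P := X1 * X2 * X3 with hP
  have hP0 : 0 < P := by positivity
  set g := (P / Q) ^ ((1:ℝ)/3) with hg
  have hg0 : 0 < g := by positivity
  have hg3 : g ^ 3 = P / Q := by
    rw [hg, ← Real.rpow_natCast, ← Real.rpow_mul (by positivity)]; norm_num
  set h := 1 / (3 * g) with hh
  have hh0 : 0 < h := by positivity
  have hlt : P * (20 * h ^ 3) < Q := by
    have : h ^ 3 = 1 / (27 * (P / Q)) := by rw [← hg3, hh]; field_simp; norm_num
    rw [this]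
    have e : P * (20 * (1 / (27 * (P / Q)))) = (20/27) * Q := by field_simp
    rw [e]; linarith
  let t : ℤ × ℤ × ℤ → ℝ := fun x => (x.1 / X1) / (x.2.2 / X3)
  let s : ℤ × ℤ × ℤ → ℝ := fun x => (x.2.1 / X2) / (x.2.2 / X3)
  have ratio : ∀ x X z Z : ℝ, 0 < X → 0 < Z → X / 2 < x → x ≤ X → Z / 2 < z → z ≤ Z →
      1/2 ≤ (x / X) / (z / Z) ∧ (x / X) / (z / Z) ≤ 2 := by
    intro x X z Z a b c d e f
    have hz : 0 < z := by linarith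
    have e1 : (x / X) / (z / Z) = (x * Z) / (X * z) := by field_simp
    rw [e1, le_div_iff₀ (by positivity), div_le_iff₀ (by positivity)]
    constructor <;> nlinarith
  set A : ℝ := (c1 * X1 ^ 2) / (c2 * X2 ^ 2) with hA
  set cc : ℝ := -(c3 * X3 ^ 2) / (c2 * X2 ^ 2) with hcc
  have hA0 : A ≠ 0 := by rw [hA]; positivity
  have hcc0 : cc ≠ 0 := by
    rw [hcc]; apply div_ne_zero
    · exact neg_ne_zero.2 (by positivity)
    · positivity
  have hA1 : |A| ≤ 1 := by
    rw [hA, abs_div, abs_mul, abs_mul, abs_of_pos (show 0 < X1 ^ 2 by positivity), abs_of_pos (show 0 < X2 ^ 2 by positivity)]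
    rw [div_le_one (by positivity)]
    exact h12
  have tb : ∀ x ∈ T, 1/2 ≤ t x ∧ t x ≤ 2 := by
    intro x hx
    obtain ⟨b1, b2, b3⟩ := box x hx
    exact ratio _ _ _ _ hX1 hX3 b1.2.1 b1.2.2 b3.2.1 b3.2.2
  have sb : ∀ x ∈ T, 1/2 ≤ s x ∧ s x ≤ 2 := by
    intro x hx
    obtain ⟨b1, b2, b3⟩ := box x hx
    exact ratio _ _ _ _ hX2 hX3 b2.2.1 b2.2.2 b3.2.1 b3.2.2
  have ts : ∀ x ∈ T, A * t x ^ 2 + s x ^ 2 = cc := by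
    intro x hx
    have e : (c1:ℝ) * x.1 ^ 2 + c2 * x.2.1 ^ 2 + c3 * x.2.2 ^ 2 = 0 := by exact_mod_cast eqn x hx
    have x3 : (x.2.2:ℝ) ≠ 0 := by have := (box x hx).2.2.1; exact_mod_cast this.ne'
    simp only [t, s, hA, hcc]
    field_simp
    linear_combination e
  have tinj : ∀ x ∈ T, ∀ y ∈ T, t x = t y → x = y := by
    intro x hx y hy hxy
    have es : s x = s y := by
      have e1 := ts x hx
      have e2 := ts y hy
      rw [hxy] at e1
      have e3 : s x ^ 2 = s y ^ 2 := by linarith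
      exact (pow_left_inj₀ (by linarith [(sb x hx).1]) (by linarith [(sb y hy).1]) (by norm_num)).1 e3
    obtain ⟨b1, b2, b3⟩ := box x hx
    obtain ⟨d1, d2, d3⟩ := box y hy
    have x3 : (0:ℝ) < (x.2.2:ℝ) := by exact_mod_cast b3.1
    have y3 : (0:ℝ) < (y.2.2:ℝ) := by exact_mod_cast d3.1
    have f1 : (x.1:ℝ) * y.2.2 = y.1 * x.2.2 := by
      simp only [t] at hxy
      field_simp at hxy
      linarith
    have f2 : (x.2.1:ℝ) * y.2.2 = y.2.1 * x.2.2 := by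
      simp only [s] at es
      field_simp at es
      linarith
    obtain ⟨g1, g2⟩ := coprime_prop b1.1 d1.1 b3.1 (cop x hx) (cop y hy) (by exact_mod_cast f1)
    have g3 : x.2.1 = y.2.1 := by
      rw [g2] at f2
      have := mul_right_cancel₀ y3.ne' f2
      exact_mod_cast this
    exact Prod.ext g1 (Prod.ext g3 g2)
  have fib : (T.card : ℝ) ≤ (2 / h + 1) * 2 := by
    apply card_le_fib T (fun x => ⌊t x / h⌋) 2 _ (by norm_num)
    · have := card_Icc_le (T.image (fun x => ⌊t x / h⌋)) 0 (2 / h) (by positivity) ?_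
      · linarith
      · intro z hz
        obtain ⟨x, hx, rfl⟩ := Finset.mem_image.1 hz
        have := tb x hx
        constructor
        · have : 0 ≤ ⌊t x / h⌋ := Int.floor_nonneg.2 (div_nonneg (by linarith) hh0.le)
          exact_mod_cast this
        · refine (Int.floor_le _).trans ?_
          gcongr
          exact this.2
    · intro b _
      by_contra hcon
      push Not at hcon
      have hcard : 2 < (T.filter (fun x => ⌊t x / h⌋ = b)).card := by exact_mod_cast hcon
      rw [Finset.two_lt_card] at hcard
      obtain ⟨x, hx, y, hy, z, hz, hxy, hxz, hyz⟩ := hcard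
      rw [Finset.mem_filter] at hx hy hz
      have close : ∀ x y : ℤ × ℤ × ℤ, ⌊t x / h⌋ = b → ⌊t y / h⌋ = b → |t x - t y| ≤ h := by
        intro x y hx hy
        have := Int.abs_sub_lt_one_of_floor_eq_floor (hx.trans hy.symm)
        rw [← sub_div, abs_div, abs_of_pos hh0, div_lt_one hh0] at this
        exact this.le
      have cd := cell_det A cc (t x) (t y) (t z) (s x) (s y) (s z) h hA1 (tb x hx.1).1 (tb y hy.1).1 (tb z hz.1).1
        (tb x hx.1).2 (tb y hy.1).2 (tb z hz.1).2 (sb x hx.1).1 (sb y hy.1).1 (sb z hz.1).1 (sb x hx.1).2 (sb y hy.1).2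
        (ts x hx.1) (ts y hy.1) (ts z hz.1) (close _ _ hy.2 hx.2) (close _ _ hz.2 hx.2) (close _ _ hz.2 hy.2)
      have cl := cell_line A cc (t x) (t y) (t z) (s x) (s y) (s z) hA0 hcc0
        (ts x hx.1) (ts y hy.1) (ts z hz.1) (fun e => hxy (tinj y hy.1 x hx.1 e).symm)
        (fun e => hxz (tinj z hz.1 x hx.1 e).symm) (fun e => hyz (tinj z hz.1 y hy.1 e).symm)
      apply cl
      obtain ⟨bx1, bx2, bx3⟩ := box x hx.1
      obtain ⟨by1, by2, by3⟩ := box y hy.1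
      obtain ⟨bz1, bz2, bz3⟩ := box z hz.1
      have x3 : (0:ℝ) < (x.2.2:ℝ) := by exact_mod_cast bx3.1
      have y3 : (0:ℝ) < (y.2.2:ℝ) := by exact_mod_cast by3.1
      have z3 : (0:ℝ) < (z.2.2:ℝ) := by exact_mod_cast bz3.1
      set D : ℤ := x.1 * (y.2.1 * z.2.2 - y.2.2 * z.2.1)
        - x.2.1 * (y.1 * z.2.2 - y.2.2 * z.1) + x.2.2 * (y.1 * z.2.1 - y.2.1 * z.1) with hD
      have hDr : (D : ℝ) = P * ((x.2.2 / X3) * (y.2.2 / X3) * (z.2.2 / X3) *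
          ((t y - t x) * (s z - s x) - (t z - t x) * (s y - s x))) := by
        rw [hD]
        push_cast
        simp only [t, s, hP]
        field_simp
        ring
      have hDabs : |(D:ℝ)| < Q := by
        refine lt_of_le_of_lt ?_ hlt
        rw [hDr, abs_mul, abs_of_pos hP0]
        gcongr
        rw [abs_mul, abs_of_pos (by positivity)]
        have q1 : (x.2.2:ℝ) / X3 ≤ 1 := (div_le_one hX3).2 bx3.2.2
        have q2 : (y.2.2:ℝ) / X3 ≤ 1 := (div_le_one hX3).2 by3.2.2
        have q3 : (z.2.2:ℝ) / X3 ≤ 1 := (div_le_one hX3).2 bz3.2.2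
        calc _ ≤ 1 * 1 * 1 * (20 * h ^ 3) := by gcongr
          _ = _ := by ring
      have hD0 : D = 0 := by
        apply Int.eq_zero_of_abs_lt_dvd (hdet x hx.1 y hy.1 z hz.1)
        exact_mod_cast hDabs
      rw [hD0, Int.cast_zero] at hDr
      have := (mul_eq_zero.1 hDr.symm).resolve_left hP0.ne'
      exact (mul_eq_zero.1 this).resolve_left (by positivity)
  refine fib.trans ?_
  have : 2 / h = 6 * g := by rw [hh]; field_simp; norm_num
  rw [this]
  linarith

/-- splitting into square root classes modulo one `y i ^ 3` -/
theorem Good.split {a : Fin 3 → ℤ} {X Y : Fin 3 → ℝ} {B : ℝ} {T : Finset ((Fin 3 → ℤ) × (Fin 3 → ℤ))}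
    (hT : Good a X Y B T) (p0 : (Fin 3 → ℤ) × (Fin 3 → ℤ)) (hp0 : p0 ∈ T) (hy : ∀ p ∈ T, p.2 = p0.2)
    (η C0 : ℝ) (hη : 0 < η) (hC0 : 1 ≤ C0)
    (hroot : ∀ k y : ℕ, (k = 2 ∨ k = 3) → Squarefree y → (rootN k (y ^ 3) : ℝ) ≤ C0 * (y : ℝ) ^ η)
    (M : ℝ) (hM : 0 ≤ M) (i j k : Fin 3) (hij : i ≠ j) (hik : i ≠ k) (hjk : j ≠ k)
    (h : ∀ T' ⊆ T, ∀ ρ : ℤ, (∀ p ∈ T', p0.2 i ^ 3 ∣ p.1 j - ρ * p.1 k) → (T'.card : ℝ) ≤ M) :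
    (T.card : ℝ) ≤ (C0 * (32 * B) ^ η) * M := by
  obtain ⟨y, hyy⟩ := Int.eq_ofNat_of_zero_le (hT.ypos p0 hp0 i).le
  have hy0 : 0 < y := by have := hT.ypos p0 hp0 i; omega
  have hyle : (y : ℝ) ≤ 32 * B := by
    have h1 := hT.yle p0 hp0 i
    have h2 := hT.Yb i
    rw [hyy] at h1
    push_cast at h1
    linarith
  have hysq : Squarefree y := by
    have := hT.sqf p0 hp0 i
    rw [hyy] at this
    exact Int.squarefree_natCast.1 this
  have hq : ((y ^ 3 : ℕ) : ℤ) = p0.2 i ^ 3 := by rw [hyy]; push_cast; rfl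
  refine le_trans (root_classes 2 (y ^ 3) (by positivity) T (fun p => p.1 j) (fun p => p.1 k) ?_ ?_ ?_
        M hM ?_) ?_
  · intro p hp
    rw [hq, ← hy p hp]
    exact (hT.cxy hp hij.symm).pow_right
  · intro p hp
    rw [hq, ← hy p hp]
    exact (hT.cxy hp hik.symm).pow_right
  · intro p hp p' hp'
    have e1 := hT.eq p hp i j k hij hik hjk
    have e2 := hT.eq p' hp' i j k hij hik hjk
    rw [hy p hp] at e1
    rw [hy p' hp'] at e2
    have hc : IsCoprime (p0.2 i ^ 3) (a j * p0.2 j ^ 3) := by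
      apply IsCoprime.pow_left
      apply IsCoprime.mul_right
      · exact (hT.cay hp0 j i).symm
      · exact (hT.cyy hp0 hij).pow_right
    rw [hq]
    apply hc.dvd_of_dvd_mul_left
    refine ⟨-(a i * p.1 i ^ 2) * p'.1 k ^ 2 + (a i * p'.1 i ^ 2) * p.1 k ^ 2, ?_⟩
    linear_combination p'.1 k ^ 2 * e1 - p.1 k ^ 2 * e2
  · intro T' hT' ρ hρ
    apply h T' hT' ρ
    intro p hp
    have := hρ p hp
    rwa [hq] at this
  · gcongr
    refine (hroot 2 y (Or.inl rfl) hysq).trans ?_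
    gcongr

theorem conic_fiber {a : Fin 3 → ℤ} {X Y : Fin 3 → ℝ} {B : ℝ} {T : Finset ((Fin 3 → ℤ) × (Fin 3 → ℤ))}
    (hT : Good a X Y B T) (p0 : (Fin 3 → ℤ) × (Fin 3 → ℤ)) (hp0 : p0 ∈ T) (hy : ∀ p ∈ T, p.2 = p0.2)
    (i j k : Fin 3) (hij : i ≠ j) (hik : i ≠ k) (hjk : j ≠ k)
    (hord : |((a i * p0.2 i ^ 3 : ℤ) : ℝ)| * X i ^ 2 ≤ |((a j * p0.2 j ^ 3 : ℤ) : ℝ)| * X j ^ 2)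
    (ρ1 ρ2 ρ3 : ℤ) (h1 : ∀ p ∈ T, p0.2 i ^ 3 ∣ p.1 j - ρ1 * p.1 k)
    (h2 : ∀ p ∈ T, p0.2 j ^ 3 ∣ p.1 i - ρ2 * p.1 k)
    (h3 : ∀ p ∈ T, p0.2 k ^ 3 ∣ p.1 i - ρ3 * p.1 j) :
    (T.card : ℝ) ≤ 16 * (1 + 8 * ((X i * X j * X k) ^ ((1:ℝ)/3) / (Y i * Y j * Y k))) := by
  classical
  have hinj : Set.InjOn (fun p : (Fin 3 → ℤ) × (Fin 3 → ℤ) => (p.1 i, p.1 j, p.1 k)) T := by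
    intro p hp p' hp' he
    simp only [Prod.mk.injEq] at he
    apply Prod.ext
    · exact fin3_ext i j k hij hik hjk he.1 he.2.1 he.2.2
    · rw [hy p hp, hy p' hp']
  rw [← Finset.card_image_of_injOn hinj]
  have hX : ∀ l, 0 < X l := fun l => by linarith [hT.X1 l]
  have hY : ∀ l, 0 < Y l := fun l => by linarith [hT.Y1 l]
  have hyp := hT.ypos p0 hp0
  have hXi := hX i
  have hXj := hX j
  have hXk := hX k
  have hYi := hY i
  have hYj := hY j
  have hYk := hY k
  set Q : ℤ := p0.2 i ^ 3 * p0.2 j ^ 3 * p0.2 k ^ 3 with hQ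
  have hQ0 : 0 < Q := by
    have h1 := hyp i; have h2 := hyp j; have h3 := hyp k
    positivity
  have hne : ∀ l, a l * p0.2 l ^ 3 ≠ 0 := fun l => mul_ne_zero (hT.a0 l) (pow_ne_zero _ (hyp l).ne')
  refine le_trans (conic_cells (X i) (X j) (X k) (hX i) (hX j) (hX k) (a i * p0.2 i ^ 3) (a j * p0.2 j ^ 3)
    (a k * p0.2 k ^ 3) (hne i) (hne j) (hne k) hord Q hQ0 _ ?_ ?_ ?_ ?_) ?_
  · intro x hx
    obtain ⟨p, hp, rfl⟩ := Finset.mem_image.1 hx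
    exact ⟨⟨hT.xpos p hp i, hT.xgt p hp i, hT.xle p hp i⟩, ⟨hT.xpos p hp j, hT.xgt p hp j, hT.xle p hp j⟩,
      ⟨hT.xpos p hp k, hT.xgt p hp k, hT.xle p hp k⟩⟩
  · intro x hx
    obtain ⟨p, hp, rfl⟩ := Finset.mem_image.1 hx
    exact hT.cxx hp hik
  · intro x hx
    obtain ⟨p, hp, rfl⟩ := Finset.mem_image.1 hx
    have e1 := hT.eq p hp i j k hij hik hjk
    rw [hy p hp] at e1
    linear_combination e1
  · intro x hx y hyy z hz
    obtain ⟨p, hp, rfl⟩ := Finset.mem_image.1 hx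
    obtain ⟨p', hp', rfl⟩ := Finset.mem_image.1 hyy
    obtain ⟨p'', hp'', rfl⟩ := Finset.mem_image.1 hz
    rw [hQ]
    apply IsCoprime.mul_dvd
    · apply IsCoprime.mul_left
      · exact (hT.cyy hp0 hik).pow
      · exact (hT.cyy hp0 hjk).pow
    · apply IsCoprime.mul_dvd
      · exact (hT.cyy hp0 hij).pow
      · obtain ⟨u, hu⟩ := h1 p hp
        obtain ⟨u', hu'⟩ := h1 p' hp'
        obtain ⟨u'', hu''⟩ := h1 p'' hp''
        simp only
        have g1 : p.1 j = ρ1 * p.1 k + p0.2 i ^ 3 * u := by linarith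
        have g2 : p'.1 j = ρ1 * p'.1 k + p0.2 i ^ 3 * u' := by linarith
        have g3 : p''.1 j = ρ1 * p''.1 k + p0.2 i ^ 3 * u'' := by linarith
        refine ⟨p.1 i * (u' * p''.1 k - p'.1 k * u'') - u * (p'.1 i * p''.1 k - p'.1 k * p''.1 i)
          + p.1 k * (p'.1 i * u'' - u' * p''.1 i), ?_⟩
        rw [g1, g2, g3]
        ring
      · obtain ⟨u, hu⟩ := h2 p hp
        obtain ⟨u', hu'⟩ := h2 p' hp'
        obtain ⟨u'', hu''⟩ := h2 p'' hp''
        simp only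
        have g1 : p.1 i = ρ2 * p.1 k + p0.2 j ^ 3 * u := by linarith
        have g2 : p'.1 i = ρ2 * p'.1 k + p0.2 j ^ 3 * u' := by linarith
        have g3 : p''.1 i = ρ2 * p''.1 k + p0.2 j ^ 3 * u'' := by linarith
        refine ⟨u * (p'.1 j * p''.1 k - p'.1 k * p''.1 j) - p.1 j * (u' * p''.1 k - p'.1 k * u'')
          + p.1 k * (u' * p''.1 j - p'.1 j * u''), ?_⟩
        rw [g1, g2, g3]
        ring
    · obtain ⟨u, hu⟩ := h3 p hp
      obtain ⟨u', hu'⟩ := h3 p' hp'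
      obtain ⟨u'', hu''⟩ := h3 p'' hp''
      simp only
      have g1 : p.1 i = ρ3 * p.1 j + p0.2 k ^ 3 * u := by linarith
      have g2 : p'.1 i = ρ3 * p'.1 j + p0.2 k ^ 3 * u' := by linarith
      have g3 : p''.1 i = ρ3 * p''.1 j + p0.2 k ^ 3 * u'' := by linarith
      refine ⟨u * (p'.1 j * p''.1 k - p'.1 k * p''.1 j) - p.1 j * (u' * p''.1 k - p'.1 k * u'')
          + p.1 k * (u' * p''.1 j - p'.1 j * u''), ?_⟩
      rw [g1, g2, g3]
      ring
  · gcongr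
    have hQr : (Y i * Y j * Y k / 8) ^ 3 ≤ (Q : ℝ) := by
      have : (Y i / 2 * (Y j / 2) * (Y k / 2)) ^ 3 ≤ ((p0.2 i : ℝ) * p0.2 j * p0.2 k) ^ 3 := by
        have h1 := hT.ygt p0 hp0 i
        have h2 := hT.ygt p0 hp0 j
        have h3 := hT.ygt p0 hp0 k
        have n1 : (0:ℝ) < p0.2 i := by exact_mod_cast hyp i
        have n2 : (0:ℝ) < p0.2 j := by exact_mod_cast hyp j
        gcongr
      calc _ = (Y i / 2 * (Y j / 2) * (Y k / 2)) ^ 3 := by ring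
        _ ≤ _ := this
        _ = _ := by rw [hQ]; push_cast; ring
    calc (X i * X j * X k / (Q:ℝ)) ^ ((1:ℝ)/3) ≤ (X i * X j * X k / (Y i * Y j * Y k / 8) ^ 3) ^ ((1:ℝ)/3) := by
          gcongr
      _ = (X i * X j * X k) ^ ((1:ℝ)/3) / (Y i * Y j * Y k / 8) := by
          rw [Real.div_rpow (by positivity) (by positivity)]
          congr 1
          rw [← Real.rpow_natCast, ← Real.rpow_mul (by positivity)]
          norm_num
      _ = _ := by field_simp

theorem conic_bound (ε : ℝ) (hε : 0 < ε) : ∃ C : ℝ, 1 ≤ C ∧ ∀ (a : Fin 3 → ℤ) (X Y : Fin 3 → ℝ) (B : ℝ)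
    (T : Finset ((Fin 3 → ℤ) × (Fin 3 → ℤ))), Good a X Y B T → ∀ i j k, i ≠ j → i ≠ k → j ≠ k →
    (T.card : ℝ) ≤ C * B ^ ε * (Y i * Y j * Y k + B ^ ((1:ℝ)/2)) := by
  obtain ⟨C0, hC0, hroot⟩ := rootN_bound (ε / 3) (by positivity)
  refine ⟨C0 ^ 3 * 32 ^ ε * (16 * 8 * 32), ?_, ?_⟩
  · have h1 : (1:ℝ) ≤ 32 ^ ε := Real.one_le_rpow (by norm_num) hε.le
    have h2 : 1 ≤ C0 ^ 3 := one_le_pow₀ hC0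
    exact one_le_mul_of_one_le_of_one_le (one_le_mul_of_one_le_of_one_le h2 h1) (by norm_num)
  intro a X Y B T hT i j k hij hik hjk
  classical
  have hB := hT.hB
  have hX : ∀ l, 0 < X l := fun l => by linarith [hT.X1 l]
  have hY : ∀ l, 0 < Y l := fun l => by linarith [hT.Y1 l]
  have hXi := hX i
  have hXj := hX j
  have hXk := hX k
  have hYi := hY i
  have hYj := hY j
  have hYk := hY k
  set W := 32 * B with hW
  have hW0 : 0 < W := by linarith
  set R := (X i * X j * X k) ^ ((1:ℝ)/3) / (Y i * Y j * Y k) with hR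
  have hfib : (T.card : ℝ) ≤ (Y i * (Y j * Y k)) * ((C0 * W ^ (ε/3)) * ((C0 * W ^ (ε/3)) * ((C0 * W ^ (ε/3)) * (16 * (1 + 8 * R))))) := by
    apply card_le_fib T (fun p => p.2)
    · positivity
    · have hinj : Set.InjOn (fun y : Fin 3 → ℤ => (y i, y j, y k)) (T.image (fun p => p.2)) := by
        intro y _ y' _ he
        simp only [Prod.mk.injEq] at he
        exact fin3_ext i j k hij hik hjk he.1 he.2.1 he.2.2
      rw [← Finset.card_image_of_injOn hinj]
      have hsub : (T.image (fun p => p.2)).image (fun y : Fin 3 → ℤ => (y i, y j, y k)) ⊆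
          (T.image (fun p => p.2 i)) ×ˢ (T.image (fun p => p.2 j)) ×ˢ (T.image (fun p => p.2 k)) := by
        intro b hb
        rw [Finset.image_image, Finset.mem_image] at hb
        obtain ⟨p, hp, rfl⟩ := hb
        simp only [Finset.mem_product, Finset.mem_image]
        exact ⟨⟨p, hp, rfl⟩, ⟨p, hp, rfl⟩, ⟨p, hp, rfl⟩⟩
      have h1 := Finset.card_le_card hsub
      rw [Finset.card_product, Finset.card_product] at h1
      have h2 : ∀ l, ((T.image (fun p => p.2 l)).card : ℝ) ≤ Y l := by
        intro l
        apply card_pos_le _ _ (hY l).le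
        intro x hx
        obtain ⟨p, hp, rfl⟩ := Finset.mem_image.1 hx
        exact ⟨hT.ypos p hp l, hT.yle p hp l⟩
      have g1 := h2 i
      have g2 := h2 j
      have g3 := h2 k
      calc _ ≤ ((T.image (fun p => p.2 i)).card : ℝ) * ((T.image (fun p => p.2 j)).card * (T.image (fun p => p.2 k)).card) := by
            exact_mod_cast h1
        _ ≤ _ := by gcongr
    · intro b hb
      obtain ⟨p0, hp0, rfl⟩ := Finset.mem_image.1 hb
      set F := T.filter (fun p => p.2 = p0.2) with hF
      have hFG : Good a X Y B F := hT.mono (Finset.filter_subset _ _)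
      have hFy : ∀ p ∈ F, p.2 = p0.2 := fun p hp => (Finset.mem_filter.1 hp).2
      have hF0 : p0 ∈ F := Finset.mem_filter.2 ⟨hp0, rfl⟩
      -- generic
      have main : ∀ i j k : Fin 3, i ≠ j → i ≠ k → j ≠ k →
          |((a i * p0.2 i ^ 3 : ℤ) : ℝ)| * X i ^ 2 ≤ |((a j * p0.2 j ^ 3 : ℤ) : ℝ)| * X j ^ 2 →
          (X i * X j * X k) ^ ((1:ℝ)/3) / (Y i * Y j * Y k) = R →
          (F.card : ℝ) ≤ ((C0 * W ^ (ε/3)) * ((C0 * W ^ (ε/3)) * ((C0 * W ^ (ε/3)) * (16 * (1 + 8 * R))))) := by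
        intro i j k hij hik hjk hord hRR
        apply hFG.split p0 hF0 hFy (ε/3) C0 (by positivity) hC0 hroot _ (by positivity) i j k hij hik hjk
        intro T1 hT1 ρ1 h1
        rcases T1.eq_empty_or_nonempty with he | ⟨p1, hp1⟩
        · rw [he]; simp only [Finset.card_empty, Nat.cast_zero]; positivity
        have e1 : p1.2 = p0.2 := hFy p1 (hT1 hp1)
        apply (hFG.mono hT1).split p1 hp1 (fun p hp => (hFy p (hT1 hp)).trans e1.symm) (ε/3) C0 (by positivity) hC0 hroot _
          (by positivity) j i k hij.symm hjk hik
        intro T2 hT2 ρ2 h2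
        rcases T2.eq_empty_or_nonempty with he | ⟨p2, hp2⟩
        · rw [he]; simp only [Finset.card_empty, Nat.cast_zero]; positivity
        have e2 : p2.2 = p0.2 := hFy p2 (hT1 (hT2 hp2))
        apply (hFG.mono (hT2.trans hT1)).split p2 hp2 (fun p hp => (hFy p (hT1 (hT2 hp))).trans e2.symm) (ε/3) C0 (by positivity) hC0 hroot _
          (by positivity) k i j hik.symm hjk.symm hij
        intro T3 hT3 ρ3 h3
        rcases T3.eq_empty_or_nonempty with he | ⟨p3, hp3⟩
        · rw [he]; simp only [Finset.card_empty, Nat.cast_zero]; positivity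
        have e3 : p3.2 = p0.2 := hFy p3 (hT1 (hT2 (hT3 hp3)))
        rw [← hRR]
        refine conic_fiber (hFG.mono ((hT3.trans hT2).trans hT1)) p3 hp3
          (fun p hp => (hFy p (hT1 (hT2 (hT3 hp)))).trans e3.symm) i j k hij hik hjk ?_ ρ1 ρ2 ρ3 ?_ ?_ ?_
        · rw [e3]; exact hord
        · intro p hp
          rw [e3]; exact h1 p (hT2 (hT3 hp))
        · intro p hp
          rw [e3, ← e1]; exact h2 p (hT3 hp)
        · intro p hp
          rw [e3, ← e2]; exact h3 p hp
      rcases le_total (|((a i * p0.2 i ^ 3 : ℤ) : ℝ)| * X i ^ 2) (|((a j * p0.2 j ^ 3 : ℤ) : ℝ)| * X j ^ 2) with ho | ho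
      · exact main i j k hij hik hjk ho rfl
      · apply main j i k hij.symm hjk hik ho
        rw [hR, mul_comm (X j), mul_comm (Y j)]
  refine hfib.trans ?_
  have e : W ^ (ε/3) * W ^ (ε/3) * W ^ (ε/3) = 32 ^ ε * B ^ ε := by
    rw [← Real.rpow_add hW0, ← Real.rpow_add hW0, hW, Real.mul_rpow (by norm_num) (by linarith)]
    congr 2 <;> ring
  have hP : (X i * X j * X k) ^ ((1:ℝ)/3) ≤ 32 * B ^ ((1:ℝ)/2) := by
    have hsq : (X i * X j * X k) ^ 2 ≤ W ^ 3 := by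
      have hl : ∀ l, X l ^ 2 ≤ W := by
        intro l
        refine le_trans ?_ (hT.XY l)
        exact le_mul_of_one_le_right (by have := hX l; positivity) (one_le_pow₀ (hT.Y1 l))
      calc (X i * X j * X k) ^ 2 = X i ^ 2 * X j ^ 2 * X k ^ 2 := by ring
        _ ≤ W * W * W := by
          have h1 := hl i; have h2 := hl j; have h3 := hl k
          gcongr
        _ = _ := by ring
    have h1 : ((X i * X j * X k) ^ 2) ^ ((1:ℝ)/6) ≤ (W ^ 3) ^ ((1:ℝ)/6) := by gcongr
    rw [← Real.rpow_natCast, ← Real.rpow_mul (by positivity), ← Real.rpow_natCast W, ← Real.rpow_mul hW0.le] at h1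
    norm_num at h1
    norm_num
    refine h1.trans ?_
    rw [hW, Real.mul_rpow (by norm_num) (by linarith)]
    gcongr
    calc (32:ℝ) ^ ((1:ℝ)/2) ≤ 32 ^ (1:ℝ) := by
          apply Real.rpow_le_rpow_of_exponent_le <;> norm_num
      _ = 32 := by norm_num
  calc _ = (W ^ (ε/3) * W ^ (ε/3) * W ^ (ε/3)) * C0 ^ 3 * 16 * (Y i * Y j * Y k + 8 * (Y i * Y j * Y k * R)) := by ring
    _ = (32 ^ ε * B ^ ε) * C0 ^ 3 * 16 * (Y i * Y j * Y k + 8 * (X i * X j * X k) ^ ((1:ℝ)/3)) := by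
      rw [e, hR, mul_div_cancel₀ _ (by positivity)]
    _ ≤ (32 ^ ε * B ^ ε) * C0 ^ 3 * 16 * (8 * 32 * (Y i * Y j * Y k) + 8 * (32 * B ^ ((1:ℝ)/2))) := by
      have : 0 < Y i * Y j * Y k := by positivity
      apply mul_le_mul_of_nonneg_left _ (by positivity)
      linarith
    _ = _ := by ring

theorem sq_cube_inj {x y x' y' : ℤ} (hx : 0 < x) (hy : 0 < y) (hx' : 0 < x') (hy' : 0 < y')
    (sy : Squarefree y) (sy' : Squarefree y') (h : x ^ 2 * y ^ 3 = x' ^ 2 * y' ^ 3) : x = x' ∧ y = y' := by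
  have e1 : y * y' * (x' * y') ^ 2 = (y * (x * y)) ^ 2 := by linear_combination -y * h
  have d1 : x' * y' ∣ y * (x * y) := by
    rw [← Int.pow_dvd_pow_iff (n := 2) (by norm_num)]
    exact ⟨y * y', by rw [← e1]; ring⟩
  obtain ⟨k, hk⟩ := d1
  have hm : x' * y' ≠ 0 := by positivity
  have e2 : y * y' = k ^ 2 := by
    apply mul_right_cancel₀ (pow_ne_zero 2 hm)
    rw [e1, hk]; ring
  have d2 : y ∣ k := (sy.dvd_pow_iff_dvd (by norm_num : (2:ℕ) ≠ 0)).1 ⟨y', e2.symm⟩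
  obtain ⟨l, rfl⟩ := d2
  have e3 : y' = y * (l * l) := by
    apply mul_left_cancel₀ hy.ne'
    rw [e2]; ring
  have hu : IsUnit l := sy' l ⟨y, by rw [e3]; ring⟩
  have hl : l * l = 1 := by
    rcases Int.isUnit_iff.1 hu with rfl | rfl <;> norm_num
  rw [hl, mul_one] at e3
  subst e3
  refine ⟨?_, rfl⟩
  have := mul_right_cancel₀ (pow_ne_zero 3 hy.ne') h
  exact (pow_left_inj₀ hx.le hx'.le (by norm_num)).1 this

/-- energy, counting pairs of points -/
theorem energy_gcd (X Y R : ℝ) (hX : 1 ≤ X) (hY : 1 ≤ Y) (z : ℕ) (hz : 0 < z)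
    (hR1 : (rootN 2 (z ^ 3) : ℝ) ≤ R) (hR2 : (rootN 3 (z ^ 3) : ℝ) ≤ R) (d : ℕ) (hd : 0 < d)
    (E : Finset (ℤ × ℤ × ℤ × ℤ))
    (hE : ∀ e ∈ E, (0 < e.1 ∧ (e.1:ℝ) ≤ X) ∧ (0 < e.2.1 ∧ Y / 2 < (e.2.1:ℝ) ∧ (e.2.1:ℝ) ≤ Y) ∧
      (0 < e.2.2.1 ∧ (e.2.2.1:ℝ) ≤ X) ∧ (0 < e.2.2.2 ∧ Y / 2 < (e.2.2.2:ℝ) ∧ (e.2.2.2:ℝ) ≤ Y))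
    (hc : ∀ e ∈ E, IsCoprime e.1 (z:ℤ) ∧ IsCoprime e.2.1 (z:ℤ) ∧ IsCoprime e.2.2.1 (z:ℤ) ∧ IsCoprime e.2.2.2 (z:ℤ))
    (hq : ∀ e ∈ E, ((z:ℤ) ^ 3) ∣ e.1 ^ 2 * e.2.1 ^ 3 - e.2.2.1 ^ 2 * e.2.2.2 ^ 3)
    (hg : ∀ e ∈ E, Int.gcd e.2.1 e.2.2.2 = d) :
    (E.card : ℝ) ≤ R * (2 * (X ^ 2 * Y ^ 2 / (d ^ 2 * z ^ 3)) + Real.sqrt X ^ 3 * Y / d) := by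
  classical
  have hR : 0 ≤ R := le_trans (by positivity) hR1
  have hd' : (0:ℝ) < d := by exact_mod_cast hd
  have hz' : (0:ℝ) < z := by exact_mod_cast hz
  have hqc : ((z ^ 3 : ℕ) : ℤ) = (z:ℤ) ^ 3 := by push_cast; rfl
  set S := Real.sqrt X with hS
  have hS2 : S ^ 2 = X := Real.sq_sqrt (by linarith)
  have hS0 : 0 ≤ S := Real.sqrt_nonneg _
  -- first bound
  have b1 : (E.card : ℝ) ≤ (X * X) * (R * (2 * Y ^ 2 / (d ^ 2 * z ^ 3) + 1)) := by
    apply card_le_fib E (fun e => (e.1, e.2.2.1))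
    · positivity
    · have hsub : E.image (fun e => (e.1, e.2.2.1)) ⊆ (E.image (fun e => e.1)) ×ˢ (E.image (fun e => e.2.2.1)) := by
        intro b hb
        obtain ⟨p, hp, rfl⟩ := Finset.mem_image.1 hb
        simp only [Finset.mem_product, Finset.mem_image]
        exact ⟨⟨p, hp, rfl⟩, ⟨p, hp, rfl⟩⟩
      have h1 := Finset.card_le_card hsub
      rw [Finset.card_product] at h1
      have h2 : ((E.image (fun e => e.1)).card : ℝ) ≤ X := by
        apply card_pos_le _ _ (by linarith)
        intro x hx
        obtain ⟨p, hp, rfl⟩ := Finset.mem_image.1 hx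
        exact (hE p hp).1
      have h3 : ((E.image (fun e => e.2.2.1)).card : ℝ) ≤ X := by
        apply card_pos_le _ _ (by linarith)
        intro x hx
        obtain ⟨p, hp, rfl⟩ := Finset.mem_image.1 hx
        exact (hE p hp).2.2.1
      calc _ ≤ ((E.image (fun e => e.1)).card : ℝ) * (E.image (fun e => e.2.2.1)).card := by exact_mod_cast h1
        _ ≤ _ := by gcongr
    · intro b hb
      obtain ⟨p0, hp0, rfl⟩ := Finset.mem_image.1 hb
      set F := E.filter (fun e => (e.1, e.2.2.1) = (p0.1, p0.2.2.1)) with hF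
      have hmem : ∀ e ∈ F, e ∈ E ∧ e.1 = p0.1 ∧ e.2.2.1 = p0.2.2.1 := by
        intro e he
        rw [hF, Finset.mem_filter] at he
        simpa using he
      refine le_trans (root_classes 3 (z ^ 3) (by positivity) F (fun e => e.2.1) (fun e => e.2.2.2) ?_ ?_ ?_
        (2 * Y ^ 2 / (d ^ 2 * z ^ 3) + 1) (by positivity) ?_) (by gcongr)
      · intro e he
        rw [hqc]; exact (hc e (hmem e he).1).2.1.pow_right
      · intro e he
        rw [hqc]; exact (hc e (hmem e he).1).2.2.2.pow_right
      · intro e he f hf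
        obtain ⟨m1, m2, m3⟩ := hmem e he
        obtain ⟨n1, n2, n3⟩ := hmem f hf
        obtain ⟨u, hu⟩ := hq e m1
        obtain ⟨v, hv⟩ := hq f n1
        rw [m2, m3] at hu
        rw [n2, n3] at hv
        rw [hqc]
        have hcc : IsCoprime ((z:ℤ) ^ 3) (p0.1 ^ 2) := (hc p0 hp0).1.symm.pow
        apply hcc.dvd_of_dvd_mul_left
        refine ⟨u * f.2.2.2 ^ 3 - v * e.2.2.2 ^ 3, ?_⟩
        linear_combination f.2.2.2 ^ 3 * hu - e.2.2.2 ^ 3 * hv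
      · intro T' hT' ρ hρ
        set g : ℝ := (d ^ 2 * z ^ 3) / Y ^ 2 with hgdef
        have hg0 : 0 < g := by positivity
        let t : ℤ × ℤ × ℤ × ℤ → ℝ := fun e => (e.2.1 : ℝ) / e.2.2.2
        have hinj : Set.InjOn (fun e => ⌊t e / g⌋) T' := by
          intro e he f hf hef
          obtain ⟨m1, m2, m3⟩ := hmem e (hT' he)
          obtain ⟨n1, n2, n3⟩ := hmem f (hT' hf)
          have hlt := Int.abs_sub_lt_one_of_floor_eq_floor hef
          rw [← sub_div, abs_div, abs_of_pos hg0, div_lt_one hg0] at hlt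
          obtain ⟨-, ey, -, ey'⟩ := hE e m1
          obtain ⟨-, fy, -, fy'⟩ := hE f n1
          have ep : (0:ℝ) < e.2.2.2 := by exact_mod_cast ey'.1
          have fp : (0:ℝ) < f.2.2.2 := by exact_mod_cast fy'.1
          set D : ℤ := e.2.1 * f.2.2.2 - f.2.1 * e.2.2.2 with hD
          have hDt : (D : ℝ) = (t e - t f) * (e.2.2.2 * f.2.2.2) := by
            rw [hD]; push_cast; simp only [t]; field_simp
          have hDlt : |(D:ℝ)| < d ^ 2 * z ^ 3 := by
            rw [hDt, abs_mul, abs_of_pos (show (0:ℝ) < e.2.2.2 * f.2.2.2 by positivity)]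
            calc _ < g * (e.2.2.2 * f.2.2.2) := by gcongr
              _ ≤ g * (Y * Y) := by gcongr; exact ey'.2.2; exact fy'.2.2
              _ = _ := by rw [hgdef]; field_simp
          have hDdvd : ((d:ℤ) ^ 2 * (z:ℤ) ^ 3) ∣ D := by
            have de1 : (d:ℤ) ∣ e.2.1 := by rw [← hg e m1]; exact Int.gcd_dvd_left _ _
            have de2 : (d:ℤ) ∣ e.2.2.2 := by rw [← hg e m1]; exact Int.gcd_dvd_right _ _
            have df1 : (d:ℤ) ∣ f.2.1 := by rw [← hg f n1]; exact Int.gcd_dvd_left _ _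
            have df2 : (d:ℤ) ∣ f.2.2.2 := by rw [← hg f n1]; exact Int.gcd_dvd_right _ _
            apply IsCoprime.mul_dvd
            · apply IsCoprime.pow
              exact IsCoprime.of_isCoprime_of_dvd_left (hc e m1).2.1 de1
            · rw [pow_two, hD]
              exact dvd_sub (mul_dvd_mul de1 df2) (mul_dvd_mul df1 de2)
            · obtain ⟨u, hu⟩ := hρ e he
              obtain ⟨v, hv⟩ := hρ f hf
              rw [hqc] at hu hv
              refine ⟨u * f.2.2.2 - v * e.2.2.2, ?_⟩
              rw [hD]
              linear_combination f.2.2.2 * hu - e.2.2.2 * hv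
          have hD0 : D = 0 := by
            apply Int.eq_zero_of_abs_lt_dvd hDdvd
            exact_mod_cast hDlt
          -- primitive
          obtain ⟨u, hu⟩ : (d:ℤ) ∣ e.2.1 := by rw [← hg e m1]; exact Int.gcd_dvd_left _ _
          obtain ⟨u', hu'⟩ : (d:ℤ) ∣ e.2.2.2 := by rw [← hg e m1]; exact Int.gcd_dvd_right _ _
          obtain ⟨v, hv⟩ : (d:ℤ) ∣ f.2.1 := by rw [← hg f n1]; exact Int.gcd_dvd_left _ _
          obtain ⟨v', hv'⟩ : (d:ℤ) ∣ f.2.2.2 := by rw [← hg f n1]; exact Int.gcd_dvd_right _ _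
          have hdz : (0:ℤ) < d := by exact_mod_cast hd
          have prim : ∀ u u' : ℤ, Int.gcd (d * u) (d * u') = d → IsCoprime u u' := by
            intro u u' h
            rw [Int.gcd_mul_left, Int.natAbs_natCast] at h
            rw [Int.isCoprime_iff_gcd_eq_one]
            exact Nat.eq_of_mul_eq_mul_left hd (by rw [h, mul_one])
          have c1 := prim u u' (by rw [← hu, ← hu']; exact hg e m1)
          have c2 := prim v v' (by rw [← hv, ← hv']; exact hg f n1)
          have pu : 0 < u := by have := ey.1; rw [hu] at this; exact pos_of_mul_pos_right this hdz.le
          have pu' : 0 < u' := by have := ey'.1; rw [hu'] at this; exact pos_of_mul_pos_right this hdz.le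
          have pv : 0 < v := by have := fy.1; rw [hv] at this; exact pos_of_mul_pos_right this hdz.le
          obtain ⟨r1, r2⟩ := coprime_prop pu pv pu' c1 c2 (by
            rw [hD, hu, hu', hv, hv'] at hD0
            have : ((d:ℤ) ^ 2) * (u * v' - v * u') = 0 := by linear_combination hD0
            have := (mul_eq_zero.1 this).resolve_left (by positivity)
            linarith)
          refine Prod.ext (m2.trans n2.symm) (Prod.ext ?_ (Prod.ext (m3.trans n3.symm) ?_))
          · rw [hu, hv, r1]
          · rw [hu', hv', r2]
        rw [← Finset.card_image_of_injOn hinj]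
        have := card_Icc_le (T'.image (fun e => ⌊t e / g⌋)) 0 (2 / g) (by positivity) ?_
        · have e1 : 2 / g = 2 * Y ^ 2 / (d ^ 2 * z ^ 3) := by rw [hgdef]; field_simp
          rw [e1, sub_zero] at this
          exact this
        · intro w hw
          obtain ⟨e, he, rfl⟩ := Finset.mem_image.1 hw
          obtain ⟨m1, m2, m3⟩ := hmem e (hT' he)
          obtain ⟨-, ey, -, ey'⟩ := hE e m1
          have ep : (0:ℝ) < e.2.2.2 := by exact_mod_cast ey'.1
          have ep1 : (0:ℝ) < e.2.1 := by exact_mod_cast ey.1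
          constructor
          · have : 0 ≤ ⌊t e / g⌋ := Int.floor_nonneg.2 (by positivity)
            exact_mod_cast this
          · refine (Int.floor_le _).trans ?_
            gcongr
            simp only [t]
            rw [div_le_iff₀ ep]
            linarith [ey.2.2, ey'.2.1]
  -- second bound
  have b2 : (E.card : ℝ) ≤ ((Y / d) * ((Y / d) * X)) * (R * (X / z ^ 3 + 1)) := by
    apply card_le_fib E (fun e => (e.2.1, e.2.2.2, e.2.2.1))
    · positivity
    · have hsub : E.image (fun e => (e.2.1, e.2.2.2, e.2.2.1)) ⊆
          (E.image (fun e => e.2.1)) ×ˢ (E.image (fun e => e.2.2.2)) ×ˢ (E.image (fun e => e.2.2.1)) := by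
        intro b hb
        obtain ⟨p, hp, rfl⟩ := Finset.mem_image.1 hb
        simp only [Finset.mem_product, Finset.mem_image]
        exact ⟨⟨p, hp, rfl⟩, ⟨p, hp, rfl⟩, ⟨p, hp, rfl⟩⟩
      have h1 := Finset.card_le_card hsub
      rw [Finset.card_product, Finset.card_product] at h1
      have mult : ∀ G : Finset ℤ, (∀ y ∈ G, 0 < y ∧ (y:ℝ) ≤ Y ∧ (d:ℤ) ∣ y) → (G.card : ℝ) ≤ Y / d := by
        intro G hG
        have hdz : (0:ℤ) < d := by exact_mod_cast hd
        have hinj : Set.InjOn (fun y : ℤ => y / d) G := by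
          intro y hy y' hy' h
          have e1 := Int.ediv_mul_cancel (hG y hy).2.2
          have e2 := Int.ediv_mul_cancel (hG y' hy').2.2
          simp only at h
          rw [← e1, ← e2, h]
        rw [← Finset.card_image_of_injOn hinj]
        apply card_pos_le _ _ (by positivity)
        intro w hw
        obtain ⟨y, hy, rfl⟩ := Finset.mem_image.1 hw
        obtain ⟨g1, g2, g3⟩ := hG y hy
        obtain ⟨u, rfl⟩ := g3
        rw [Int.mul_ediv_cancel_left _ hdz.ne']
        refine ⟨pos_of_mul_pos_right g1 hdz.le, ?_⟩
        rw [le_div_iff₀ hd']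
        push_cast at g2
        linarith
      have h2 : ((E.image (fun e => e.2.1)).card : ℝ) ≤ Y / d := by
        apply mult
        intro x hx
        obtain ⟨p, hp, rfl⟩ := Finset.mem_image.1 hx
        refine ⟨(hE p hp).2.1.1, (hE p hp).2.1.2.2, ?_⟩
        rw [← hg p hp]; exact Int.gcd_dvd_left _ _
      have h3 : ((E.image (fun e => e.2.2.2)).card : ℝ) ≤ Y / d := by
        apply mult
        intro x hx
        obtain ⟨p, hp, rfl⟩ := Finset.mem_image.1 hx
        refine ⟨(hE p hp).2.2.2.1, (hE p hp).2.2.2.2.2, ?_⟩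
        rw [← hg p hp]; exact Int.gcd_dvd_right _ _
      have h4 : ((E.image (fun e => e.2.2.1)).card : ℝ) ≤ X := by
        apply card_pos_le _ _ (by linarith)
        intro x hx
        obtain ⟨p, hp, rfl⟩ := Finset.mem_image.1 hx
        exact (hE p hp).2.2.1
      calc _ ≤ ((E.image (fun e => e.2.1)).card : ℝ) * ((E.image (fun e => e.2.2.2)).card * (E.image (fun e => e.2.2.1)).card) := by
            exact_mod_cast h1
        _ ≤ _ := by gcongr
    · intro b hb
      obtain ⟨p0, hp0, rfl⟩ := Finset.mem_image.1 hb
      set F := E.filter (fun e => (e.2.1, e.2.2.2, e.2.2.1) = (p0.2.1, p0.2.2.2, p0.2.2.1)) with hF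
      have hmem : ∀ e ∈ F, e ∈ E ∧ e.2.1 = p0.2.1 ∧ e.2.2.2 = p0.2.2.2 ∧ e.2.2.1 = p0.2.2.1 := by
        intro e he
        rw [hF, Finset.mem_filter] at he
        simpa using he
      refine le_trans (root_classes 2 (z ^ 3) (by positivity) F (fun e => e.1) (fun e => 1) ?_ ?_ ?_
        (X / z ^ 3 + 1) (by positivity) ?_) (by gcongr)
      · intro e he
        rw [hqc]; exact (hc e (hmem e he).1).1.pow_right
      · intro e he
        exact isCoprime_one_left
      · intro e he f hf
        obtain ⟨m1, m2, m3, m4⟩ := hmem e he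
        obtain ⟨n1, n2, n3, n4⟩ := hmem f hf
        obtain ⟨u, hu⟩ := hq e m1
        obtain ⟨v, hv⟩ := hq f n1
        rw [m2, m3, m4] at hu
        rw [n2, n3, n4] at hv
        rw [hqc]
        have hcc : IsCoprime ((z:ℤ) ^ 3) (p0.2.1 ^ 3) := (hc p0 hp0).2.1.symm.pow
        apply hcc.dvd_of_dvd_mul_left
        refine ⟨u - v, ?_⟩
        linear_combination hu - hv
      · intro T' hT' ρ hρ
        have hinj : Set.InjOn (fun e : ℤ × ℤ × ℤ × ℤ => e.1) T' := by
          intro e he f hf hef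
          obtain ⟨m1, m2, m3, m4⟩ := hmem e (hT' he)
          obtain ⟨n1, n2, n3, n4⟩ := hmem f (hT' hf)
          exact Prod.ext hef (Prod.ext (m2.trans n2.symm) (Prod.ext (m4.trans n4.symm) (m3.trans n3.symm)))
        rw [← Finset.card_image_of_injOn hinj]
        have := card_class_le (T'.image (fun e => e.1)) X (by linarith) ((z:ℤ)^3) (by positivity) ?_ ?_
        · push_cast at this; exact this
        · intro x hx
          obtain ⟨p, hp, rfl⟩ := Finset.mem_image.1 hx
          exact (hE p (hmem p (hT' hp)).1).1
        · intro x hx y hy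
          obtain ⟨p, hp, rfl⟩ := Finset.mem_image.1 hx
          obtain ⟨p', hp', rfl⟩ := Finset.mem_image.1 hy
          have h1 := hρ p hp
          have h2 := hρ p' hp'
          rw [hqc] at h1 h2
          have := dvd_sub h1 h2
          have e : p.1 - p'.1 = p.1 - ρ * 1 - (p'.1 - ρ * 1) := by ring
          rw [e]; exact this
  have pos1 : 0 ≤ X ^ 2 * Y ^ 2 / (d ^ 2 * z ^ 3) := by positivity
  rcases le_total S (Y / d) with hle | hle
  · refine b1.trans ?_
    have : X * X ≤ S ^ 3 * Y / d := by
      calc X * X = S ^ 3 * S := by rw [← hS2]; ring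
        _ ≤ S ^ 3 * (Y / d) := by gcongr
        _ = _ := by ring
    calc _ = R * (2 * (X ^ 2 * Y ^ 2 / (d ^ 2 * z ^ 3)) + X * X) := by ring
      _ ≤ _ := by gcongr
  · refine b2.trans ?_
    have : (Y / d) * ((Y / d) * X) ≤ S ^ 3 * Y / d := by
      calc (Y / d) * ((Y / d) * X) = (Y / d) * X * (Y / d) := by ring
        _ ≤ (Y / d) * X * S := by gcongr
        _ = _ := by rw [← hS2]; ring
    calc _ = R * (X ^ 2 * Y ^ 2 / (d ^ 2 * z ^ 3) + (Y / d) * ((Y / d) * X)) := by field_simp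
      _ ≤ R * (2 * (X ^ 2 * Y ^ 2 / (d ^ 2 * z ^ 3)) + (S ^ 3 * Y / d)) := by
        apply mul_le_mul_of_nonneg_left _ hR
        linarith

theorem energy_bound (ε : ℝ) (hε : 0 < ε) : ∃ C : ℝ, 1 ≤ C ∧ ∀ (W X Y : ℝ) (z : ℕ)
    (E : Finset (ℤ × ℤ × ℤ × ℤ)), 1 ≤ X → 1 ≤ Y → Y ≤ W → 0 < z → (z:ℝ) ≤ W → Squarefree z →
    (∀ e ∈ E, (0 < e.1 ∧ (e.1:ℝ) ≤ X) ∧ (0 < e.2.1 ∧ Y / 2 < (e.2.1:ℝ) ∧ (e.2.1:ℝ) ≤ Y) ∧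
      (0 < e.2.2.1 ∧ (e.2.2.1:ℝ) ≤ X) ∧ (0 < e.2.2.2 ∧ Y / 2 < (e.2.2.2:ℝ) ∧ (e.2.2.2:ℝ) ≤ Y)) →
    (∀ e ∈ E, IsCoprime e.1 (z:ℤ) ∧ IsCoprime e.2.1 (z:ℤ) ∧ IsCoprime e.2.2.1 (z:ℤ) ∧ IsCoprime e.2.2.2 (z:ℤ)) →
    (∀ e ∈ E, ((z:ℤ) ^ 3) ∣ e.1 ^ 2 * e.2.1 ^ 3 - e.2.2.1 ^ 2 * e.2.2.2 ^ 3) →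
    (E.card : ℝ) ≤ C * W ^ ε * (X ^ 2 * Y ^ 2 / z ^ 3 + Real.sqrt X ^ 3 * Y) := by
  obtain ⟨C0, hC0, hroot⟩ := rootN_bound (ε / 2) (by positivity)
  refine ⟨C0 * 2 * (1 + 1 / (ε / 2)), ?_, ?_⟩
  · have h1 : (1:ℝ) ≤ 1 + 1 / (ε / 2) := by
      have : 0 < 1 / (ε / 2) := by positivity
      linarith
    exact one_le_mul_of_one_le_of_one_le (by linarith) h1
  intro W X Y z E hX hY hYW hz hzW hsq hE hc hq
  classical
  have hW : 1 ≤ W := hY.trans hYW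
  have hz' : (0:ℝ) < z := by exact_mod_cast hz
  set R := C0 * W ^ (ε/2) with hR
  have hRz : ∀ k, k = 2 ∨ k = 3 → (rootN k (z ^ 3) : ℝ) ≤ R := by
    intro k hk
    refine (hroot k z hk hsq).trans ?_
    rw [hR]; gcongr
  set M := X ^ 2 * Y ^ 2 / z ^ 3 + Real.sqrt X ^ 3 * Y with hM
  have hM0 : 0 ≤ M := by positivity
  let g : ℤ × ℤ × ℤ × ℤ → ℕ := fun e => Int.gcd e.2.1 e.2.2.2
  set n := ⌊Y⌋₊ with hn
  have hn1 : 1 ≤ n := Nat.le_floor (by exact_mod_cast hY)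
  have himg : ∀ e ∈ E, g e ∈ Finset.Icc 1 n := by
    intro e he
    obtain ⟨_, ey, _, _⟩ := hE e he
    rw [Finset.mem_Icc]
    have hpos : 0 < g e := Int.gcd_pos_of_ne_zero_left _ ey.1.ne'
    refine ⟨hpos, Nat.le_floor ?_⟩
    have h1 : ((g e : ℕ) : ℤ) ≤ e.2.1 := Int.le_of_dvd ey.1 (Int.gcd_dvd_left _ _)
    have h2 : ((g e : ℕ) : ℝ) ≤ e.2.1 := by exact_mod_cast h1
    linarith [ey.2.2]
  have hcard : (E.card : ℝ) = ∑ d ∈ Finset.Icc 1 n, ((E.filter (fun e => g e = d)).card : ℝ) := by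
    rw [Finset.card_eq_sum_card_fiberwise himg]
    push_cast
    rfl
  have hper : ∀ d ∈ Finset.Icc 1 n, ((E.filter (fun e => g e = d)).card : ℝ) ≤ (R * 2 * M) * (1 / d) := by
    intro d hd
    rw [Finset.mem_Icc] at hd
    have hd' : (0:ℝ) < d := by exact_mod_cast hd.1
    have hd1 : (1:ℝ) ≤ d := by exact_mod_cast hd.1
    have := energy_gcd X Y R hX hY z hz (hRz 2 (Or.inl rfl)) (hRz 3 (Or.inr rfl)) d hd.1 (E.filter (fun e => g e = d))
      (fun e he => hE e (Finset.mem_filter.1 he).1) (fun e he => hc e (Finset.mem_filter.1 he).1)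
      (fun e he => hq e (Finset.mem_filter.1 he).1) (fun e he => (Finset.mem_filter.1 he).2)
    refine this.trans ?_
    have h1 : X ^ 2 * Y ^ 2 / (d ^ 2 * z ^ 3) ≤ X ^ 2 * Y ^ 2 / z ^ 3 * (1 / d) := by
      have e : X ^ 2 * Y ^ 2 / (d ^ 2 * z ^ 3) = X ^ 2 * Y ^ 2 / z ^ 3 * (1 / d ^ 2) := by field_simp
      rw [e]
      gcongr
      nlinarith
    have h2 : 0 ≤ Real.sqrt X ^ 3 * Y / d := by positivity
    have h3 : 0 ≤ R := by positivity
    calc _ ≤ R * (2 * (X ^ 2 * Y ^ 2 / z ^ 3 * (1 / d)) + 2 * (Real.sqrt X ^ 3 * Y / d)) := by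
          apply mul_le_mul_of_nonneg_left _ h3
          linarith
      _ = _ := by rw [hM]; ring
  have hharm : ∑ d ∈ Finset.Icc 1 n, (1 / (d:ℝ)) ≤ (1 + 1 / (ε / 2)) * W ^ (ε / 2) := by
    have h1 := harmonic_le_one_add_log n
    rw [harmonic_eq_sum_Icc] at h1
    push_cast at h1
    simp only [one_div] at h1 ⊢
    refine h1.trans ?_
    have hnW : (n:ℝ) ≤ W := (Nat.floor_le (by linarith)).trans hYW
    have h2 : Real.log n ≤ Real.log W := Real.log_le_log (by exact_mod_cast hn1) hnW
    have h3 : Real.log W ≤ W ^ (ε/2) / (ε/2) := Real.log_le_rpow_div (by linarith) (by positivity)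
    have h4 : 1 ≤ W ^ (ε/2) := Real.one_le_rpow hW (by positivity)
    have e : (1 + (ε/2)⁻¹) * W ^ (ε/2) = W ^ (ε/2) + W ^ (ε/2) / (ε/2) := by ring
    rw [e]; linarith
  rw [hcard]
  calc _ ≤ ∑ d ∈ Finset.Icc 1 n, (R * 2 * M) * (1 / (d:ℝ)) := Finset.sum_le_sum hper
    _ = (R * 2 * M) * ∑ d ∈ Finset.Icc 1 n, (1 / (d:ℝ)) := by rw [Finset.mul_sum]
    _ ≤ (R * 2 * M) * ((1 + 1 / (ε / 2)) * W ^ (ε / 2)) := by gcongr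
    _ = C0 * 2 * (1 + 1 / (ε / 2)) * (W ^ (ε/2) * W ^ (ε/2)) * M := by rw [hR]; ring
    _ = _ := by rw [← Real.rpow_add (by linarith)]; norm_num

/-- Cauchy-Schwarz for collisions -/
theorem collisions {α β : Type*} [DecidableEq α] [DecidableEq β] (T : Finset α) (w : α → β) :
    ((T.card : ℝ)) ^ 2 ≤ (T.image w).card *
      (T.card + ((T ×ˢ T).filter (fun s => w s.1 = w s.2 ∧ s.1 ≠ s.2)).card) := by
  have h1 : ((T.card : ℝ)) ^ 2 ≤ (T.image w).card * ∑ b ∈ T.image w, ((T.filter (fun a => w a = b)).card : ℝ) ^ 2 := by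
    have : (T.card : ℝ) = ∑ b ∈ T.image w, ((T.filter (fun a => w a = b)).card : ℝ) := by
      rw [Finset.card_eq_sum_card_image w T]; push_cast; rfl
    rw [this]
    exact sq_sum_le_card_mul_sum_sq
  refine h1.trans ?_
  gcongr
  have h2 : ((T ×ˢ T).filter (fun s => w s.1 = w s.2)).card = ∑ b ∈ T.image w, ((T.filter (fun a => w a = b)).card) ^ 2 := by
    rw [Finset.card_eq_sum_card_fiberwise (f := fun s => w s.1) (t := T.image w)]
    · apply Finset.sum_congr rfl
      intro b _
      rw [pow_two, ← Finset.card_product]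
      congr 1
      ext s
      simp only [Finset.mem_filter, Finset.mem_product]
      constructor
      · rintro ⟨⟨⟨h1, h2⟩, h3⟩, h4⟩
        exact ⟨⟨h1, h4⟩, ⟨h2, h3 ▸ h4⟩⟩
      · rintro ⟨⟨h1, h2⟩, ⟨h3, h4⟩⟩
        exact ⟨⟨⟨h1, h3⟩, h2.trans h4.symm⟩, h2⟩
    · intro s hs
      have := Finset.mem_filter.1 hs
      exact Finset.mem_image_of_mem _ (Finset.mem_product.1 this.1).1
  have h3 : ((T ×ˢ T).filter (fun s => w s.1 = w s.2)).card ≤ T.card +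
      ((T ×ˢ T).filter (fun s => w s.1 = w s.2 ∧ s.1 ≠ s.2)).card := by
    have hsub : (T ×ˢ T).filter (fun s => w s.1 = w s.2) ⊆ T.image (fun a => (a, a)) ∪
        (T ×ˢ T).filter (fun s => w s.1 = w s.2 ∧ s.1 ≠ s.2) := by
      intro s hs
      have hs' := Finset.mem_filter.1 hs
      rw [Finset.mem_union]
      by_cases h : s.1 = s.2
      · left
        exact Finset.mem_image.2 ⟨s.1, (Finset.mem_product.1 hs'.1).1, Prod.ext rfl h⟩
      · right
        exact Finset.mem_filter.2 ⟨hs'.1, hs'.2, h⟩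
    refine (Finset.card_le_card hsub).trans ((Finset.card_union_le _ _).trans ?_)
    gcongr
    exact Finset.card_image_le
  calc ∑ b ∈ T.image w, ((T.filter (fun a => w a = b)).card : ℝ) ^ 2
      = (((T ×ˢ T).filter (fun s => w s.1 = w s.2)).card : ℝ) := by rw [h2]; push_cast; rfl
    _ ≤ _ := by exact_mod_cast h3

theorem K_numerics (N V G U C1 C2 : ℝ) (hN0 : 0 ≤ N) (hV0 : 0 ≤ V) (hG0 : 0 ≤ G) (hU1 : 1 ≤ U)
    (hC1 : 1 ≤ C1) (hC2 : 1 ≤ C2) (hquad : N ^ 2 ≤ V * (N + (C2 * U * (8 * G)) * (C1 * U))) :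
    N ≤ 4 * C1 * C2 * U * (V + Real.sqrt (V * G)) := by
  set L := Real.sqrt (V * G) with hL
  have hL2 : L ^ 2 = V * G := Real.sq_sqrt (by positivity)
  have hL0 : 0 ≤ L := Real.sqrt_nonneg _
  clear_value L
  obtain ⟨c, hc⟩ : ∃ c, c = C1 * C2 * U := ⟨_, rfl⟩
  have hCC : 1 ≤ C1 * C2 := one_le_mul_of_one_le_of_one_le hC1 hC2
  have hc1 : 1 ≤ c := hc ▸ one_le_mul_of_one_le_of_one_le hCC hU1
  have hcc : C1 * C2 * U ^ 2 ≤ c ^ 2 := by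
    have : c ^ 2 = (C1 * C2) * (C1 * C2 * U ^ 2) := by rw [hc]; ring
    rw [this]
    exact le_mul_of_one_le_left (by positivity) hCC
  have hquad2 : N ^ 2 ≤ V * N + 8 * c ^ 2 * L ^ 2 := by
    calc N ^ 2 ≤ V * N + 8 * (C1 * C2 * U ^ 2) * (V * G) := by
          refine hquad.trans (le_of_eq ?_); ring
      _ ≤ _ := by rw [hL2]; gcongr
  have hgoal : N ≤ 4 * c * (V + L) := by
    by_contra hcon
    push Not at hcon
    have hcL : 0 ≤ c * L := by positivity
    have hcV : V ≤ c * V := le_mul_of_one_le_left hV0 hc1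
    have h1 : 4 * V ≤ N := by linarith
    have h2 : 4 * (c * L) ≤ N := by linarith
    have h3 : 16 * (c * L) ^ 2 ≤ N ^ 2 := by
      have : (4 * (c * L)) ^ 2 ≤ N ^ 2 := by gcongr
      linarith
    have hNp : 0 < N := lt_of_le_of_lt (by positivity) hcon
    have h4 : 4 * V * N ≤ N * N := by gcongr
    have h5 : 0 < N ^ 2 := by positivity
    linarith
  calc N ≤ 4 * c * (V + L) := hgoal
    _ = _ := by rw [hc]; ring

set_option maxHeartbeats 2000000 in
theorem K_fiber (C1 C2 η : ℝ) (hη : 0 < η) (hC1 : 1 ≤ C1) (hC2 : 1 ≤ C2)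
    (hdiv : ∀ n : ℕ, n ≠ 0 → (n.divisors.card : ℝ) ≤ C1 * (n : ℝ) ^ η)
    (hen : ∀ (W X Y : ℝ) (z : ℕ)
    (E : Finset (ℤ × ℤ × ℤ × ℤ)), 1 ≤ X → 1 ≤ Y → Y ≤ W → 0 < z → (z:ℝ) ≤ W → Squarefree z →
    (∀ e ∈ E, (0 < e.1 ∧ (e.1:ℝ) ≤ X) ∧ (0 < e.2.1 ∧ Y / 2 < (e.2.1:ℝ) ∧ (e.2.1:ℝ) ≤ Y) ∧
      (0 < e.2.2.1 ∧ (e.2.2.1:ℝ) ≤ X) ∧ (0 < e.2.2.2 ∧ Y / 2 < (e.2.2.2:ℝ) ∧ (e.2.2.2:ℝ) ≤ Y)) →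
    (∀ e ∈ E, IsCoprime e.1 (z:ℤ) ∧ IsCoprime e.2.1 (z:ℤ) ∧ IsCoprime e.2.2.1 (z:ℤ) ∧ IsCoprime e.2.2.2 (z:ℤ)) →
    (∀ e ∈ E, ((z:ℤ) ^ 3) ∣ e.1 ^ 2 * e.2.1 ^ 3 - e.2.2.1 ^ 2 * e.2.2.2 ^ 3) →
    (E.card : ℝ) ≤ C2 * W ^ η * (X ^ 2 * Y ^ 2 / z ^ 3 + Real.sqrt X ^ 3 * Y))
    {a : Fin 3 → ℤ} {X Y : Fin 3 → ℝ} {B : ℝ} {T : Finset ((Fin 3 → ℤ) × (Fin 3 → ℤ))}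
    (hT : Good a X Y B T) (i j k : Fin 3) (hij : i ≠ j) (hik : i ≠ k) (hjk : j ≠ k)
    (p0 : (Fin 3 → ℤ) × (Fin 3 → ℤ)) (hp0 : p0 ∈ T) (hy : ∀ p ∈ T, p.2 i = p0.2 i) :
    (T.card : ℝ) ≤ 4 * C1 * C2 * (64 * B) ^ η *
      (X k * Y k + Real.sqrt (X k * Y k * (X j ^ 2 * Y j ^ 2 / Y i ^ 3 + Real.sqrt (X j) ^ 3 * Y j))) := by
  classical
  have hB := hT.hB
  have hX : ∀ l, 0 < X l := fun l => by linarith [hT.X1 l]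
  have hY : ∀ l, 0 < Y l := fun l => by linarith [hT.Y1 l]
  have hXj := hX j
  have hXk := hX k
  have hYi := hY i
  have hYj := hY j
  have hYk := hY k
  obtain ⟨z, hz⟩ := Int.eq_ofNat_of_zero_le (hT.ypos p0 hp0 i).le
  have hz0 : 0 < z := by have := hT.ypos p0 hp0 i; omega
  have hzz : (0:ℤ) < z := by exact_mod_cast hz0
  have hyz : ∀ p ∈ T, p.2 i = z := fun p hp => (hy p hp).trans hz
  have hzY : (z:ℝ) ≤ Y i := by
    have h1 := hT.yle p0 hp0 i
    rw [hz] at h1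
    exact_mod_cast h1
  have hzgt : Y i / 2 < (z:ℝ) := by
    have h1 := hT.ygt p0 hp0 i
    rw [hz] at h1
    exact_mod_cast h1
  have hzsq : Squarefree z := by
    have := hT.sqf p0 hp0 i
    rw [hz] at this
    exact Int.squarefree_natCast.1 this
  set U := (64 * B) ^ η with hU
  have hU1 : 1 ≤ U := Real.one_le_rpow (by linarith) hη.le
  set V := X k * Y k with hV
  have hV0 : 0 < V := by positivity
  set G := X j ^ 2 * Y j ^ 2 / Y i ^ 3 + Real.sqrt (X j) ^ 3 * Y j with hG
  have hG0 : 0 ≤ G := by positivity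
  let w : (Fin 3 → ℤ) × (Fin 3 → ℤ) → ℤ × ℤ := fun p => (p.1 k, p.2 k)
  set PP := (T ×ˢ T).filter (fun s => w s.1 = w s.2 ∧ s.1 ≠ s.2) with hPP
  have hmem : ∀ s ∈ PP, s.1 ∈ T ∧ s.2 ∈ T ∧ s.1.1 k = s.2.1 k ∧ s.1.2 k = s.2.2 k ∧ s.1 ≠ s.2 := by
    intro s hs
    obtain ⟨h1, h2, h3⟩ := Finset.mem_filter.1 hs
    simp only [w, Prod.mk.injEq] at h2
    exact ⟨(Finset.mem_product.1 h1).1, (Finset.mem_product.1 h1).2, h2.1, h2.2, h3⟩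
  -- basic difference equation
  have hdiff : ∀ s ∈ PP, a j * (s.1.1 j ^ 2 * s.1.2 j ^ 3 - s.2.1 j ^ 2 * s.2.2 j ^ 3) =
      -(a i * z ^ 3 * (s.1.1 i - s.2.1 i)) * (s.1.1 i + s.2.1 i) := by
    intro s hs
    obtain ⟨h1, h2, h3, h4, h5⟩ := hmem s hs
    have e1 := hT.eq s.1 h1 i j k hij hik hjk
    have e2 := hT.eq s.2 h2 i j k hij hik hjk
    rw [hyz s.1 h1, h3, h4] at e1
    rw [hyz s.2 h2] at e2
    linear_combination e1 - e2
  have hcoll := collisions T w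
  rw [← hPP] at hcoll
  have hVc : ((T.image w).card : ℝ) ≤ V := by
    have hsub : T.image w ⊆ (T.image (fun p => p.1 k)) ×ˢ (T.image (fun p => p.2 k)) := by
      intro b hb
      obtain ⟨p, hp, rfl⟩ := Finset.mem_image.1 hb
      simp only [Finset.mem_product, Finset.mem_image, w]
      exact ⟨⟨p, hp, rfl⟩, ⟨p, hp, rfl⟩⟩
    have h1 := Finset.card_le_card hsub
    rw [Finset.card_product] at h1
    have h2 : ((T.image (fun p => p.1 k)).card : ℝ) ≤ X k := by
      apply card_pos_le _ _ (by linarith)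
      intro x hx
      obtain ⟨p, hp, rfl⟩ := Finset.mem_image.1 hx
      exact ⟨hT.xpos p hp k, hT.xle p hp k⟩
    have h3 : ((T.image (fun p => p.2 k)).card : ℝ) ≤ Y k := by
      apply card_pos_le _ _ (by linarith)
      intro x hx
      obtain ⟨p, hp, rfl⟩ := Finset.mem_image.1 hx
      exact ⟨hT.ypos p hp k, hT.yle p hp k⟩
    calc _ ≤ ((T.image (fun p => p.1 k)).card : ℝ) * (T.image (fun p => p.2 k)).card := by exact_mod_cast h1
      _ ≤ X k * Y k := mul_le_mul h2 h3 (by positivity) hXk.le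
  have hPPc : (PP.card : ℝ) ≤ (C2 * U * (8 * G)) * (C1 * U) := by
    apply card_le_fib PP (fun s => (s.1.1 j, s.1.2 j, s.2.1 j, s.2.2 j))
    · positivity
    · refine (hen (64 * B) (X j) (Y j) z _ (hT.X1 j) (hT.Y1 j) (by linarith [hT.Yb j]) hz0
        (by linarith [hT.Yb i]) hzsq ?_ ?_ ?_).trans ?_
      · intro e he
        obtain ⟨s, hs, rfl⟩ := Finset.mem_image.1 he
        obtain ⟨h1, h2, h3, h4, h5⟩ := hmem s hs
        exact ⟨⟨hT.xpos _ h1 j, hT.xle _ h1 j⟩, ⟨hT.ypos _ h1 j, hT.ygt _ h1 j, hT.yle _ h1 j⟩,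
          ⟨hT.xpos _ h2 j, hT.xle _ h2 j⟩, ⟨hT.ypos _ h2 j, hT.ygt _ h2 j, hT.yle _ h2 j⟩⟩
      · intro e he
        obtain ⟨s, hs, rfl⟩ := Finset.mem_image.1 he
        obtain ⟨h1, h2, h3, h4, h5⟩ := hmem s hs
        have r1 := hT.cxy h1 hij.symm
        have r2 := hT.cyy h1 hij.symm
        have r3 := hT.cxy h2 hij.symm
        have r4 := hT.cyy h2 hij.symm
        rw [hyz _ h1] at r1 r2
        rw [hyz _ h2] at r3 r4
        exact ⟨r1, r2, r3, r4⟩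
      · intro e he
        obtain ⟨s, hs, rfl⟩ := Finset.mem_image.1 he
        obtain ⟨h1, h2, h3, h4, h5⟩ := hmem s hs
        have hc : IsCoprime ((z:ℤ) ^ 3) (a j) := by
          have := hT.cay h1 j i
          rw [hyz _ h1] at this
          exact this.symm.pow_left
        apply hc.dvd_of_dvd_mul_left
        refine ⟨-(a i * (s.1.1 i - s.2.1 i)) * (s.1.1 i + s.2.1 i), ?_⟩
        linear_combination hdiff s hs
      · rw [← hU]
        gcongr
        have hz3 : (Y i / 2) ^ 3 ≤ (z:ℝ) ^ 3 := by gcongr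
        have h1 : X j ^ 2 * Y j ^ 2 / (z:ℝ) ^ 3 ≤ 8 * (X j ^ 2 * Y j ^ 2 / Y i ^ 3) := by
          calc _ ≤ X j ^ 2 * Y j ^ 2 / (Y i / 2) ^ 3 := by gcongr
            _ = _ := by field_simp; norm_num
        have h2 : 0 ≤ Real.sqrt (X j) ^ 3 * Y j := by positivity
        rw [hG]; linarith
    · intro b hb
      obtain ⟨s0, hs0, rfl⟩ := Finset.mem_image.1 hb
      set F := PP.filter (fun s => (s.1.1 j, s.1.2 j, s.2.1 j, s.2.2 j) = (s0.1.1 j, s0.1.2 j, s0.2.1 j, s0.2.2 j)) with hF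
      have hFm : ∀ s ∈ F, s ∈ PP ∧ s.1.1 j = s0.1.1 j ∧ s.1.2 j = s0.1.2 j ∧ s.2.1 j = s0.2.1 j ∧ s.2.2 j = s0.2.2 j := by
        intro s hs
        rw [hF, Finset.mem_filter] at hs
        simpa using hs
      set D : ℤ := a j * (s0.1.1 j ^ 2 * s0.1.2 j ^ 3 - s0.2.1 j ^ 2 * s0.2.2 j ^ 3) with hD
      have hFD : ∀ s ∈ F, D = -(a i * z ^ 3 * (s.1.1 i - s.2.1 i)) * (s.1.1 i + s.2.1 i) := by
        intro s hs
        obtain ⟨h1, h2, h3, h4, h5⟩ := hFm s hs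
        have := hdiff s h1
        rw [h2, h3, h4, h5] at this
        exact this
      have hiz : a i * (z:ℤ) ^ 3 ≠ 0 := mul_ne_zero (hT.a0 i) (by positivity)
      have hD0 : D ≠ 0 := by
        intro h0
        obtain ⟨h1, h2, h3, h4, h5⟩ := hmem s0 hs0
        have e1 := (mul_eq_zero.1 h0).resolve_left (hT.a0 j)
        obtain ⟨f1, f2⟩ := sq_cube_inj (hT.xpos _ h1 j) (hT.ypos _ h1 j) (hT.xpos _ h2 j) (hT.ypos _ h2 j)
          (hT.sqf _ h1 j) (hT.sqf _ h2 j) (sub_eq_zero.1 e1)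
        have e2 := hFD s0 (Finset.mem_filter.2 ⟨hs0, rfl⟩)
        rw [h0] at e2
        have hp : s0.1.1 i + s0.2.1 i ≠ 0 := by
          have := hT.xpos _ h1 i; have := hT.xpos _ h2 i; omega
        have e3 := neg_eq_zero.1 ((mul_eq_zero.1 e2.symm).resolve_right hp)
        have e4 := sub_eq_zero.1 ((mul_eq_zero.1 e3).resolve_left hiz)
        apply h5
        apply Prod.ext
        · exact fin3_ext i j k hij hik hjk e4 f1 h3
        · exact fin3_ext i j k hij hik hjk ((hyz _ h1).trans (hyz _ h2).symm) f2 h4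
      have hinj : Set.InjOn (fun s : ((Fin 3 → ℤ) × (Fin 3 → ℤ)) × ((Fin 3 → ℤ) × (Fin 3 → ℤ)) =>
          (s.1.1 i + s.2.1 i).natAbs) F := by
        intro s hs r hr hsr
        obtain ⟨g1, g2, g3, g4, g5⟩ := hFm s hs
        obtain ⟨g1', g2', g3', g4', g5'⟩ := hFm r hr
        obtain ⟨h1, h2, h3, h4, h5⟩ := hmem s g1
        obtain ⟨h1', h2', h3', h4', h5'⟩ := hmem r g1'
        have q1 := hT.xpos _ h1 i
        have q2 := hT.xpos _ h2 i
        have q3 := hT.xpos _ h1' i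
        have q4 := hT.xpos _ h2' i
        have hsum : s.1.1 i + s.2.1 i = r.1.1 i + r.2.1 i := by
          simp only at hsr
          omega
        have e1 := hFD s hs
        have e2 := hFD r hr
        rw [e1, hsum] at e2
        have e3 := mul_right_cancel₀ (by omega) e2
        have e4 := mul_left_cancel₀ hiz (neg_inj.1 e3)
        have x1 : s.1.1 i = r.1.1 i := by omega
        have x2 : s.2.1 i = r.2.1 i := by omega
        have w1 := hT.eq s.1 h1 i j k hij hik hjk
        have w2 := hT.eq r.1 h1' i j k hij hik hjk
        rw [hyz _ h1, x1, g2, g3] at w1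
        rw [hyz _ h1', g2', g3'] at w2
        have w3 : a k * (s.1.1 k ^ 2 * s.1.2 k ^ 3) = a k * (r.1.1 k ^ 2 * r.1.2 k ^ 3) := by
          linear_combination w1 - w2
        obtain ⟨f1, f2⟩ := sq_cube_inj (hT.xpos _ h1 k) (hT.ypos _ h1 k) (hT.xpos _ h1' k) (hT.ypos _ h1' k)
          (hT.sqf _ h1 k) (hT.sqf _ h1' k) (mul_left_cancel₀ (hT.a0 k) w3)
        apply Prod.ext
        · apply Prod.ext
          · exact fin3_ext i j k hij hik hjk x1 (g2.trans g2'.symm) f1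
          · exact fin3_ext i j k hij hik hjk ((hyz _ h1).trans (hyz _ h1').symm) (g3.trans g3'.symm) f2
        · apply Prod.ext
          · exact fin3_ext i j k hij hik hjk x2 (g4.trans g4'.symm) ((h3.symm.trans f1).trans h3')
          · exact fin3_ext i j k hij hik hjk ((hyz _ h2).trans (hyz _ h2').symm) (g5.trans g5'.symm)
              ((h4.symm.trans f2).trans h4')
      rw [← Finset.card_image_of_injOn hinj]
      have hDn : D.natAbs ≠ 0 := Int.natAbs_ne_zero.2 hD0
      have hsub : F.image (fun s : ((Fin 3 → ℤ) × (Fin 3 → ℤ)) × ((Fin 3 → ℤ) × (Fin 3 → ℤ)) =>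
          (s.1.1 i + s.2.1 i).natAbs) ⊆ D.natAbs.divisors := by
        intro n hn
        obtain ⟨s, hs, rfl⟩ := Finset.mem_image.1 hn
        rw [Nat.mem_divisors]
        exact ⟨Int.natAbs_dvd_natAbs.2 ⟨_, (hFD s hs).trans (mul_comm _ _)⟩, hDn⟩
      have hDb : ((D.natAbs : ℕ) : ℝ) ≤ 64 * B := by
        rw [Nat.cast_natAbs, Int.cast_abs, hD]
        obtain ⟨h1, h2, -⟩ := hmem s0 hs0
        have term : ∀ p ∈ T, 0 ≤ |(a j : ℝ)| * ((p.1 j : ℝ) ^ 2 * (p.2 j:ℝ) ^ 3) ∧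
            |(a j : ℝ)| * ((p.1 j : ℝ) ^ 2 * (p.2 j:ℝ) ^ 3) ≤ 32 * B := by
          intro p hp
          have n1 : (0:ℝ) < p.1 j := by exact_mod_cast hT.xpos p hp j
          have n2 : (0:ℝ) < p.2 j := by exact_mod_cast hT.ypos p hp j
          have l1 := hT.xle p hp j
          have l2 := hT.yle p hp j
          refine ⟨by positivity, le_trans ?_ (hT.hXY j)⟩
          gcongr
        push_cast
        rw [abs_mul]
        have t1 := term _ h1
        have t2 := term _ h2
        have n0 := abs_nonneg (a j : ℝ)
        calc _ ≤ |(a j : ℝ)| * (|(s0.1.1 j:ℝ) ^ 2 * (s0.1.2 j:ℝ) ^ 3| + |(s0.2.1 j:ℝ) ^ 2 * (s0.2.2 j:ℝ) ^ 3|) := by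
              gcongr
              exact abs_sub _ _
          _ = |(a j : ℝ)| * ((s0.1.1 j:ℝ) ^ 2 * (s0.1.2 j:ℝ) ^ 3) + |(a j : ℝ)| * ((s0.2.1 j:ℝ) ^ 2 * (s0.2.2 j:ℝ) ^ 3) := by
              have n1 : (0:ℝ) < s0.1.2 j := by exact_mod_cast hT.ypos _ h1 j
              have n2 : (0:ℝ) < s0.2.2 j := by exact_mod_cast hT.ypos _ h2 j
              have m1 : (0:ℝ) ≤ (s0.1.1 j:ℝ) ^ 2 * (s0.1.2 j:ℝ) ^ 3 := by positivity
              have m2 : (0:ℝ) ≤ (s0.2.1 j:ℝ) ^ 2 * (s0.2.2 j:ℝ) ^ 3 := by positivity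
              rw [abs_of_nonneg m1, abs_of_nonneg m2]
              ring
          _ ≤ _ := by linarith [t1.2, t2.2]
      calc _ ≤ ((D.natAbs.divisors).card : ℝ) := by exact_mod_cast Finset.card_le_card hsub
        _ ≤ C1 * ((D.natAbs : ℕ) : ℝ) ^ η := hdiv _ hDn
        _ ≤ C1 * (64 * B) ^ η := by gcongr
  have hquad : (T.card : ℝ) ^ 2 ≤ V * (T.card + (C2 * U * (8 * G)) * (C1 * U)) := by
    refine hcoll.trans ?_
    gcongr
  exact K_numerics _ V G U C1 C2 (Nat.cast_nonneg _) hV0.le hG0 hU1 hC1 hC2 hquad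

theorem K_bound (ε : ℝ) (hε : 0 < ε) : ∃ C : ℝ, 1 ≤ C ∧ ∀ (a : Fin 3 → ℤ) (X Y : Fin 3 → ℝ) (B : ℝ)
    (T : Finset ((Fin 3 → ℤ) × (Fin 3 → ℤ))), Good a X Y B T → ∀ i j k, i ≠ j → i ≠ k → j ≠ k →
    (T.card : ℝ) ≤ C * B ^ ε * (Y i * (X k * Y k +
      Real.sqrt (X k * Y k * (X j ^ 2 * Y j ^ 2 / Y i ^ 3 + Real.sqrt (X j) ^ 3 * Y j)))) := by
  obtain ⟨C1, hC1, hdiv⟩ := divisor_bound ε hε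
  obtain ⟨C2, hC2, hen⟩ := energy_bound ε hε
  refine ⟨4 * C1 * C2 * 64 ^ ε, ?_, ?_⟩
  · have h1 : (1:ℝ) ≤ 64 ^ ε := Real.one_le_rpow (by norm_num) hε.le
    exact one_le_mul_of_one_le_of_one_le (one_le_mul_of_one_le_of_one_le (by linarith) hC2) h1
  intro a X Y B T hT i j k hij hik hjk
  classical
  have hB := hT.hB
  have hX : ∀ l, 0 < X l := fun l => by linarith [hT.X1 l]
  have hY : ∀ l, 0 < Y l := fun l => by linarith [hT.Y1 l]
  have hXj := hX j
  have hXk := hX k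
  have hYi := hY i
  have hYj := hY j
  have hYk := hY k
  have hfib := card_le_fib T (fun p => p.2 i) (4 * C1 * C2 * (64 * B) ^ ε *
      (X k * Y k + Real.sqrt (X k * Y k * (X j ^ 2 * Y j ^ 2 / Y i ^ 3 + Real.sqrt (X j) ^ 3 * Y j)))) (Y i)
      (by positivity) ?_ ?_
  · refine hfib.trans (le_of_eq ?_)
    rw [Real.mul_rpow (by norm_num) (by linarith)]
    ring
  · apply card_pos_le _ _ hYi.le
    intro x hx
    obtain ⟨p, hp, rfl⟩ := Finset.mem_image.1 hx
    exact ⟨hT.ypos p hp i, hT.yle p hp i⟩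
  · intro b hb
    obtain ⟨p0, hp0, rfl⟩ := Finset.mem_image.1 hb
    exact K_fiber C1 C2 ε hε hC1 hC2 hdiv hen (hT.mono (Finset.filter_subset _ _)) i j k hij hik hjk p0
      (Finset.mem_filter.2 ⟨hp0, rfl⟩) (fun p hp => (Finset.mem_filter.1 hp).2)

theorem lp_core (m L D κ : ℝ) (x y : Fin 3 → ℝ) (hL : 0 ≤ L) (hκ : 0 ≤ κ)
    (hDL : D ≤ 3 / 55 * L)
    (hx : ∀ l, 0 ≤ x l) (hy : ∀ l, 0 ≤ y l) (hxy : ∀ l, 2 * x l + 3 * y l ≤ L + κ)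
    (hA : ∀ i j k : Fin 3, i ≠ j → i ≠ k → j ≠ k → m ≤ x j + x k + y i ∨
      m ≤ x j + x k + y i + 3 / 4 * (y j + y k - 3 * y i))
    (hC : ∀ i j k : Fin 3, i ≠ j → i ≠ k → j ≠ k → m ≤ y i + y j + y k ∨ m ≤ L / 2)
    (hK : ∀ i j k : Fin 3, i ≠ j → i ≠ k → j ≠ k → m ≤ y i + (x k + y k) ∨
      m ≤ y i + (x k + y k + (2 * x j + 2 * y j - 3 * y i)) / 2 ∨
      m ≤ y i + (x k + y k + (3 / 2 * x j + y j)) / 2)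
    (hV : ∃ k, x k ≤ L / 5 - 3 / 2 * D ∨ L / 5 + 3 / 2 * D ≤ x k ∨ y k ≤ L / 5 - D ∨ L / 5 + D ≤ y k) :
    m ≤ 3 / 5 * L - D + 10 * κ := by
  by_contra hcon
  push Not at hcon
  have hV' : ∃ k, x k ≤ L / 5 - 3 / 2 * D + κ / 2 ∨ y k ≤ L / 5 - D + κ / 3 := by
    obtain ⟨k, h | h | h | h⟩ := hV
    · exact ⟨k, Or.inl (by linarith)⟩
    · exact ⟨k, Or.inr (by linarith [hxy k])⟩
    · exact ⟨k, Or.inr (by linarith)⟩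
    · exact ⟨k, Or.inl (by linarith [hxy k])⟩
  by_cases hs : ∃ k, y k ≤ L / 5 - D + κ / 3
  · obtain ⟨k0, hk0⟩ := hs
    obtain ⟨i, j, k, hij, hik, hjk, h1, h2, h3⟩ : ∃ i j k : Fin 3, i ≠ j ∧ i ≠ k ∧ j ≠ k ∧ y i ≤ y k ∧ y k ≤ y j ∧
        y i ≤ L / 5 - D + κ / 3 := by
      have q : ∀ i j k : Fin 3, i ≠ j ∧ i ≠ k ∧ j ≠ k → y i ≤ y k → y k ≤ y j → (k0 = i ∨ k0 = j ∨ k0 = k) →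
          ∃ i j k : Fin 3, i ≠ j ∧ i ≠ k ∧ j ≠ k ∧ y i ≤ y k ∧ y k ≤ y j ∧ y i ≤ L / 5 - D + κ / 3 := by
        intro i j k h h1 h2 h3
        refine ⟨i, j, k, h.1, h.2.1, h.2.2, h1, h2, ?_⟩
        rcases h3 with rfl | rfl | rfl <;> linarith
      have hk : ∀ i j k : Fin 3, i ≠ j ∧ i ≠ k ∧ j ≠ k → (k0 = i ∨ k0 = j ∨ k0 = k) := by
        clear * -
        revert k0; decide
      have q' := fun i j k h h1 h2 => q i j k h h1 h2 (hk i j k h)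
      rcases le_total (y 0) (y 1) with a | a <;> rcases le_total (y 1) (y 2) with b | b <;>
        rcases le_total (y 0) (y 2) with c | c
      · exact q' 0 2 1 (by decide) a b
      · exact q' 0 2 1 (by decide) a b
      · exact q' 0 1 2 (by decide) c b
      · exact q' 2 1 0 (by decide) c a
      · exact q' 1 2 0 (by decide) a c
      · exact q' 1 0 2 (by decide) b c
      · exact q' 2 0 1 (by decide) b a
      · exact q' 2 0 1 (by decide) b a
    have e0 := hy i
    have e1 := hxy i
    have e2 := hxy j
    have e3 := hxy k
    have hc : m ≤ y i + y j + y k := by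
      rcases hC i j k hij hik hjk with h | h
      · exact h
      · linarith
    rcases hA i j k hij hik hjk with h | h
    · linarith
    rcases hK i j k hij hik hjk with g | g | g
    · linarith
    · linarith
    · linarith
  · push Not at hs
    obtain ⟨k, hk⟩ := hV'
    have hk1 : x k ≤ L / 5 - 3 / 2 * D + κ / 2 := by
      rcases hk with h | h
      · exact h
      · exact absurd h (not_le.2 (hs k))
    obtain ⟨i, j, hij, hik, hjk, h1⟩ : ∃ i j : Fin 3, i ≠ j ∧ i ≠ k ∧ j ≠ k ∧ y i ≤ y j := by
      have : ∃ i j : Fin 3, i ≠ j ∧ i ≠ k ∧ j ≠ k := by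
        clear * -
        revert k; decide
      obtain ⟨i, j, h1, h2, h3⟩ := this
      rcases le_total (y i) (y j) with h | h
      · exact ⟨i, j, h1, h2, h3, h⟩
      · exact ⟨j, i, h1.symm, h3, h2, h⟩
    have e1 := hxy i
    have e2 := hxy j
    have e3 := hxy k
    have f1 := hs i
    have f2 := hs j
    have f3 := hs k
    rcases hA i j k hij hik hjk with h | h
    · linarith
    · have hxk := hx k
      linarith

theorem lp_full (m L D κ : ℝ) (x y : Fin 3 → ℝ) (hL : 0 ≤ L) (hκ : 0 ≤ κ)
    (hx : ∀ l, 0 ≤ x l) (hy : ∀ l, 0 ≤ y l) (hxy : ∀ l, 2 * x l + 3 * y l ≤ L + κ)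
    (hA : ∀ i j k : Fin 3, i ≠ j → i ≠ k → j ≠ k → m ≤ x j + x k + y i ∨
      m ≤ x j + x k + y i + 3 / 4 * (y j + y k - 3 * y i))
    (hC : ∀ i j k : Fin 3, i ≠ j → i ≠ k → j ≠ k → m ≤ y i + y j + y k ∨ m ≤ L / 2)
    (hK : ∀ i j k : Fin 3, i ≠ j → i ≠ k → j ≠ k → m ≤ y i + (x k + y k) ∨
      m ≤ y i + (x k + y k + (2 * x j + 2 * y j - 3 * y i)) / 2 ∨
      m ≤ y i + (x k + y k + (3 / 2 * x j + y j)) / 2)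
    (hV : ∃ k, x k ≤ L / 5 - 3 / 2 * D ∨ L / 5 + 3 / 2 * D ≤ x k ∨ y k ≤ L / 5 - D ∨ L / 5 + D ≤ y k) :
    m ≤ 6 / 11 * L + 10 * κ ∨ m ≤ 3 / 5 * L - D + 10 * κ := by
  rcases le_total D (3 / 55 * L) with h | h
  · exact Or.inr (lp_core m L D κ x y hL hκ h hx hy hxy hA hC hK hV)
  · left
    have := lp_core m L (3 / 55 * L) κ x y hL hκ le_rfl hx hy hxy hA hC hK ?_
    · linarith
    · obtain ⟨k, g | g | g | g⟩ := hV
      · exact ⟨k, Or.inl (by linarith)⟩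
      · exact ⟨k, Or.inr (Or.inl (by linarith))⟩
      · exact ⟨k, Or.inr (Or.inr (Or.inl (by linarith)))⟩
      · exact ⟨k, Or.inr (Or.inr (Or.inr (by linarith)))⟩

theorem half_or {N K u v : ℝ} (hK : 0 < K) (h : N ≤ K * (u + v)) : N / K / 2 ≤ u ∨ N / K / 2 ≤ v := by
  have h1 : N / K ≤ u + v := by rw [div_le_iff₀ hK]; linarith
  by_contra hc
  push Not at hc
  linarith [hc.1, hc.2]

theorem log_A (M Xj Xk Yi Yj Yk : ℝ) (hM : 0 < M) (hXj : 0 < Xj) (hXk : 0 < Xk) (hYi : 0 < Yi)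
    (hYj : 0 < Yj) (hYk : 0 < Yk)
    (h : M ≤ Xj * Xk * Yi ∨ M ≤ Xj * Xk * Yi * (Yj * Yk / Yi ^ 3) ^ ((3:ℝ) / 4)) :
    Real.log M ≤ Real.log Xj + Real.log Xk + Real.log Yi ∨
    Real.log M ≤ Real.log Xj + Real.log Xk + Real.log Yi + 3 / 4 * (Real.log Yj + Real.log Yk - 3 * Real.log Yi) := by
  have e : Real.log (Xj * Xk * Yi) = Real.log Xj + Real.log Xk + Real.log Yi := by
    rw [Real.log_mul (by positivity) (by positivity), Real.log_mul (by positivity) (by positivity)]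
  rcases h with h | h
  · left; rw [← e]; exact Real.log_le_log hM h
  · right
    refine (Real.log_le_log hM h).trans (le_of_eq ?_)
    rw [Real.log_mul (by positivity) (by positivity), e, Real.log_rpow (by positivity),
      Real.log_div (by positivity) (by positivity), Real.log_mul (by positivity) (by positivity), Real.log_pow]
    push_cast; ring

theorem log_K (M Xj Xk Yi Yj Yk : ℝ) (hM : 0 < M) (hXj : 0 < Xj) (hXk : 0 < Xk) (hYi : 0 < Yi)
    (hYj : 0 < Yj) (hYk : 0 < Yk)
    (h : 2 * M ≤ Yi * (Xk * Yk) ∨ 2 * M ≤ Yi * Real.sqrt (Xk * Yk * (Xj ^ 2 * Yj ^ 2 / Yi ^ 3 + Real.sqrt Xj ^ 3 * Yj))) :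
    Real.log M ≤ Real.log Yi + (Real.log Xk + Real.log Yk) ∨
      Real.log M ≤ Real.log Yi + (Real.log Xk + Real.log Yk + (2 * Real.log Xj + 2 * Real.log Yj - 3 * Real.log Yi)) / 2 ∨
      Real.log M ≤ Real.log Yi + (Real.log Xk + Real.log Yk + (3 / 2 * Real.log Xj + Real.log Yj)) / 2 := by
  rcases h with h | h
  · left
    refine (Real.log_le_log hM (by linarith : M ≤ Yi * (Xk * Yk))).trans (le_of_eq ?_)
    rw [Real.log_mul (by positivity) (by positivity), Real.log_mul (by positivity) (by positivity)]
  · right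
    have hP : 0 < Xj ^ 2 * Yj ^ 2 / Yi ^ 3 := by positivity
    have hQ : 0 < Real.sqrt Xj ^ 3 * Yj := by positivity
    have key : ∀ Z, 0 < Z → Xj ^ 2 * Yj ^ 2 / Yi ^ 3 + Real.sqrt Xj ^ 3 * Yj ≤ 4 * Z →
        Real.log M ≤ Real.log Yi + (Real.log Xk + Real.log Yk + Real.log Z) / 2 := by
      intro Z hZ hle
      have h2 : M ≤ Yi * Real.sqrt (Xk * Yk * Z) := by
        have h3 : Real.sqrt (Xk * Yk * (Xj ^ 2 * Yj ^ 2 / Yi ^ 3 + Real.sqrt Xj ^ 3 * Yj)) ≤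
            2 * Real.sqrt (Xk * Yk * Z) := by
          rw [Real.sqrt_le_left (by positivity), mul_pow, Real.sq_sqrt (by positivity)]
          have : 0 < Xk * Yk := by positivity
          nlinarith
        nlinarith
      refine (Real.log_le_log hM h2).trans (le_of_eq ?_)
      rw [Real.log_mul (by positivity) (by positivity), Real.log_sqrt (by positivity),
        Real.log_mul (by positivity) (by positivity), Real.log_mul (by positivity) (by positivity)]
    rcases le_total (Xj ^ 2 * Yj ^ 2 / Yi ^ 3) (Real.sqrt Xj ^ 3 * Yj) with hle | hle
    · right
      refine (key _ hQ (by linarith)).trans (le_of_eq ?_)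
      rw [Real.log_mul (by positivity) (by positivity), Real.log_pow, Real.log_sqrt (by positivity)]
      push_cast; ring
    · left
      refine (key _ hP (by linarith)).trans (le_of_eq ?_)
      rw [Real.log_div (by positivity) (by positivity), Real.log_mul (by positivity) (by positivity),
        Real.log_pow, Real.log_pow, Real.log_pow]
      push_cast; ring

theorem log_C (M B Yi Yj Yk : ℝ) (hM : 0 < M) (hB : 0 < B) (hYi : 0 < Yi)
    (hYj : 0 < Yj) (hYk : 0 < Yk) (h : M ≤ Yi * Yj * Yk ∨ M ≤ B ^ ((1:ℝ) / 2)) :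
    Real.log M ≤ Real.log Yi + Real.log Yj + Real.log Yk ∨ Real.log M ≤ Real.log B / 2 := by
  rcases h with h | h
  · left
    refine (Real.log_le_log hM h).trans (le_of_eq ?_)
    rw [Real.log_mul (by positivity) (by positivity), Real.log_mul (by positivity) (by positivity)]
  · right
    refine (Real.log_le_log hM h).trans (le_of_eq ?_)
    rw [Real.log_rpow hB]; ring

theorem good_bound (δ ε : ℝ) (hε : 0 < ε) : ∃ C : ℝ, 0 < C ∧ ∀ (a : Fin 3 → ℤ) (X Y : Fin 3 → ℝ)
    (B : ℝ) (T : Finset ((Fin 3 → ℤ) × (Fin 3 → ℤ))), Good a X Y B T →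
    ¬ (∀ k : Fin 3,
          B ^ ((1 : ℝ) / 5 - 3 * δ / 2) ≤ X k ∧ X k ≤ B ^ ((1 : ℝ) / 5 + 3 * δ / 2) ∧
          B ^ ((1 : ℝ) / 5 - δ) ≤ Y k ∧ Y k ≤ B ^ ((1 : ℝ) / 5 + δ)) →
        (T.card : ℝ) ≤ C * (B ^ ((6 : ℝ) / 11 + ε) + B ^ ((3 : ℝ) / 5 - δ + ε)) := by
  obtain ⟨C1, hC1, hA⟩ := A_bound ε hε
  obtain ⟨C2, hC2, hC⟩ := conic_bound ε hε
  obtain ⟨C3, hC3, hK⟩ := K_bound ε hε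
  obtain ⟨C, hCd⟩ : ∃ C, C = C1 + C2 + C3 := ⟨_, rfl⟩
  refine ⟨4 * C * 32 ^ 10, by subst hCd; positivity, ?_⟩
  intro a X Y B T hT hV
  have hB := hT.hB
  have hB0 : 0 < B := by linarith
  have hX : ∀ l, 0 < X l := fun l => by linarith [hT.X1 l]
  have hY : ∀ l, 0 < Y l := fun l => by linarith [hT.Y1 l]
  have hC0 : 0 < C := by linarith
  by_cases hN : T.card = 0
  · rw [hN, Nat.cast_zero]; positivity
  have hN0 : (0:ℝ) < T.card := by exact_mod_cast Nat.pos_of_ne_zero hN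
  obtain ⟨K, hKd⟩ : ∃ K, K = C * B ^ ε := ⟨_, rfl⟩
  have hK0 : 0 < K := by rw [hKd]; positivity
  obtain ⟨N, hNd⟩ : ∃ N : ℝ, N = T.card := ⟨_, rfl⟩
  rw [← hNd] at hN0 ⊢
  have hBe : 0 < B ^ ε := by positivity
  have up : ∀ c Z : ℝ, c ≤ C → 0 ≤ Z → N ≤ c * B ^ ε * Z → N ≤ K * Z := by
    intro c Z h1 h2 h3
    refine h3.trans ?_
    rw [hKd]; gcongr
  obtain ⟨M, hMd⟩ : ∃ M, M = N / K / 4 := ⟨_, rfl⟩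
  have hM : 0 < M := by rw [hMd]; positivity
  have h2M : N / K / 2 = 2 * M := by rw [hMd]; ring
  have hL : 0 ≤ Real.log B := Real.log_nonneg (by linarith)
  have hfin := lp_full (Real.log M) (Real.log B) (δ * Real.log B) (Real.log 32)
    (fun l => Real.log (X l)) (fun l => Real.log (Y l)) hL (Real.log_nonneg (by norm_num))
    (fun l => Real.log_nonneg (hT.X1 l)) (fun l => Real.log_nonneg (hT.Y1 l)) ?_ ?_ ?_ ?_ ?_
  · have hNM : N = 4 * K * M := by rw [hMd]; field_simp
    have hp : ∀ t, Real.log M ≤ t * Real.log B + 10 * Real.log 32 → N ≤ 4 * C * 32 ^ 10 * B ^ (t + ε) := by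
      intro t ht
      have h1 : Real.log M ≤ Real.log (B ^ t * 32 ^ 10) := by
        rw [Real.log_mul (by positivity) (by positivity), Real.log_rpow hB0, Real.log_pow]
        push_cast; exact ht
      have h2 := (Real.log_le_log_iff hM (by positivity)).1 h1
      rw [hNM, hKd, Real.rpow_add hB0]
      calc 4 * (C * B ^ ε) * M ≤ 4 * (C * B ^ ε) * (B ^ t * 32 ^ 10) := by gcongr
        _ = _ := by ring
    have g1 : 0 ≤ 4 * C * 32 ^ 10 * B ^ ((6:ℝ) / 11 + ε) := by positivity
    have g2 : 0 ≤ 4 * C * 32 ^ 10 * B ^ ((3:ℝ) / 5 - δ + ε) := by positivity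
    rw [mul_add]
    rcases hfin with h | h
    · have := hp _ h
      linarith
    · have := hp (3 / 5 - δ) (by linarith)
      linarith
  · intro l
    have h1 := Real.log_le_log (by have := hX l; have := hY l; positivity) (hT.XY l)
    have h3 := hX l
    have h4 := hY l
    rw [Real.log_mul (by positivity) (by positivity), Real.log_mul (by positivity) (by positivity),
      Real.log_pow, Real.log_pow] at h1
    push_cast at h1
    linarith
  · intro i j k hij hik hjk
    have hXj := hX j
    have hXk := hX k
    have hYi := hY i
    have hYj := hY j
    have hYk := hY k
    have h1 := hA a X Y B T hT i j k hij hik hjk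
    rw [← hNd] at h1
    have h2 := up _ _ (by linarith) (by positivity) h1
    rw [mul_add, mul_one] at h2
    have h3 := half_or hK0 h2
    rw [h2M] at h3
    apply log_A M (X j) (X k) (Y i) (Y j) (Y k) hM hXj hXk hYi hYj hYk
    rcases h3 with h | h
    · left; linarith
    · right; linarith
  · intro i j k hij hik hjk
    have hYi := hY i
    have hYj := hY j
    have hYk := hY k
    have h1 := hC a X Y B T hT i j k hij hik hjk
    rw [← hNd] at h1
    have h2 := up _ _ (by linarith) (by positivity) h1
    have h3 := half_or hK0 h2
    rw [h2M] at h3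
    apply log_C M B (Y i) (Y j) (Y k) hM hB0 hYi hYj hYk
    rcases h3 with h | h
    · left; linarith
    · right; linarith
  · intro i j k hij hik hjk
    have hXj := hX j
    have hXk := hX k
    have hYi := hY i
    have hYj := hY j
    have hYk := hY k
    have h1 := hK a X Y B T hT i j k hij hik hjk
    rw [← hNd] at h1
    have h2 := up _ _ (by linarith) (by positivity) h1
    rw [mul_add] at h2
    have h3 := half_or hK0 h2
    rw [h2M] at h3
    exact log_K M (X j) (X k) (Y i) (Y j) (Y k) hM hXj hXk hYi hYj hYk h3
  · by_contra hcon
    push Not at hcon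
    apply hV
    intro k
    obtain ⟨h1, h2, h3, h4⟩ := hcon k
    have e : ∀ t Z : ℝ, 0 < Z → t * Real.log B ≤ Real.log Z → B ^ t ≤ Z := by
      intro t Z hZ h
      rw [← Real.log_le_log_iff (by positivity) hZ, Real.log_rpow hB0]; exact h
    have e' : ∀ t Z : ℝ, 0 < Z → Real.log Z ≤ t * Real.log B → Z ≤ B ^ t := by
      intro t Z hZ h
      rw [← Real.log_le_log_iff hZ (by positivity), Real.log_rpow hB0]; exact h
    exact ⟨e _ _ (hX k) (by linarith), e' _ _ (hX k) (by linarith), e _ _ (hY k) (by linarith),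
      e' _ _ (hY k) (by linarith)⟩

theorem S0_finite (a : Fin 3 → ℤ) (X Y : Fin 3 → ℝ) : (S0 a X Y).Finite := by
  apply Set.Finite.subset ((Set.finite_Icc (0 : Fin 3 → ℤ) (fun i => ⌊X i⌋)).prod
    (Set.finite_Icc (0 : Fin 3 → ℤ) (fun i => ⌊Y i⌋)))
  rintro p ⟨h1, h2, h3, h4, -⟩
  exact ⟨⟨fun i => (h1 i).le, fun i => Int.le_floor.2 (h3 i).2⟩,
    ⟨fun i => (h2 i).le, fun i => Int.le_floor.2 (h4 i).2⟩⟩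

theorem S0_good (a : Fin 3 → ℤ) (X Y : Fin 3 → ℝ) (B : ℝ) (hB : 2 ≤ B) (ha : ∀ i, a i ≠ 0)
    (hX : ∀ i, 1 ≤ X i) (hY : ∀ i, 1 ≤ Y i)
    (hXY : ∀ i, X i ^ 2 * Y i ^ 3 ≤ 32 * B / |(a i : ℝ)|) (hfin : (S0 a X Y).Finite) :
    Good a X Y B hfin.toFinset := by
  have heq : ∀ p ∈ S0 a X Y, ∀ i j k : Fin 3, i ≠ j → i ≠ k → j ≠ k →
      a i * p.1 i ^ 2 * p.2 i ^ 3 + a j * p.1 j ^ 2 * p.2 j ^ 3 + a k * p.1 k ^ 2 * p.2 k ^ 3 = 0 := by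
    rintro p ⟨-, -, -, -, h5, -⟩ i j k hij hik hjk
    fin_cases i <;> fin_cases j <;> fin_cases k <;> simp_all <;> linarith
  have hcopa : ∀ p ∈ S0 a X Y, ∀ i j : Fin 3, IsCoprime (a i) (p.1 j * p.2 j) := by
    rintro p ⟨-, -, -, -, -, -, h7, -⟩ i j
    have h := Int.isCoprime_iff_gcd_eq_one.2 h7
    have d1 : a i ∣ a 0 * a 1 * a 2 := by
      fin_cases i
      · exact ⟨a 1 * a 2, by simp; ring⟩
      · exact ⟨a 0 * a 2, by simp; ring⟩
      · exact ⟨a 0 * a 1, by simp; ring⟩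
    have d2 : p.1 j * p.2 j ∣ p.1 0 * p.1 1 * p.1 2 * p.2 0 * p.2 1 * p.2 2 := by
      fin_cases j
      · exact ⟨p.1 1 * p.1 2 * p.2 1 * p.2 2, by simp; ring⟩
      · exact ⟨p.1 0 * p.1 2 * p.2 0 * p.2 2, by simp; ring⟩
      · exact ⟨p.1 0 * p.1 1 * p.2 0 * p.2 1, by simp; ring⟩
    exact (h.of_isCoprime_of_dvd_left d1).of_isCoprime_of_dvd_right d2
  have hcop : ∀ p ∈ S0 a X Y, ∀ i j : Fin 3, i ≠ j → IsCoprime (p.1 i * p.2 i) (p.1 j * p.2 j) := by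
    intro p hp i j hij
    obtain ⟨k, hik, hjk⟩ : ∃ k : Fin 3, i ≠ k ∧ j ≠ k := by
      clear * - i j
      revert i j; decide
    have e := heq p hp i j k hij hik hjk
    have hgcd := hp.2.2.2.2.2.1
    have hx := hp.1
    have hy := hp.2.1
    apply isCoprime_of_prime_dvd
    · rintro ⟨h0, -⟩
      exact absurd h0 (mul_pos (hx i) (hy i)).ne'
    intro q hq h1 h2
    have t1 : q ∣ a i * p.1 i ^ 2 * p.2 i ^ 3 := h1.trans ⟨a i * p.1 i * p.2 i ^ 2, by ring⟩
    have t2 : q ∣ a j * p.1 j ^ 2 * p.2 j ^ 3 := h2.trans ⟨a j * p.1 j * p.2 j ^ 2, by ring⟩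
    have t3 : q ∣ a k * (p.1 k ^ 2 * p.2 k ^ 3) := by
      have : a k * (p.1 k ^ 2 * p.2 k ^ 3) = -(a i * p.1 i ^ 2 * p.2 i ^ 3 + a j * p.1 j ^ 2 * p.2 j ^ 3) := by
        linear_combination e
      rw [this]
      exact (dvd_add t1 t2).neg_right
    have t4 : q ∣ p.1 k * p.2 k := by
      rcases hq.dvd_or_dvd t3 with h | h
      · exact absurd ((hcopa p hp k i).isUnit_of_dvd' h h1) hq.not_isUnit
      · rcases hq.dvd_or_dvd h with g | g
        · exact (hq.dvd_of_dvd_pow g).mul_right _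
        · exact (hq.dvd_of_dvd_pow g).mul_left _
    have hall : ∀ l : Fin 3, q ∣ p.1 l * p.2 l := by
      intro l
      have : l = i ∨ l = j ∨ l = k := by
        clear * - hij hik hjk
        revert hij hik hjk; revert i j k l; decide
      rcases this with rfl | rfl | rfl <;> assumption
    have hd := Int.dvd_coe_gcd (hall 0) (Int.dvd_coe_gcd (hall 1) (hall 2))
    rw [hgcd] at hd
    exact hq.not_isUnit (isUnit_of_dvd_one (by exact_mod_cast hd))
  refine ⟨hB, ha, hX, hY, ?_, ?_, ?_, ?_, ?_, ?_, ?_, ?_, ?_, ?_, ?_⟩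
  · intro i
    have h0 : 0 < |(a i : ℝ)| := abs_pos.2 (by exact_mod_cast ha i)
    have := (le_div_iff₀ h0).1 (hXY i)
    linarith
  all_goals
    intro p hp
    have hp := (Set.Finite.mem_toFinset _).1 hp
  · exact hp.1
  · exact hp.2.1
  · exact fun i => (hp.2.2.1 i).2
  · exact fun i => (hp.2.2.2.1 i).2
  · exact fun i => (hp.2.2.1 i).1
  · exact fun i => (hp.2.2.2.1 i).1
  · exact heq p hp
  · exact hcop p hp
  · exact hcopa p hp
  · exact fun i => (hp.2.2.2.2.2.2.2 i).of_mul_right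

/-- Let `δ, ε > 0` be fixed. There is a constant `C(δ, ε)` such that if it is not the case
that `B^{1/5 - 3δ/2} ≤ X_k ≤ B^{1/5 + 3δ/2}` and `B^{1/5 - δ} ≤ Y_k ≤ B^{1/5 + δ}` for all
`k = 1, 2, 3`, then `N₀(B) ≤ C(δ, ε)(B^{6/11 + ε} + B^{3/5 - δ + ε})`. -/
theorem N0_critical_case (δ ε : ℝ) (hδ : 0 < δ) (hε : 0 < ε) :
    ∃ C : ℝ, 0 < C ∧ ∀ (a : Fin 3 → ℤ) (X Y : Fin 3 → ℝ) (B : ℝ),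
      2 ≤ B → (∀ i, a i ≠ 0) → (∀ i, Squarefree (a i)) →
      (∀ i j, i ≠ j → IsCoprime (a i) (a j)) →
      (∀ i, 1 ≤ X i) → (∀ i, 1 ≤ Y i) →
      (∀ i, X i ^ 2 * Y i ^ 3 ≤ 32 * B / |(a i : ℝ)|) →
      ¬ (∀ k : Fin 3,
          B ^ ((1 : ℝ) / 5 - 3 * δ / 2) ≤ X k ∧ X k ≤ B ^ ((1 : ℝ) / 5 + 3 * δ / 2) ∧
          B ^ ((1 : ℝ) / 5 - δ) ≤ Y k ∧ Y k ≤ B ^ ((1 : ℝ) / 5 + δ)) →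
        ((S0 a X Y).ncard : ℝ) ≤
          C * (B ^ ((6 : ℝ) / 11 + ε) + B ^ ((3 : ℝ) / 5 - δ + ε)) := by
  obtain ⟨C, hC, h⟩ := good_bound δ ε hε
  refine ⟨C, hC, ?_⟩
  intro a X Y B hB ha hsq hco hX hY hXY hV
  have hfin := S0_finite a X Y
  rw [Set.ncard_eq_toFinset_card _ hfin]
  exact h a X Y B _ (S0_good a X Y B hB ha hX hY hXY hfin) hV
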